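/- arXiv:2405.00729 — 3 statements merged into one kernel-verified Lean document; each statement's English description precedes it below -/
import Mathlib

section
/- Let (A, {Δ(λ)}) be a split quasi-hereditary algebra over a commutative Noetherian ring R. If M ∈ F(Δ̃) and N ∈ F(∇̃), then DN ⊗_A M is a finitely generated projective R-module and Tor^A_i(DN, M) = 0 for all i > 0. In particular, Hom_A(M, N) is a finitely generated projective R-module. -/
open scoped TensorProduct
open CategoryTheory

noncomputable section

section Core

variable (R : Type) [CommRing R] (A : Type) [Ring A] [Algebra R A]

/-- The action of `a : A` on an `A`-module as an `R`-linear endomorphism. -/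
def actL (M : Type) [AddCommGroup M] [Module R M] [Module A M] [IsScalarTower R A M]
    (a : A) : M →ₗ[R] M where
  toFun m := a • m
  map_add' := smul_add a
  map_smul' r m := (smul_comm r a m).symm

/-- The right `A`-module (i.e. `Aᵐᵒᵖ`-module) structure on the `R`-linear dual of a left
`A`-module `M`, given by `(aᵒᵖ • f) m = f (a • m)`. -/
instance dualModule (M : Type) [AddCommGroup M] [Module R M] [Module A M]
    [IsScalarTower R A M] : Module Aᵐᵒᵖ (M →ₗ[R] R) where
  smul a f := f.comp (actL R A M a.unop)
  one_smul f := by ext m; show f ((1 : Aᵐᵒᵖ).unop • m) = f m; simp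
  mul_smul a b f := by
    ext m
    show f ((a * b).unop • m) = f (b.unop • a.unop • m)
    simp [mul_smul]
  smul_zero a := rfl
  smul_add a f g := rfl
  add_smul a b f := by
    ext m
    show f ((a + b).unop • m) = f (a.unop • m) + f (b.unop • m)
    simp [add_smul]
  zero_smul f := by ext m; show f ((0 : Aᵐᵒᵖ).unop • m) = 0; simp

@[simp] lemma dualModule_smul_apply (M : Type) [AddCommGroup M] [Module R M] [Module A M]
    [IsScalarTower R A M] (a : Aᵐᵒᵖ) (f : M →ₗ[R] R) (m : M) :
    (a • f) m = f (a.unop • m) := rfl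

instance dualTower (M : Type) [AddCommGroup M] [Module R M] [Module A M]
    [IsScalarTower R A M] : IsScalarTower R Aᵐᵒᵖ (M →ₗ[R] R) := by
  constructor
  intro r a f
  ext m
  show f ((r • a).unop • m) = r • f (a.unop • m)
  rw [MulOpposite.unop_smul, smul_assoc, map_smul]

/-- The left `A`-module structure on the `R`-linear dual of a right `A`-module
(i.e. an `Aᵐᵒᵖ`-module) `M`, given by `(a • f) m = f (aᵒᵖ • m)`. -/
instance dualModule' (M : Type) [AddCommGroup M] [Module R M] [Module Aᵐᵒᵖ M]
    [IsScalarTower R Aᵐᵒᵖ M] : Module A (M →ₗ[R] R) where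
  smul a f := f.comp (actL R Aᵐᵒᵖ M (MulOpposite.op a))
  one_smul f := by ext m; show f (MulOpposite.op (1 : A) • m) = f m; simp
  mul_smul a b f := by
    ext m
    show f (MulOpposite.op (a * b) • m) = f (MulOpposite.op b • MulOpposite.op a • m)
    rw [MulOpposite.op_mul, mul_smul]
  smul_zero a := rfl
  smul_add a f g := rfl
  add_smul a b f := by
    ext m
    show f (MulOpposite.op (a + b) • m) = f (MulOpposite.op a • m) + f (MulOpposite.op b • m)
    rw [MulOpposite.op_add, add_smul, map_add]
  zero_smul f := by ext m; show f (MulOpposite.op (0 : A) • m) = 0; simp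

@[simp] lemma dualModule'_smul_apply (M : Type) [AddCommGroup M] [Module R M] [Module Aᵐᵒᵖ M]
    [IsScalarTower R Aᵐᵒᵖ M] (a : A) (f : M →ₗ[R] R) (m : M) :
    (a • f) m = f (MulOpposite.op a • m) := rfl

instance dualTower' (M : Type) [AddCommGroup M] [Module R M] [Module Aᵐᵒᵖ M]
    [IsScalarTower R Aᵐᵒᵖ M] : IsScalarTower R A (M →ₗ[R] R) := by
  constructor
  intro r a f
  ext m
  show f (MulOpposite.op (r • a) • m) = r • f (MulOpposite.op a • m)
  rw [MulOpposite.op_smul, smul_assoc, map_smul]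

variable (Λ : Type) [Fintype Λ] [PartialOrder Λ]

/-- Data witnessing that `X` is isomorphic to `Δ(λ) ⊗_R U` for some `λ ∈ S` and some finitely
generated projective `R`-module `U`. -/
structure TensorFactor (Δ : Λ → Type) [∀ l, AddCommGroup (Δ l)] [∀ l, Module R (Δ l)]
    [∀ l, Module A (Δ l)] [∀ l, IsScalarTower R A (Δ l)]
    (S : Set Λ) (X : Type) [AddCommGroup X] [Module A X] : Type 1 where
  lam : Λ
  mem : lam ∈ S
  U : ModuleCat.{0} R
  fin : Module.Finite R U
  proj : Module.Projective R U
  iso : X ≃ₗ[A] (TensorProduct R (Δ lam) U)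

/-- `M` belongs to `F(Δ̃_S)`: it is a finitely generated `A`-module with a finite filtration
whose factors are of the form `Δ(λ) ⊗_R U`, `λ ∈ S`, `U` a finitely generated projective
`R`-module. -/
def InFilt (Δ : Λ → Type) [∀ l, AddCommGroup (Δ l)] [∀ l, Module R (Δ l)]
    [∀ l, Module A (Δ l)] [∀ l, IsScalarTower R A (Δ l)]
    (S : Set Λ) (M : Type) [AddCommGroup M] [Module A M] : Prop :=
  Module.Finite A M ∧
  ∃ (n : ℕ) (c : Fin (n + 1) → Submodule A M), c 0 = ⊥ ∧ c (Fin.last n) = ⊤ ∧ Monotone c ∧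
    ∀ i : Fin n, Nonempty (TensorFactor R A Λ Δ S
      (↥(c i.succ) ⧸ (Submodule.comap (c i.succ).subtype (c i.castSucc))))

/-- Data witnessing that `X` is isomorphic to `F(λ)` for some `λ ∈ S`. -/
structure PlainFactor (F : Λ → Type) [∀ l, AddCommGroup (F l)] [∀ l, Module A (F l)]
    (S : Set Λ) (X : Type) [AddCommGroup X] [Module A X] : Type 1 where
  lam : Λ
  mem : lam ∈ S
  iso : X ≃ₗ[A] F lam

/-- `M` has a finite filtration with factors among the modules `F(λ)`, `λ ∈ S`. -/
def InFiltPlain (F : Λ → Type) [∀ l, AddCommGroup (F l)] [∀ l, Module A (F l)]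
    (S : Set Λ) (M : Type) [AddCommGroup M] [Module A M] : Prop :=
  Module.Finite A M ∧
  ∃ (n : ℕ) (c : Fin (n + 1) → Submodule A M), c 0 = ⊥ ∧ c (Fin.last n) = ⊤ ∧ Monotone c ∧
    ∀ i : Fin n, Nonempty (PlainFactor A Λ F S
      (↥(c i.succ) ⧸ (Submodule.comap (c i.succ).subtype (c i.castSucc))))

/-- `X` is a direct summand of `Y` (as `A`-modules). -/
def IsDirectSummand (X Y : Type) [AddCommGroup X] [Module A X] [AddCommGroup Y]
    [Module A Y] : Prop :=
  ∃ (i : X →ₗ[A] Y) (p : Y →ₗ[A] X), p.comp i = LinearMap.id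

/-- `X` belongs to the additive closure `add T`. -/
def InAdd (T : Type) [AddCommGroup T] [Module A T] (X : Type) [AddCommGroup X]
    [Module A X] : Prop :=
  ∃ n : ℕ, IsDirectSummand A X (Fin n → T)

/-- A split quasi-hereditary structure on the `R`-algebra `A` with standard modules
`Δ(λ)`, `λ ∈ Λ` (following Rouquier's module-theoretic definition). -/
structure SplitQH (Δ : Λ → Type) [∀ l, AddCommGroup (Δ l)] [∀ l, Module R (Δ l)]
    [∀ l, Module A (Δ l)] [∀ l, IsScalarTower R A (Δ l)] : Type 1 where
  algFin : Module.Finite R A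
  algProj : Module.Projective R A
  deltaFinA : ∀ l, Module.Finite A (Δ l)
  deltaFinR : ∀ l, Module.Finite R (Δ l)
  deltaProjR : ∀ l, Module.Projective R (Δ l)
  hom_le : ∀ l m : Λ, (∃ f : Δ l →ₗ[A] Δ m, f ≠ 0) → l ≤ m
  endIso : ∀ l, Nonempty ((Module.End A (Δ l)) ≃ₐ[R] R)
  P : Λ → ModuleCat.{0} A
  P_proj : ∀ l, Module.Projective A (P l)
  P_fin : ∀ l, Module.Finite A (P l)
  epi : ∀ l, (P l : Type) →ₗ[A] Δ l
  epi_surj : ∀ l, Function.Surjective (epi l)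
  ker_filt : ∀ l, InFilt R A Λ Δ {m | l < m} ↥(LinearMap.ker (epi l))
  add_gen : ∀ (Q : ModuleCat.{0} A), Module.Finite A Q → Module.Projective A Q →
    InAdd A (∀ l, (P l : Type)) Q

/-- Vanishing of `Ext^i_A(M, N)` (computed in the abelian category of `A`-modules). -/
def extVanish (M : Type) [AddCommGroup M] [Module A M] (N : Type) [AddCommGroup N]
    [Module A N] (i : ℕ) : Prop :=
  Subsingleton (((Ext ℤ (ModuleCat.{0} A) i).obj
    (Opposite.op (ModuleCat.of A M))).obj (ModuleCat.of A N))

/-- `∇` is a family of costandard modules for the split quasi-hereditary algebra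
`(A, {Δ(λ)})`: the `R`-linear duals `D∇(λ)` make `A^op` split quasi-hereditary (with the same
poset), and the `Ext`-orthogonality relations with the standard modules hold. -/
def IsCostandard (Δ : Λ → Type) [∀ l, AddCommGroup (Δ l)] [∀ l, Module R (Δ l)]
    [∀ l, Module A (Δ l)] [∀ l, IsScalarTower R A (Δ l)]
    (N : Λ → Type) [∀ l, AddCommGroup (N l)] [∀ l, Module R (N l)]
    [∀ l, Module A (N l)] [∀ l, IsScalarTower R A (N l)] : Prop :=
  Nonempty (SplitQH R Aᵐᵒᵖ Λ (fun l => (N l →ₗ[R] R))) ∧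
  (∀ l, Nonempty ((Δ l →ₗ[A] N l) ≃ₗ[R] R)) ∧
  (∀ l m, l ≠ m → ∀ f : Δ l →ₗ[A] N m, f = 0) ∧
  (∀ l m : Λ, ∀ i : ℕ, 0 < i → extVanish A (Δ l) (N m) i)

/-- A bundled family of costandard modules. -/
structure CostandardFamily (Δ : Λ → Type) [∀ l, AddCommGroup (Δ l)] [∀ l, Module R (Δ l)]
    [∀ l, Module A (Δ l)] [∀ l, IsScalarTower R A (Δ l)] : Type 1 where
  Nab : Λ → Type
  [acg : ∀ l, AddCommGroup (Nab l)]
  [modR : ∀ l, Module R (Nab l)]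
  [modA : ∀ l, Module A (Nab l)]
  [tower : ∀ l, IsScalarTower R A (Nab l)]
  cost : IsCostandard R A Λ Δ Nab

attribute [instance] CostandardFamily.acg CostandardFamily.modR CostandardFamily.modA
  CostandardFamily.tower

/-- `T` is a family of (partial) tilting modules forming a characteristic tilting module
`⊕ T(λ)`: each `T(λ)` admits an exact sequence `0 → Δ(λ) → T(λ) → X(λ) → 0` with
`X(λ) ∈ F(Δ̃_{μ<λ})` and an exact sequence `0 → Y(λ) → T(λ) → ∇(λ) → 0` with
`Y(λ) ∈ F(∇̃_{μ<λ})`. -/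
def IsCharTilting (Δ : Λ → Type) [∀ l, AddCommGroup (Δ l)] [∀ l, Module R (Δ l)]
    [∀ l, Module A (Δ l)] [∀ l, IsScalarTower R A (Δ l)]
    (N : Λ → Type) [∀ l, AddCommGroup (N l)] [∀ l, Module R (N l)]
    [∀ l, Module A (N l)] [∀ l, IsScalarTower R A (N l)]
    (T : Λ → Type) [∀ l, AddCommGroup (T l)] [∀ l, Module A (T l)] : Prop :=
  ∀ l : Λ,
    (∃ f : Δ l →ₗ[A] T l, Function.Injective f ∧
      InFilt R A Λ Δ {m | m < l} ((T l) ⧸ LinearMap.range f)) ∧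
    (∃ g : T l →ₗ[A] N l, Function.Surjective g ∧
      InFilt R A Λ N {m | m < l} ↥(LinearMap.ker g))

end Core

end

noncomputable section

section Balanced

variable (R : Type) [CommRing R]

/-- The submodule of relations defining the balanced tensor product `X ⊗_B Y` of a right
`B`-module `X` and a left `B`-module `Y` (presented as a quotient of `X ⊗_R Y`). -/
def balRel (B : Type) [Ring B] (X Y : Type)
    [AddCommGroup X] [Module R X] [Module Bᵐᵒᵖ X]
    [AddCommGroup Y] [Module R Y] [Module B Y] : Submodule R (X ⊗[R] Y) :=
  Submodule.span R {z | ∃ (b : B) (x : X) (y : Y),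
    z = (MulOpposite.op b • x) ⊗ₜ[R] y - x ⊗ₜ[R] (b • y)}

/-- The balanced tensor product `X ⊗_B Y` of a right `B`-module `X` and a left `B`-module
`Y`, as an `R`-module. -/
def BalTensor (B : Type) [Ring B] (X Y : Type)
    [AddCommGroup X] [Module R X] [Module Bᵐᵒᵖ X]
    [AddCommGroup Y] [Module R Y] [Module B Y] : Type :=
  (X ⊗[R] Y) ⧸ balRel R B X Y

instance (B : Type) [Ring B] (X Y : Type)
    [AddCommGroup X] [Module R X] [Module Bᵐᵒᵖ X]
    [AddCommGroup Y] [Module R Y] [Module B Y] : AddCommGroup (BalTensor R B X Y) :=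
  inferInstanceAs (AddCommGroup ((X ⊗[R] Y) ⧸ balRel R B X Y))

instance (B : Type) [Ring B] (X Y : Type)
    [AddCommGroup X] [Module R X] [Module Bᵐᵒᵖ X]
    [AddCommGroup Y] [Module R Y] [Module B Y] : Module R (BalTensor R B X Y) :=
  inferInstanceAs (Module R ((X ⊗[R] Y) ⧸ balRel R B X Y))

/-- The `R`-linear map `X ⊗_B Y → X ⊗_B Y'` induced by a `B`-linear map `φ : Y → Y'`. -/
def balMap (B : Type) [Ring B] [Algebra R B] (X : Type) [AddCommGroup X] [Module R X] [Module Bᵐᵒᵖ X]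
    {Y Y' : Type} [AddCommGroup Y] [Module R Y] [Module B Y] [IsScalarTower R B Y]
    [AddCommGroup Y'] [Module R Y'] [Module B Y'] [IsScalarTower R B Y']
    (φ : Y →ₗ[B] Y') : BalTensor R B X Y →ₗ[R] BalTensor R B X Y' :=
  Submodule.mapQ (balRel R B X Y) (balRel R B X Y')
    (LinearMap.lTensor X (LinearMap.restrictScalars R φ)) (by
      rw [balRel, Submodule.span_le]
      rintro z ⟨b, x, y, rfl⟩
      simp only [SetLike.mem_coe, Submodule.mem_comap, map_sub, LinearMap.lTensor_tmul,
        LinearMap.coe_restrictScalars, map_smul]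
      exact Submodule.subset_span ⟨b, x, φ y, rfl⟩)

end Balanced

section Homological

variable {R : Type} [CommRing R] {A : Type} [Ring A] [Algebra R A]

lemma exists_comp_eq_of_ker_le {S E M N : Type} [Ring S] [AddCommGroup E] [Module S E]
    [AddCommGroup M] [Module S M] [AddCommGroup N] [Module S N]
    (p : E →ₗ[S] M) (hp : Function.Surjective p) (f : E →ₗ[S] N)
    (h : ∀ x, p x = 0 → f x = 0) : ∃ g : M →ₗ[S] N, g ∘ₗ p = f := by
  have h' : LinearMap.ker p ≤ LinearMap.ker f := h
  refine ⟨(LinearMap.ker p).liftQ f h' ∘ₗ (p.quotKerEquivOfSurjective hp).symm.toLinearMap, ?_⟩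
  ext x
  have : (p.quotKerEquivOfSurjective hp).symm (p x) = Submodule.Quotient.mk x := by
    rw [LinearEquiv.symm_apply_eq]; rfl
  rw [LinearMap.comp_apply, LinearMap.comp_apply, LinearEquiv.coe_coe, this,
    Submodule.liftQ_apply]

/-- The sequence `0 → K → E → M → 0` is exact. -/
structure IsShortExact {S K E M : Type} [Ring S] [AddCommGroup K] [Module S K]
    [AddCommGroup E] [Module S E] [AddCommGroup M] [Module S M]
    (i : K →ₗ[S] E) (p : E →ₗ[S] M) : Prop where
  inj : Function.Injective i
  surj : Function.Surjective p
  exact : Function.Exact i p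

namespace IsShortExact

lemma of_surjective {S E M : Type} [Ring S] [AddCommGroup E] [Module S E] [AddCommGroup M]
    [Module S M] {p : E →ₗ[S] M} (hp : Function.Surjective p) :
    IsShortExact (LinearMap.ker p).subtype p :=
  ⟨Subtype.val_injective, hp, LinearMap.exact_subtype_ker_map p⟩

lemma prod {S X Y : Type} [Ring S] [AddCommGroup X] [Module S X] [AddCommGroup Y]
    [Module S Y] : IsShortExact (LinearMap.inl S X Y) (LinearMap.snd S X Y) :=
  ⟨LinearMap.inl_injective, LinearMap.snd_surjective, .inl_snd⟩

variable {S K E M M' M'' K' K'' P' P'' : Type} [Ring S]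
  [AddCommGroup M'] [Module S M'] [AddCommGroup M''] [Module S M'']
  [AddCommGroup K'] [Module S K'] [AddCommGroup K''] [Module S K'']
  [AddCommGroup P'] [Module S P'] [AddCommGroup P''] [Module S P'']
  [AddCommGroup K] [Module S K] [AddCommGroup E] [Module S E] [AddCommGroup M] [Module S M]

/-- A linear map whose image is killed by `p` lifts to the kernel term. -/
lemma exists_lift {i : K →ₗ[S] E} {p : E →ₗ[S] M} (h : IsShortExact i p)
    (f : M' →ₗ[S] E) (hf : ∀ x, p (f x) = 0) : ∃ g : M' →ₗ[S] K, i ∘ₗ g = f := by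
  refine ⟨(LinearEquiv.ofInjective i h.inj).symm.toLinearMap ∘ₗ
    f.codRestrict (LinearMap.range i) fun x => (h.exact _).1 (hf x), ?_⟩
  ext x
  have := LinearEquiv.apply_symm_apply (LinearEquiv.ofInjective i h.inj)
    ⟨f x, (h.exact _).1 (hf x)⟩
  exact congrArg Subtype.val this

lemma exists_retraction [Module.Projective S M] {i : K →ₗ[S] E} {p : E →ₗ[S] M}
    (h : IsShortExact i p) : ∃ r : E →ₗ[S] K, r ∘ₗ i = LinearMap.id := by
  obtain ⟨s, hs⟩ := Module.projective_lifting_property p LinearMap.id h.surj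
  obtain ⟨r, hr⟩ := h.exists_lift (LinearMap.id - s ∘ₗ p) fun x => by
    simpa [sub_eq_zero] using (LinearMap.congr_fun hs (p x)).symm
  refine ⟨r, LinearMap.ext fun x => h.inj ?_⟩
  have := LinearMap.congr_fun hr (i x)
  simpa [h.exact.apply_apply_eq_zero] using this

/-- The kernel of `E → M → M''` is an extension of `M' = ker (M → M'')` by
`K = ker (E → M)`. -/
lemma ker_comp {i : K →ₗ[S] E} {p : E →ₗ[S] M} (h : IsShortExact i p)
    {j : M' →ₗ[S] M} {q : M →ₗ[S] M''} (h' : IsShortExact j q) :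
    ∃ (a : K →ₗ[S] LinearMap.ker (q ∘ₗ p)) (b : LinearMap.ker (q ∘ₗ p) →ₗ[S] M'),
      IsShortExact a b ∧ (LinearMap.ker (q ∘ₗ p)).subtype ∘ₗ a = i := by
  obtain ⟨b, hb⟩ := h'.exists_lift (p ∘ₗ (LinearMap.ker (q ∘ₗ p)).subtype) fun x => x.2
  have hb' (x) : j (b x) = p x.1 := LinearMap.congr_fun hb x
  refine ⟨i.codRestrict _ fun x => by simp [h.exact.apply_apply_eq_zero], b,
    ⟨fun x y hxy => h.inj (congrArg Subtype.val hxy), fun m => ?_, fun x => ?_⟩, rfl⟩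
  · obtain ⟨e, he⟩ := h.surj (j m)
    refine ⟨⟨e, by simp [he, h'.exact.apply_apply_eq_zero]⟩, h'.inj ?_⟩
    rw [hb', he]
  · rw [← h'.inj.eq_iff, hb', map_zero, h.exact x.1]
    exact ⟨fun ⟨y, hy⟩ => ⟨y, Subtype.ext hy⟩, fun ⟨y, hy⟩ => ⟨y, congrArg Subtype.val hy⟩⟩

/-- The horseshoe lemma, in degree zero. -/
lemma horseshoe [Module.Projective S P''] {j : M' →ₗ[S] M} {q : M →ₗ[S] M''}
    (h : IsShortExact j q) {i' : K' →ₗ[S] P'} {p' : P' →ₗ[S] M'} (h' : IsShortExact i' p')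
    {i'' : K'' →ₗ[S] P''} {p'' : P'' →ₗ[S] M''} (h'' : IsShortExact i'' p'') :
    ∃ p : P' × P'' →ₗ[S] M, Function.Surjective p ∧
      ∃ (a : K' →ₗ[S] LinearMap.ker p) (b : LinearMap.ker p →ₗ[S] K''),
        IsShortExact a b ∧ (LinearMap.ker p).subtype ∘ₗ a = LinearMap.inl S P' P'' ∘ₗ i' := by
  obtain ⟨s, hs⟩ := Module.projective_lifting_property q p'' h.surj
  replace hs (x) : q (s x) = p'' x := LinearMap.congr_fun hs x
  have hqj (x) : q (j x) = 0 := h.exact.apply_apply_eq_zero x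
  set p := (j ∘ₗ p').coprod s with hp
  have hpx (x) : p x = j (p' x.1) + s x.2 := rfl
  obtain ⟨b, hb⟩ := h''.exists_lift
    (LinearMap.snd S P' P'' ∘ₗ (LinearMap.ker p).subtype) fun x => by
      have := congrArg q (hpx x.1 ▸ x.2 : j (p' x.1.1) + s x.1.2 = 0)
      simpa [hqj, hs] using this
  replace hb (x) : i'' (b x) = x.1.2 := LinearMap.congr_fun hb x
  refine ⟨p, fun m => ?_, (LinearMap.inl S P' P'' ∘ₗ i').codRestrict _ fun x => ?_, b,
    ⟨fun x y hxy => h'.inj (congrArg (fun z => z.1.1) hxy), fun k => ?_, fun x => ?_⟩, rfl⟩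
  · obtain ⟨y, hy⟩ := h''.surj (q m)
    obtain ⟨m', hm'⟩ := (h.exact (m - s y)).1 (by simp [hs, hy])
    obtain ⟨x, rfl⟩ := h'.surj m'
    exact ⟨(x, y), by simp [hpx, hm']⟩
  · simp [hpx, h'.exact.apply_apply_eq_zero]
  · obtain ⟨m', hm'⟩ := (h.exact (s (i'' k))).1 (by simp [hs, h''.exact.apply_apply_eq_zero])
    obtain ⟨x, rfl⟩ := h'.surj m'
    refine ⟨⟨(-x, i'' k), by simp [hpx, hm']⟩, h''.inj (hb _)⟩
  · rw [← h''.inj.eq_iff, hb, map_zero]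
    refine ⟨fun hx => ?_, fun ⟨y, hy⟩ => by rw [← hy]; rfl⟩
    have h0 : j (p' x.1.1) + s x.1.2 = 0 := hpx x.1 ▸ x.2
    rw [hx, map_zero, add_zero, map_eq_zero_iff _ h.inj] at h0
    obtain ⟨y, hy⟩ := (h'.exact _).1 h0
    exact ⟨y, Subtype.ext (Prod.ext hy hx.symm)⟩

end IsShortExact

variable (R A) in
/-- A property of `A`-modules. -/
abbrev ModPred : Type 1 :=
  ∀ (M : Type) [AddCommGroup M] [Module R M] [Module A M] [IsScalarTower R A M], Prop

variable (R A) in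
/-- A property of `A`-linear maps. -/
abbrev MapPred : Type 1 :=
  ∀ (K E : Type) [AddCommGroup K] [Module R K] [Module A K] [IsScalarTower R A K]
    [AddCommGroup E] [Module R E] [Module A E] [IsScalarTower R A E] (_ : K →ₗ[A] E), Prop

/-- A property of modules which is closed under extensions and direct summands. -/
structure ModPred.Closed (C : ModPred R A) : Prop where
  zero : ∀ (M : Type) [AddCommGroup M] [Module R M] [Module A M] [IsScalarTower R A M]
    [Subsingleton M], C M
  ext : ∀ {M' M M'' : Type} [AddCommGroup M'] [Module R M'] [Module A M'] [IsScalarTower R A M']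
    [AddCommGroup M] [Module R M] [Module A M] [IsScalarTower R A M]
    [AddCommGroup M''] [Module R M''] [Module A M''] [IsScalarTower R A M'']
    {i : M' →ₗ[A] M} {p : M →ₗ[A] M''}, IsShortExact i p → C M' → C M'' → C M
  summand : ∀ {X Y : Type} [AddCommGroup X] [Module R X] [Module A X] [IsScalarTower R A X]
    [AddCommGroup Y] [Module R Y] [Module A Y] [IsScalarTower R A Y]
    (i : X →ₗ[A] Y) (p : Y →ₗ[A] X), p ∘ₗ i = LinearMap.id → C Y → C X

namespace ModPred.Closed

variable {C : ModPred R A}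
  {X Y : Type} [AddCommGroup X] [Module R X] [Module A X] [IsScalarTower R A X]
  [AddCommGroup Y] [Module R Y] [Module A Y] [IsScalarTower R A Y]

lemma congr (hC : C.Closed) (e : X ≃ₗ[A] Y) (h : C Y) : C X :=
  hC.summand e.toLinearMap e.symm.toLinearMap (by ext; simp) h

lemma prod (hC : C.Closed) (hX : C X) (hY : C Y) : C (X × Y) := hC.ext .prod hX hY

lemma pi_fin (hC : C.Closed) {n : ℕ} {F : Fin n → Type} [∀ i, AddCommGroup (F i)]
    [∀ i, Module R (F i)] [∀ i, Module A (F i)] [∀ i, IsScalarTower R A (F i)] (h : ∀ i, C (F i)) :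
    C (∀ i, F i) := by
  induction n with
  | zero => exact hC.zero _
  | succ n ih =>
    exact hC.congr (Fin.consLinearEquiv A F).symm (hC.prod (h 0) (ih fun i => h i.succ))

lemma pi (hC : C.Closed) {ι : Type} [Fintype ι] {F : ι → Type} [∀ i, AddCommGroup (F i)]
    [∀ i, Module R (F i)] [∀ i, Module A (F i)] [∀ i, IsScalarTower R A (F i)] (h : ∀ i, C (F i)) :
    C (∀ i, F i) :=
  hC.congr (LinearEquiv.piCongrLeft' A F (Fintype.equivFin ι)) (hC.pi_fin fun _ => h _)

lemma tensor (hC : C.Closed) (hX : C X) (U : Type) [AddCommGroup U] [Module R U] [Module.Finite R U]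
    [Module.Projective R U] : C (X ⊗[R] U) := by
  obtain ⟨n, f, g, -, -, hfg⟩ := Module.Finite.exists_comp_eq_id_of_projective R U
  let f' (k : Fin n) : X →ₗ[A] X ⊗[R] U :=
    (TensorProduct.AlgebraTensorModule.mk R A X U).flip (f (Pi.single k 1))
  let g' (k : Fin n) : X ⊗[R] U →ₗ[A] X :=
    (TensorProduct.AlgebraTensorModule.rid R A X).toLinearMap ∘ₗ
      TensorProduct.AlgebraTensorModule.lTensor A X (LinearMap.proj k ∘ₗ g)
  refine hC.summand (LinearMap.pi g') (∑ k, f' k ∘ₗ LinearMap.proj k) ?_ (hC.pi fun _ => hX)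
  ext x u
  have hu : ∑ k, g u k • f (Pi.single k 1) = u := by
    conv_rhs => rw [← LinearMap.id_apply (R := R) u, ← hfg, LinearMap.comp_apply,
      ← Finset.univ_sum_single (g u), map_sum]
    refine Finset.sum_congr rfl fun k _ => ?_
    rw [← map_smul, ← Pi.single_smul, smul_eq_mul, mul_one]
  conv_rhs => rw [← hu]
  simp [f', g']

lemma of_inFilt (hC : C.Closed) {Λ : Type} {Δ : Λ → Type} [∀ l, AddCommGroup (Δ l)]
    [∀ l, Module R (Δ l)] [∀ l, Module A (Δ l)] [∀ l, IsScalarTower R A (Δ l)] {S : Set Λ}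
    (hX : InFilt R A Λ Δ S X) (hΔ : ∀ l ∈ S, C (Δ l)) : C X := by
  obtain ⟨-, n, c, hbot, htop, hmono, hfac⟩ := hX
  have key (k : Fin (n + 1)) : C (c k) := by
    induction k using Fin.induction with
    | zero => rw [hbot]; exact hC.zero _
    | succ k ih =>
      obtain ⟨⟨l, hl, U, hfin, hproj, e⟩⟩ := hfac k
      have hle := hmono k.castSucc_lt_succ.le
      refine hC.ext (i := Submodule.inclusion hle) (p := Submodule.mkQ _)
        ⟨Submodule.inclusion_injective hle, Submodule.mkQ_surjective _, fun x => ?_⟩ ih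
        (hC.congr e (hC.tensor (hΔ l hl) U))
      rw [Submodule.mkQ_apply, Submodule.Quotient.mk_eq_zero]
      exact ⟨fun hx => ⟨⟨x.1, hx⟩, rfl⟩, fun ⟨y, hy⟩ => hy ▸ y.2⟩
  have := key (Fin.last n)
  rw [htop] at this
  exact hC.congr Submodule.topEquiv.symm this

lemma of_finite_projective (hC : C.Closed) (hA : C A) [Module.Finite A X]
    [Module.Projective A X] : C X := by
  obtain ⟨n, f, g, -, -, hfg⟩ := Module.Finite.exists_comp_eq_id_of_projective A X
  exact hC.summand g f hfg (hC.pi fun _ => hA)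

end ModPred.Closed

/-- The modules `M` such that `G` holds for the inclusion `K → E` in every short exact sequence
`0 → K → E → M → 0`. -/
def Orth (G : MapPred R A) : ModPred R A := fun M _ _ _ _ =>
  ∀ (K E : Type) [AddCommGroup K] [Module R K] [Module A K] [IsScalarTower R A K]
    [AddCommGroup E] [Module R E] [Module A E] [IsScalarTower R A E] (i : K →ₗ[A] E)
    (p : E →ₗ[A] M), IsShortExact i p → G K E i

/-- Properties of maps with the stability needed for `Orth G` to behave like the vanishing of
a first derived functor. -/
structure MapPred.Good (G : MapPred R A) : Prop where
  of_retraction : ∀ {K E : Type} [AddCommGroup K] [Module R K] [Module A K]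
    [IsScalarTower R A K] [AddCommGroup E] [Module R E] [Module A E] [IsScalarTower R A E]
    (i : K →ₗ[A] E) (r : E →ₗ[A] K), r ∘ₗ i = LinearMap.id → G K E i
  comp : ∀ {K E F : Type} [AddCommGroup K] [Module R K] [Module A K]
    [IsScalarTower R A K] [AddCommGroup E] [Module R E] [Module A E] [IsScalarTower R A E]
    [AddCommGroup F] [Module R F] [Module A F] [IsScalarTower R A F]
    (i : K →ₗ[A] E) (j : E →ₗ[A] F), G K E i → G E F j → G K F (j ∘ₗ i)
  of_comp : ∀ {K E F : Type} [AddCommGroup K] [Module R K] [Module A K]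
    [IsScalarTower R A K] [AddCommGroup E] [Module R E] [Module A E] [IsScalarTower R A E]
    [AddCommGroup F] [Module R F] [Module A F] [IsScalarTower R A F]
    (i : K →ₗ[A] E) (j : E →ₗ[A] F), G K F (j ∘ₗ i) → G K E i
  pushout : ∀ {K P L E : Type} [AddCommGroup K] [Module R K] [Module A K]
    [IsScalarTower R A K] [AddCommGroup P] [Module R P] [Module A P] [IsScalarTower R A P]
    [AddCommGroup L] [Module R L] [Module A L] [IsScalarTower R A L]
    [AddCommGroup E] [Module R E] [Module A E] [IsScalarTower R A E]
    (i : K →ₗ[A] P) (a : K →ₗ[A] L) (j : L →ₗ[A] E) (b : P →ₗ[A] E),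
    Function.Surjective (j.coprod b) → Function.Exact ((-a).prod i) (j.coprod b) →
    G K P i → G L E j

namespace MapPred.Good

variable {G : MapPred R A}
  {M : Type} [AddCommGroup M] [Module R M] [Module A M] [IsScalarTower R A M]

lemma orth_of_presentation (hG : G.Good) {K P : Type} [AddCommGroup K] [Module R K] [Module A K]
    [IsScalarTower R A K] [AddCommGroup P] [Module R P] [Module A P] [IsScalarTower R A P]
    [Module.Projective A P] (i : K →ₗ[A] P) (p : P →ₗ[A] M) (h : IsShortExact i p)
    (hi : G K P i) : Orth G M := by
  intro L E _ _ _ _ _ _ _ _ j q h'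
  obtain ⟨b, hb⟩ := Module.projective_lifting_property q p h'.surj
  replace hb (x) : q (b x) = p x := LinearMap.congr_fun hb x
  obtain ⟨a, ha⟩ := h'.exists_lift (b ∘ₗ i) fun x => by simp [hb, h.exact.apply_apply_eq_zero]
  replace ha (x) : j (a x) = b (i x) := LinearMap.congr_fun ha x
  refine hG.pushout i a j b (fun e => ?_) (fun x => ?_) hi
  · obtain ⟨y, hy⟩ := h.surj (q e)
    obtain ⟨l, hl⟩ := (h'.exact (e - b y)).1 (by simp [hb, hy])
    exact ⟨(l, y), by simp [hl]⟩
  · rw [LinearMap.coprod_apply]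
    refine ⟨fun hx => ?_, fun ⟨y, hy⟩ => by simp [← hy, ha]⟩
    have hx2 : p x.2 = 0 := by
      simpa [hb, h'.exact.apply_apply_eq_zero] using congrArg q hx
    obtain ⟨k, hk⟩ := (h.exact _).1 hx2
    refine ⟨k, Prod.ext (h'.inj ?_) hk⟩
    simp [ha, hk, eq_neg_of_add_eq_zero_left hx]

lemma orth_of_projective (hG : G.Good) [Module.Projective A M] : Orth G M := by
  intro K E _ _ _ _ _ _ _ _ i p h
  obtain ⟨r, hr⟩ := h.exists_retraction
  exact hG.of_retraction i r hr

lemma orth_closed (hG : G.Good) : ModPred.Closed (Orth G) where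
  zero M _ _ _ _ _ := by
    have : Module.Projective A M := inferInstance
    exact hG.orth_of_projective
  ext {M' M M''} _ _ _ _ _ _ _ _ _ _ _ _ j q h h' h'' := by
    intro K E _ _ _ _ _ _ _ _ i p hs
    obtain ⟨a, b, hab, rfl⟩ := hs.ker_comp h
    exact hG.comp _ _ (h' _ _ a b hab)
      (h'' _ _ _ _ (.of_surjective (h.surj.comp hs.surj)))
  summand {X Y} _ _ _ _ _ _ _ _ s r hrs hY := by
    intro K E _ _ _ _ _ _ _ _ i p h
    replace hrs (x) : r (s x) = x := LinearMap.congr_fun hrs x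
    refine hG.of_comp i (LinearMap.inl A E (LinearMap.ker r))
      (hY _ _ _ ((s ∘ₗ p).coprod (LinearMap.ker r).subtype) ⟨?_, fun y => ?_, fun x => ?_⟩)
    · exact LinearMap.inl_injective.comp h.inj
    · obtain ⟨e, he⟩ := h.surj (r y)
      exact ⟨(e, ⟨y - s (r y), by simp [hrs]⟩), by simp [he]⟩
    · simp only [LinearMap.coprod_apply, LinearMap.comp_apply, Submodule.subtype_apply]
      refine ⟨fun hx => ?_, fun ⟨y, hy⟩ => by simp [← hy, h.exact.apply_apply_eq_zero]⟩
      have hx1 : p x.1 = 0 := by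
        simpa [hrs, LinearMap.mem_ker.1 x.2.2] using congrArg r hx
      obtain ⟨k, hk⟩ := (h.exact _).1 hx1
      exact ⟨k, Prod.ext hk (Subtype.ext (by simpa [hx1] using hx.symm))⟩

end MapPred.Good

/-- `Ext¹(M, N) = 0` for `M` in `Orth (Extends N)`. -/
def Extends (N : Type) [AddCommGroup N] [Module A N] : MapPred R A :=
  fun K E _ _ _ _ _ _ _ _ i => ∀ f : K →ₗ[A] N, ∃ g : E →ₗ[A] N, g ∘ₗ i = f

lemma good_extends (N : Type) [AddCommGroup N] [Module A N] :
    MapPred.Good (Extends (R := R) (A := A) N) where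
  of_retraction i r h f := ⟨f ∘ₗ r, by rw [LinearMap.comp_assoc, h, LinearMap.comp_id]⟩
  comp i j hi hj f := by
    obtain ⟨g, rfl⟩ := hi f
    obtain ⟨g', rfl⟩ := hj g
    exact ⟨g', rfl⟩
  of_comp i j h f := by
    obtain ⟨g, rfl⟩ := h f
    exact ⟨g ∘ₗ j, rfl⟩
  pushout i a j b hs hex h f := by
    obtain ⟨g, hg⟩ := h (f ∘ₗ a)
    replace hg (x) : g (i x) = f (a x) := LinearMap.congr_fun hg x
    obtain ⟨g', hg'⟩ := exists_comp_eq_of_ker_le _ hs (f.coprod g) fun x hx => by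
      obtain ⟨y, rfl⟩ := (hex x).1 hx
      simp [hg]
    refine ⟨g', LinearMap.ext fun x => ?_⟩
    simpa using LinearMap.congr_fun hg' (x, 0)

section BalTensor

set_option linter.unusedSectionVars false

variable {X : Type} [AddCommGroup X] [Module R X] [Module Aᵐᵒᵖ X]
  {K E M : Type} [AddCommGroup K] [Module R K] [Module A K] [IsScalarTower R A K]
  [AddCommGroup E] [Module R E] [Module A E] [IsScalarTower R A E]
  [AddCommGroup M] [Module R M] [Module A M] [IsScalarTower R A M]

variable (R A X M) in
/-- The projection `X ⊗_R M → X ⊗_A M`. -/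
def balMk : X ⊗[R] M →ₗ[R] BalTensor R A X M := (balRel R A X M).mkQ

lemma balMk_surjective : Function.Surjective (balMk R A X M) := Submodule.mkQ_surjective _

lemma balMk_eq_zero {t : X ⊗[R] M} : balMk R A X M t = 0 ↔ t ∈ balRel R A X M :=
  Submodule.Quotient.mk_eq_zero _

lemma balMk_smul (a : A) (x : X) (m : M) :
    balMk R A X M (x ⊗ₜ (a • m)) = balMk R A X M ((MulOpposite.op a • x) ⊗ₜ m) := by
  rw [eq_comm, ← sub_eq_zero, ← map_sub, balMk_eq_zero]
  exact Submodule.subset_span ⟨a, x, m, rfl⟩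

/-- The linear map on `X ⊗_A M` induced by a balanced bilinear map. -/
def balLift {V : Type} [AddCommGroup V] [Module R V] (f : X →ₗ[R] M →ₗ[R] V)
    (h : ∀ (a : A) x m, f (MulOpposite.op a • x) m = f x (a • m)) : BalTensor R A X M →ₗ[R] V :=
  (balRel R A X M).liftQ (TensorProduct.lift f) <| by
    rw [balRel, Submodule.span_le]
    rintro _ ⟨a, x, m, rfl⟩
    simp [h]

lemma balMap_balMk (f : K →ₗ[A] E) (t : X ⊗[R] K) :
    balMap R A X f (balMk R A X K t) =
      balMk R A X E ((f.restrictScalars R).lTensor X t) := rfl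

lemma balTensor_hom_ext {V : Type} [AddCommGroup V] [Module R V]
    {f g : BalTensor R A X M →ₗ[R] V}
    (h : ∀ x m, f (balMk R A X M (x ⊗ₜ m)) = g (balMk R A X M (x ⊗ₜ m))) : f = g := by
  have : f ∘ₗ balMk R A X M = g ∘ₗ balMk R A X M := TensorProduct.ext' h
  ext z
  obtain ⟨t, rfl⟩ := balMk_surjective z
  exact LinearMap.congr_fun this t

variable (X) in
lemma balMap_id : balMap R A X (LinearMap.id : M →ₗ[A] M) = LinearMap.id :=
  balTensor_hom_ext fun _ _ => rfl

variable (X) in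
lemma balMap_comp (f : K →ₗ[A] E) (g : E →ₗ[A] M) :
    balMap R A X (g ∘ₗ f) = balMap R A X g ∘ₗ balMap R A X f :=
  balTensor_hom_ext fun _ _ => rfl

variable (X) in
lemma balMap_zero : balMap R A X (0 : K →ₗ[A] E) = 0 :=
  balTensor_hom_ext fun x m => by simp [balMap_balMk]

variable (X) in
lemma balMap_surjective {p : E →ₗ[A] M} (hp : Function.Surjective p) :
    Function.Surjective (balMap R A X p) := by
  intro z
  obtain ⟨t, rfl⟩ := balMk_surjective z
  obtain ⟨s, rfl⟩ := LinearMap.lTensor_surjective X (g := p.restrictScalars R) hp t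
  exact ⟨balMk R A X E s, rfl⟩

variable (X) in
lemma balMap_exact {i : K →ₗ[A] E} {p : E →ₗ[A] M} (h : Function.Exact i p)
    (hp : Function.Surjective p) : Function.Exact (balMap R A X i) (balMap R A X p) := by
  intro z
  constructor
  · obtain ⟨t, rfl⟩ := balMk_surjective z
    rw [balMap_balMk, balMk_eq_zero]
    intro ht
    have hle : balRel R A X M ≤
        (balRel R A X E).map ((p.restrictScalars R).lTensor X) := by
      rw [balRel, Submodule.span_le]
      rintro _ ⟨b, x, m, rfl⟩
      obtain ⟨e, rfl⟩ := hp m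
      exact ⟨_, Submodule.subset_span ⟨b, x, e, rfl⟩, by simp⟩
    obtain ⟨s, hs, hst⟩ := hle ht
    have hex : Function.Exact (i.restrictScalars R) (p.restrictScalars R) := h
    obtain ⟨k, hk⟩ := (lTensor_exact X hex hp (t - s)).1 (by rw [map_sub, hst, sub_self])
    refine ⟨balMk R A X K k, ?_⟩
    rw [balMap_balMk, hk, map_sub, balMk_eq_zero.2 hs, sub_zero]
  · rintro ⟨y, rfl⟩
    rw [← LinearMap.comp_apply, ← balMap_comp, h.linearMap_comp_eq_zero, balMap_zero,
      LinearMap.zero_apply]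

end BalTensor

/-- `Tor₁(X, M) = 0` for `M` in `Orth (TensorInjective X)`. -/
def TensorInjective (X : Type) [AddCommGroup X] [Module R X] [Module Aᵐᵒᵖ X] : MapPred R A :=
  fun _ _ _ _ _ _ _ _ _ _ i => Function.Injective (balMap R A X i)

lemma good_tensorInjective (X : Type) [AddCommGroup X] [Module R X] [Module Aᵐᵒᵖ X] :
    MapPred.Good (TensorInjective (R := R) (A := A) X) where
  of_retraction i r h := by
    refine Function.LeftInverse.injective (g := balMap R A X r) fun z => ?_
    rw [← LinearMap.comp_apply, ← balMap_comp, h, balMap_id, LinearMap.id_apply]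
  comp i j hi hj := by
    rw [TensorInjective, balMap_comp, LinearMap.coe_comp]
    exact Function.Injective.comp hj hi
  of_comp i j h := by
    rw [TensorInjective, balMap_comp, LinearMap.coe_comp] at h
    exact Function.Injective.of_comp h
  pushout {K P L E} _ _ _ _ _ _ _ _ _ _ _ _ _ _ _ _ i a j b hs hex h := by
    refine (injective_iff_map_eq_zero _).2 fun z hz => ?_
    have hj : j = j.coprod b ∘ₗ LinearMap.inl A L P := by simp
    rw [hj, balMap_comp, LinearMap.comp_apply] at hz
    obtain ⟨w, hw⟩ := (balMap_exact X hex hs _).1 hz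
    have h2 : balMap R A X i w = 0 := by
      have := congrArg (balMap R A X (LinearMap.snd A L P)) hw
      rwa [← LinearMap.comp_apply, ← LinearMap.comp_apply, ← balMap_comp, ← balMap_comp,
        LinearMap.snd_prod, LinearMap.snd_comp_inl, balMap_zero, LinearMap.zero_apply] at this
    have h3 : w = 0 := h (by rw [h2, map_zero])
    have h1 := congrArg (balMap R A X (LinearMap.fst A L P)) hw
    rwa [h3, map_zero, map_zero, ← LinearMap.comp_apply, ← balMap_comp, LinearMap.fst_comp_inl,
      balMap_id, LinearMap.id_apply, eq_comm] at h1

/-- `Torᵢ(X, M) = 0` for `i = n + 1`, defined by dimension shifting. -/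
def TorVanish (X : Type) [AddCommGroup X] [Module R X] [Module Aᵐᵒᵖ X] : ℕ → ModPred R A
  | 0 => Orth (TensorInjective X)
  | n + 1 => fun M _ _ _ _ =>
    ∀ (K P : Type) [AddCommGroup K] [Module R K] [Module A K] [IsScalarTower R A K]
      [AddCommGroup P] [Module R P] [Module A P] [IsScalarTower R A P] (i : K →ₗ[A] P)
      (p : P →ₗ[A] M), Module.Projective A P → IsShortExact i p → TorVanish X n K

variable (R A) in
lemma exists_projective_presentation (M : Type) [AddCommGroup M] [Module A M] :
    ∃ (P : Type) (_ : AddCommGroup P) (_ : Module R P) (_ : Module A P)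
      (_ : IsScalarTower R A P) (_ : Module.Projective A P) (p : P →ₗ[A] M),
      Function.Surjective p :=
  ⟨M →₀ A, inferInstance, inferInstance, inferInstance, inferInstance, inferInstance,
    Finsupp.linearCombination A id, Finsupp.linearCombination_id_surjective A M⟩

section TorVanish

variable (X : Type) [AddCommGroup X] [Module R X] [Module Aᵐᵒᵖ X]

lemma torVanish_of_projective (n : ℕ) (M : Type) [AddCommGroup M] [Module R M] [Module A M]
    [IsScalarTower R A M] [Module.Projective A M] : TorVanish (R := R) (A := A) X n M := by
  induction n generalizing M with
  | zero => exact (good_tensorInjective X).orth_of_projective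
  | succ n ih =>
    intro K P _ _ _ _ _ _ _ _ i p _ h
    obtain ⟨r, hr⟩ := h.exists_retraction
    have : Module.Projective A K := .of_split i r hr
    exact ih K

variable {X} {M' M M'' : Type}
  [AddCommGroup M'] [Module R M'] [Module A M'] [IsScalarTower R A M']
  [AddCommGroup M] [Module R M] [Module A M] [IsScalarTower R A M]
  [AddCommGroup M''] [Module R M''] [Module A M''] [IsScalarTower R A M'']

lemma TorVanish.left {n : ℕ} {j : M' →ₗ[A] M} {q : M →ₗ[A] M''} (h : IsShortExact j q)
    (hM : TorVanish (R := R) (A := A) X n M) (hM'' : TorVanish (R := R) (A := A) X (n + 1) M'') :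
    TorVanish (R := R) (A := A) X n M' := by
  induction n generalizing M' M M'' with
  | zero =>
    obtain ⟨P', _, _, _, _, _, p', hp'⟩ := exists_projective_presentation R A M'
    obtain ⟨P'', _, _, _, _, _, p'', hp''⟩ := exists_projective_presentation R A M''
    have hs' := IsShortExact.of_surjective hp'
    have hs'' := IsShortExact.of_surjective hp''
    obtain ⟨p, hp, a, b, hab, hcomp⟩ := h.horseshoe hs' hs''
    have hG := good_tensorInjective (R := R) (A := A) X
    refine hG.orth_of_presentation _ _ hs' (hG.of_comp _ (LinearMap.inl A _ P'') ?_)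
    rw [← hcomp]
    exact hG.comp _ _ (hM'' _ _ _ _ inferInstance hs'' _ _ _ _ hab)
      (hM _ _ _ _ (.of_surjective hp))
  | succ n ih =>
    intro K' P' _ _ _ _ _ _ _ _ i' p' _ hs'
    obtain ⟨P'', _, _, _, _, _, p'', hp''⟩ := exists_projective_presentation R A M''
    have hs'' := IsShortExact.of_surjective hp''
    obtain ⟨p, hp, a, b, hab, -⟩ := h.horseshoe hs' hs''
    exact ih hab (hM _ _ _ _ inferInstance (.of_surjective hp))
      (hM'' _ _ _ _ inferInstance hs'')

variable (X) in
lemma torVanish_closed (n : ℕ) : ModPred.Closed (TorVanish (R := R) (A := A) X n) where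
  zero M _ _ _ _ _ := torVanish_of_projective X n M
  ext {M' M M''} _ _ _ _ _ _ _ _ _ _ _ _ j q h h' h'' := by
    cases n with
    | zero => exact (good_tensorInjective X).orth_closed.ext h h' h''
    | succ n =>
      intro K P _ _ _ _ _ _ _ _ i p _ hs
      obtain ⟨a, b, hab, -⟩ := hs.ker_comp h
      have hqp : Function.Surjective (q ∘ₗ p) := h.surj.comp hs.surj
      exact (h'' _ _ _ _ inferInstance (.of_surjective hqp)).left hab h'
  summand {Y Z} _ _ _ _ _ _ _ _ s r hrs hZ := by
    induction n generalizing Y Z with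
    | zero => exact (good_tensorInjective X).orth_closed.summand s r hrs hZ
    | succ n ih =>
      intro K P _ _ _ _ _ _ _ _ i p _ h
      replace hrs (x) : r (s x) = x := LinearMap.congr_fun hrs x
      obtain ⟨P₂, _, _, _, _, _, p₂, hp₂⟩ := exists_projective_presentation R A (LinearMap.ker r)
      set π := (s ∘ₗ p).coprod ((LinearMap.ker r).subtype ∘ₗ p₂) with hπ
      have hπx (x) : π x = s (p x.1) + (p₂ x.2).1 := rfl
      have hrπ (x) : r (π x) = p x.1 := by simp [hπx, hrs, LinearMap.mem_ker.1 (p₂ x.2).2]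
      have hsurj : Function.Surjective π := fun z => by
        obtain ⟨e, he⟩ := h.surj (r z)
        obtain ⟨f, hf⟩ := hp₂ ⟨z - s (r z), by simp [hrs]⟩
        exact ⟨(e, f), by simp [hπx, he, hf]⟩
      obtain ⟨t, ht⟩ := h.exists_lift (LinearMap.fst A P P₂ ∘ₗ (LinearMap.ker π).subtype)
        fun x => by
          have := hrπ x.1
          rw [LinearMap.mem_ker.1 x.2, map_zero] at this
          exact this.symm
      refine ih _ _ _ _ _ _ _ _ ((LinearMap.inl A P P₂ ∘ₗ i).codRestrict (LinearMap.ker π)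
        fun x => by simp [hπx, h.exact.apply_apply_eq_zero]) t (LinearMap.ext fun x => h.inj ?_)
        (hZ _ _ _ _ inferInstance (.of_surjective hsurj))
      exact LinearMap.congr_fun ht _

/-- Closure under cokernels, one degree up. -/
lemma TorVanish.right {n : ℕ} {j : M' →ₗ[A] M} {q : M →ₗ[A] M''} (h : IsShortExact j q)
    (hM' : TorVanish (R := R) (A := A) X n M') (hM : TorVanish (R := R) (A := A) X (n + 1) M) :
    TorVanish (R := R) (A := A) X (n + 1) M'' := by
  intro K P _ _ _ _ _ _ _ _ i p _ hs
  let E := LinearMap.ker (q.coprod (-p))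
  have hE (x : E) : q x.1.1 = p x.1.2 := by
    have := x.2
    rwa [LinearMap.mem_ker, LinearMap.coprod_apply, LinearMap.neg_apply, add_neg_eq_zero] at this
  have h₁ : IsShortExact ((LinearMap.inl A M P ∘ₗ j).codRestrict E fun x => by
      simp [E, h.exact.apply_apply_eq_zero]) (LinearMap.snd A M P ∘ₗ E.subtype) := by
    refine ⟨fun x y hxy => h.inj (congrArg (fun z => z.1.1) hxy), fun y => ?_, fun x => ?_⟩
    · obtain ⟨m, hm⟩ := h.surj (p y)
      exact ⟨⟨(m, y), by simp [E, hm]⟩, rfl⟩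
    · refine ⟨fun hx => ?_, fun ⟨y, hy⟩ => by rw [← hy]; rfl⟩
      replace hx : x.1.2 = 0 := hx
      obtain ⟨y, hy⟩ := (h.exact x.1.1).1 (by rw [hE, hx, map_zero])
      exact ⟨y, Subtype.ext (Prod.ext hy hx.symm)⟩
  have h₂ : IsShortExact ((LinearMap.inr A M P ∘ₗ i).codRestrict E fun x => by
      simp [E, hs.exact.apply_apply_eq_zero]) (LinearMap.fst A M P ∘ₗ E.subtype) := by
    refine ⟨fun x y hxy => hs.inj (congrArg (fun z => z.1.2) hxy), fun y => ?_, fun x => ?_⟩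
    · obtain ⟨m, hm⟩ := hs.surj (q y)
      exact ⟨⟨(y, m), by simp [E, hm]⟩, rfl⟩
    · refine ⟨fun hx => ?_, fun ⟨y, hy⟩ => by rw [← hy]; rfl⟩
      replace hx : x.1.1 = 0 := hx
      obtain ⟨y, hy⟩ := (hs.exact x.1.2).1 (by rw [← hE, hx, map_zero])
      exact ⟨y, Subtype.ext (Prod.ext hx.symm hy)⟩
  exact TorVanish.left h₂ ((torVanish_closed X n).ext h₁ hM' (torVanish_of_projective X n P)) hM

/-- Tensoring a projective resolution of a module with vanishing higher `Tor` gives an exact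
complex. -/
lemma exact_of_torVanish (hM : ∀ n, TorVanish (R := R) (A := A) X n M) (i : ℕ)
    (P : ℕ → Type) [∀ i, AddCommGroup (P i)] [∀ i, Module R (P i)]
    [∀ i, Module A (P i)] [∀ i, IsScalarTower R A (P i)]
    (hP : ∀ i, Module.Projective A (P i))
    (d : ∀ i : ℕ, P (i + 1) →ₗ[A] P i) (ε : P 0 →ₗ[A] M) (hε : Function.Surjective ε)
    (h₀ : Function.Exact (d 0) ε) (hd : ∀ i : ℕ, Function.Exact (d (i + 1)) (d i)) :
    Function.Exact (balMap R A X (d (i + 1))) (balMap R A X (d i)) := by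
  have hs := IsShortExact.of_surjective hε
  obtain ⟨ε', hε'⟩ := hs.exists_lift (d 0) h₀.apply_apply_eq_zero
  have hε'x (x) : (ε' x).1 = d 0 x := LinearMap.congr_fun hε' x
  have hsurj : Function.Surjective ε' := fun x => by
    obtain ⟨y, hy⟩ := (h₀ x.1).1 x.2
    exact ⟨y, Subtype.ext ((hε'x y).trans hy)⟩
  have hex : Function.Exact (d 1) ε' := fun x => by
    rw [← hd 0 x, ← hε'x, ZeroMemClass.coe_eq_zero]
  induction i generalizing M P with
  | zero =>
    intro z
    rw [← balMap_exact X hex hsurj z, ← hε', balMap_comp, LinearMap.comp_apply]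
    exact map_eq_zero_iff _ (hM 0 _ _ _ _ hs)
  | succ i ih =>
    have hs' := IsShortExact.of_surjective hsurj
    obtain ⟨ε'', hε''⟩ := hs'.exists_lift (d 1) hex.apply_apply_eq_zero
    have hε''x (x) : (ε'' x).1 = d 1 x := LinearMap.congr_fun hε'' x
    refine ih (fun n => hM (n + 1) _ _ _ _ (hP 0) hs) (fun i => P (i + 1)) (fun i => hP _)
      (fun i => d (i + 1)) ε' hsurj hex (fun i => hd (i + 1)) hs' ε'' hε'' hε''x (fun x => ?_)
      (fun x => ?_)
    · obtain ⟨y, hy⟩ := (hex x.1).1 x.2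
      exact ⟨y, Subtype.ext ((hε''x y).trans hy)⟩
    · rw [← hd 1 x, ← hε''x, ZeroMemClass.coe_eq_zero]

end TorVanish

variable (R) in
/-- Finitely generated projective modules. -/
abbrev FinProj (V : Type) [AddCommGroup V] [Module R V] : Prop :=
  Module.Finite R V ∧ Module.Projective R V

section FinProj

variable {V' V V'' : Type} [AddCommGroup V'] [Module R V'] [AddCommGroup V] [Module R V]
  [AddCommGroup V''] [Module R V'']

lemma FinProj.of_retraction (i : V →ₗ[R] V') (p : V' →ₗ[R] V) (h : p ∘ₗ i = LinearMap.id)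
    (hV : FinProj R V') : FinProj R V := by
  have := hV.1
  have := hV.2
  exact ⟨.of_surjective p fun x => ⟨i x, LinearMap.congr_fun h x⟩, .of_split i p h⟩

lemma FinProj.congr (e : V ≃ₗ[R] V') (hV : FinProj R V') : FinProj R V :=
  hV.of_retraction e.toLinearMap e.symm.toLinearMap (by ext; simp)

lemma FinProj.of_subsingleton [Subsingleton V] : FinProj R V := ⟨inferInstance, inferInstance⟩

lemma FinProj.ext {i : V' →ₗ[R] V} {p : V →ₗ[R] V''} (h : IsShortExact i p)
    (hV' : FinProj R V') (hV'' : FinProj R V'') : FinProj R V := by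
  have := hV'.1
  have := hV'.2
  have := hV''.1
  have := hV''.2
  obtain ⟨s, hs⟩ := Module.projective_lifting_property p LinearMap.id h.surj
  obtain ⟨e, -⟩ := h.exact.splitSurjectiveEquiv h.inj ⟨s, hs⟩
  exact .congr e ⟨inferInstance, inferInstance⟩

lemma FinProj.exists_retraction (hV : FinProj R V) (j : V →ₗ[R] V')
    (h : ∀ φ : V →ₗ[R] R, ∃ ψ : V' →ₗ[R] R, ψ ∘ₗ j = φ) :
    ∃ r : V' →ₗ[R] V, r ∘ₗ j = LinearMap.id := by
  have := hV.1
  have := hV.2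
  obtain ⟨n, f, g, -, -, hfg⟩ := Module.Finite.exists_comp_eq_id_of_projective R V
  choose ψ hψ using fun k : Fin n => h (LinearMap.proj k ∘ₗ g)
  refine ⟨f ∘ₗ LinearMap.pi ψ, ?_⟩
  have : LinearMap.pi ψ ∘ₗ j = g := by
    ext x k
    exact LinearMap.congr_fun (hψ k) x
  rw [LinearMap.comp_assoc, this, hfg]

lemma FinProj.of_exact_retraction {i : V' →ₗ[R] V} {p : V →ₗ[R] V''} (h : Function.Exact i p)
    (hp : Function.Surjective p) (r : V →ₗ[R] V') (hr : r ∘ₗ i = LinearMap.id)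
    (hV : FinProj R V) : FinProj R V'' := by
  obtain ⟨s, hs⟩ := exists_comp_eq_of_ker_le p hp (LinearMap.id - i ∘ₗ r) fun x hx => by
    obtain ⟨y, rfl⟩ := (h x).1 hx
    simp [show r (i y) = y from LinearMap.congr_fun hr y]
  refine hV.of_retraction s p (LinearMap.ext fun y => ?_)
  obtain ⟨x, rfl⟩ := hp y
  have := LinearMap.congr_fun hs x
  simp only [LinearMap.comp_apply] at this
  simp [this, h.apply_apply_eq_zero]

end FinProj

lemma orth_extends_closed (M : Type) [AddCommGroup M] [Module R M] [Module A M]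
    [IsScalarTower R A M] :
    ModPred.Closed (R := R) (A := A) fun N _ _ _ _ => Orth (Extends (R := R) (A := A) N) M where
  zero N _ _ _ _ _ K E _ _ _ _ _ _ _ _ i p h f := ⟨0, Subsingleton.elim _ _⟩
  ext {N' N N''} _ _ _ _ _ _ _ _ _ _ _ _ j q h h' h'' := by
    obtain ⟨P, _, _, _, _, _, p, hp⟩ := exists_projective_presentation R A M
    have hs := IsShortExact.of_surjective hp
    refine (good_extends N).orth_of_presentation _ _ hs fun f => ?_
    obtain ⟨g, hg⟩ := h'' _ _ _ _ hs (q ∘ₗ f)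
    obtain ⟨g₁, rfl⟩ := Module.projective_lifting_property q g h.surj
    obtain ⟨f', hf'⟩ := h.exists_lift (f - g₁ ∘ₗ (LinearMap.ker p).subtype) fun x => by
      simpa [sub_eq_zero] using (LinearMap.congr_fun hg x).symm
    obtain ⟨g', rfl⟩ := h' _ _ _ _ hs f'
    refine ⟨g₁ + j ∘ₗ g', ?_⟩
    rw [LinearMap.add_comp, LinearMap.comp_assoc, hf', add_sub_cancel]
  summand {X Y} _ _ _ _ _ _ _ _ s r h hY := by
    intro K E _ _ _ _ _ _ _ _ i p hs f
    obtain ⟨g, hg⟩ := hY _ _ _ _ hs (s ∘ₗ f)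
    exact ⟨r ∘ₗ g, by rw [LinearMap.comp_assoc, hg, ← LinearMap.comp_assoc, h,
      LinearMap.id_comp]⟩

section Hom

variable (N : Type) [AddCommGroup N] [Module R N] [Module A N] [IsScalarTower R A N]

/-- Precomposition with an `A`-linear map, as an `R`-linear map. -/
def homPrecomp {M M' : Type} [AddCommGroup M] [Module A M] [AddCommGroup M'] [Module A M']
    (f : M →ₗ[A] M') : (M' →ₗ[A] N) →ₗ[R] (M →ₗ[A] N) where
  toFun g := g ∘ₗ f
  map_add' _ _ := rfl
  map_smul' _ _ := rfl

/-- Modules `M` with `Ext¹(M, N) = 0` and `Hom(M, N)` finitely generated projective. -/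
def HomFinProj : ModPred R A := fun M _ _ _ _ =>
  Orth (Extends (R := R) (A := A) N) M ∧ FinProj R (M →ₗ[A] N)

lemma homFinProj_closed : ModPred.Closed (HomFinProj (R := R) (A := A) N) where
  zero M _ _ _ _ _ := ⟨(good_extends N).orth_closed.zero M, .of_subsingleton⟩
  ext {M' M M''} _ _ _ _ _ _ _ _ _ _ _ _ i p h h' h'' := by
    refine ⟨(good_extends N).orth_closed.ext h h'.1 h''.1,
      FinProj.ext (i := homPrecomp N p) (p := homPrecomp N i)
        ⟨fun f g hfg => ?_, h''.1 _ _ i p h, fun f => ⟨fun hf => ?_, ?_⟩⟩ h''.2 h'.2⟩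
    · exact (LinearMap.cancel_right h.surj).1 hfg
    · refine exists_comp_eq_of_ker_le p h.surj f fun x hx => ?_
      obtain ⟨y, rfl⟩ := (h.exact x).1 hx
      exact LinearMap.congr_fun hf y
    · rintro ⟨g, rfl⟩
      ext x
      simp [homPrecomp, h.exact.apply_apply_eq_zero]
  summand {X Y} _ _ _ _ _ _ _ _ i p h hY := by
    refine ⟨(good_extends N).orth_closed.summand i p h hY.1,
      hY.2.of_retraction (homPrecomp N p) (homPrecomp N i) (LinearMap.ext fun f => ?_)⟩
    change (f ∘ₗ p) ∘ₗ i = f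
    rw [LinearMap.comp_assoc, h, LinearMap.comp_id]

end Hom

lemma finProj_closed : ModPred.Closed (R := R) (A := A) fun N _ _ _ _ => FinProj R N where
  zero _ _ _ _ _ _ := .of_subsingleton
  ext {_ _ _} _ _ _ _ _ _ _ _ _ _ _ _ i p h h' h'' :=
    FinProj.ext (i := i.restrictScalars R) (p := p.restrictScalars R) ⟨h.inj, h.surj, h.exact⟩
      h' h''
  summand {_ _} _ _ _ _ _ _ _ _ i p h hY :=
    hY.of_retraction (i.restrictScalars R) (p.restrictScalars R)
      (LinearMap.ext fun x => LinearMap.congr_fun h x)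

lemma ModPred.Closed.and {C C' : ModPred R A} (hC : C.Closed) (hC' : C'.Closed) :
    ModPred.Closed (R := R) (A := A) fun M _ _ _ _ => C M ∧ C' M where
  zero M _ _ _ _ _ := ⟨hC.zero M, hC'.zero M⟩
  ext h h' h'' := ⟨hC.ext h h'.1 h''.1, hC'.ext h h'.2 h''.2⟩
  summand i p h hY := ⟨hC.summand i p h hY.1, hC'.summand i p h hY.2⟩

lemma ModPred.Closed.forall {ι : Type} {C : ι → ModPred R A} (hC : ∀ i, (C i).Closed) :
    ModPred.Closed (R := R) (A := A) fun M _ _ _ _ => ∀ i, C i M where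
  zero M _ _ _ _ _ i := (hC i).zero M
  ext h h' h'' i := (hC i).ext h (h' i) (h'' i)
  summand s p h hY i := (hC i).summand s p h (hY i)

section TensorClass

variable (X : Type) [AddCommGroup X] [Module R X] [Module Aᵐᵒᵖ X]

/-- Modules `M` such that all higher `Tor(X, M)` vanish and `X ⊗_A M` is finitely generated
projective. -/
def TensorFinProj : ModPred R A := fun M _ _ _ _ =>
  (∀ n, TorVanish (R := R) (A := A) X n M) ∧ FinProj R (BalTensor R A X M)

lemma tensorFinProj_closed : ModPred.Closed (TensorFinProj (R := R) (A := A) X) where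
  zero M _ _ _ _ _ :=
    ⟨fun n => (torVanish_closed X n).zero M,
      have : Subsingleton (BalTensor R A X M) := balMk_surjective.subsingleton
      .of_subsingleton⟩
  ext {M' M M''} _ _ _ _ _ _ _ _ _ _ _ _ i p h h' h'' :=
    ⟨fun n => (torVanish_closed X n).ext h (h'.1 n) (h''.1 n),
      FinProj.ext (i := balMap R A X i) (p := balMap R A X p)
        ⟨h''.1 0 _ _ i p h, balMap_surjective X h.surj, balMap_exact X h.exact h.surj⟩ h'.2 h''.2⟩
  summand {_ Y} _ _ _ _ _ _ _ _ i p h hY :=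
    ⟨fun n => (torVanish_closed X n).summand i p h (hY.1 n),
      hY.2.of_retraction (balMap R A X i) (balMap R A X p) (by rw [← balMap_comp, h, balMap_id])⟩

variable (R A) in
/-- The isomorphism `X ⊗_A A ≃ X`. -/
lemma exists_balTensor_self_equiv [IsScalarTower R Aᵐᵒᵖ X] :
    Nonempty (BalTensor R A X A ≃ₗ[R] X) := by
  let f : X →ₗ[R] A →ₗ[R] X := LinearMap.mk₂ R
    (fun x a => MulOpposite.op a • x) (fun _ _ _ => smul_add _ _ _)
    (fun r x a => smul_comm _ _ _) (fun x a b => by rw [MulOpposite.op_add, add_smul])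
    (fun r x a => by rw [MulOpposite.op_smul, smul_assoc])
  let F : BalTensor R A X A →ₗ[R] X := balLift f fun a x b => by
    simp [f, mul_smul]
  let G : X →ₗ[R] BalTensor R A X A := balMk R A X A ∘ₗ (TensorProduct.mk R X A).flip 1
  refine ⟨LinearEquiv.ofLinearMap F G ?_ (balTensor_hom_ext fun x a => ?_)⟩
  · ext x
    exact one_smul _ x
  · change balMk R A X A ((MulOpposite.op a • x) ⊗ₜ 1) = _
    rw [← balMk_smul, smul_eq_mul, mul_one, LinearMap.id_apply]

lemma tensorFinProj_self [IsScalarTower R Aᵐᵒᵖ X] (hX : FinProj R X) :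
    TensorFinProj (R := R) (A := A) X A :=
  ⟨fun n => torVanish_of_projective X n A,
    hX.congr (exists_balTensor_self_equiv R A X).some⟩

end TensorClass

section Duality

variable {M N : Type} [AddCommGroup M] [Module R M] [Module A M] [IsScalarTower R A M]
  [AddCommGroup N] [Module R N] [Module A N] [IsScalarTower R A N]

variable (R A M N) in
/-- The map `Hom_A(M, N) → D(DN ⊗_A M)`. -/
def homToDual : (M →ₗ[A] N) →ₗ[R] (BalTensor R A (N →ₗ[R] R) M →ₗ[R] R) where
  toFun f := balLift (LinearMap.lcomp R R (f.restrictScalars R))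
    fun a x m => congrArg x (map_smul f a m).symm
  map_add' f g := balTensor_hom_ext fun x m => map_add x (f m) (g m)
  map_smul' r f := balTensor_hom_ext fun x m => map_smul x r (f m)

lemma homToDual_bijective (hN : FinProj R N) : Function.Bijective (homToDual R A M N) := by
  have := hN.1
  have := hN.2
  obtain ⟨n, p, s, -, -, hps⟩ := Module.Finite.exists_comp_eq_id_of_projective R N
  replace hps (u) : p (s u) = u := LinearMap.congr_fun hps u
  have hsep {u v : N} (h : ∀ x : N →ₗ[R] R, x u = x v) : u = v := by
    rw [← hps u, ← hps v]
    exact congrArg p (funext fun k => h (LinearMap.proj k ∘ₗ s))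
  refine ⟨fun f g hfg => LinearMap.ext fun m => hsep fun x => ?_, fun φ => ?_⟩
  · exact LinearMap.congr_fun hfg (balMk R A _ M (x ⊗ₜ m))
  · let F : M →ₗ[R] N := p ∘ₗ LinearMap.pi fun k =>
      φ ∘ₗ balMk R A (N →ₗ[R] R) M ∘ₗ TensorProduct.mk R (N →ₗ[R] R) M (LinearMap.proj k ∘ₗ s)
    have hF (x : N →ₗ[R] R) (m : M) : x (F m) = φ (balMk R A _ M (x ⊗ₜ m)) := by
      have hxp (w) := LinearMap.pi_apply_eq_sum_univ (x ∘ₗ p) w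
      set c : Fin n → R := fun k => (x ∘ₗ p) fun j => if k = j then 1 else 0
      have hx : ∑ k, c k • (LinearMap.proj k ∘ₗ s) = x := by
        ext u
        conv_rhs => rw [← hps u]
        exact (by simp [c, mul_comm] : _ = ∑ k, s u k • c k).trans (hxp _).symm
      conv_rhs => rw [← hx, TensorProduct.sum_tmul, map_sum, map_sum]
      refine (hxp _).trans (Finset.sum_congr rfl fun k _ => ?_)
      rw [← TensorProduct.smul_tmul', map_smul, map_smul, smul_eq_mul, smul_eq_mul, mul_comm]
      rfl
    refine ⟨{ F with map_smul' := fun a m => hsep fun x => ?_ },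
      balTensor_hom_ext fun x m => hF x m⟩
    change x (F (a • m)) = (MulOpposite.op a • x) (F m)
    rw [hF, hF, balMk_smul]

lemma exists_retraction_balMap {K E : Type} [AddCommGroup K] [Module R K] [Module A K]
    [IsScalarTower R A K] [AddCommGroup E] [Module R E] [Module A E] [IsScalarTower R A E]
    (hN : FinProj R N) (i : K →ₗ[A] E) (h : Extends (R := R) (A := A) N K E i)
    (hK : FinProj R (BalTensor R A (N →ₗ[R] R) K)) :
    ∃ r, r ∘ₗ balMap R A (N →ₗ[R] R) i = LinearMap.id :=
  hK.exists_retraction _ fun φ => by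
    obtain ⟨f, rfl⟩ := (homToDual_bijective hN).2 φ
    obtain ⟨g, rfl⟩ := h f
    exact ⟨homToDual R A E N g, balTensor_hom_ext fun _ _ => rfl⟩

lemma tensorFinProj_of_presentation (hN : FinProj R N) {K P : Type} [AddCommGroup K]
    [Module R K] [Module A K] [IsScalarTower R A K] [AddCommGroup P] [Module R P] [Module A P]
    [IsScalarTower R A P] [Module.Projective A P] {i : K →ₗ[A] P} {p : P →ₗ[A] M}
    (h : IsShortExact i p) (hM : Orth (Extends (R := R) (A := A) N) M)
    (hK : TensorFinProj (R := R) (A := A) (N →ₗ[R] R) K)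
    (hP : TensorFinProj (R := R) (A := A) (N →ₗ[R] R) P) :
    TensorFinProj (R := R) (A := A) (N →ₗ[R] R) M := by
  obtain ⟨r, hr⟩ := exists_retraction_balMap hN i (hM _ _ i p h) hK.2
  refine ⟨fun n => ?_, .of_exact_retraction (balMap_exact _ h.exact h.surj)
    (balMap_surjective _ h.surj) r hr hP.2⟩
  cases n with
  | zero =>
    exact (good_tensorInjective _).orth_of_presentation i p h
      (Function.LeftInverse.injective (LinearMap.congr_fun hr))
  | succ n => exact (hK.1 n).right h (hP.1 _)

end Duality

lemma exists_projective_presentation_of_extVanish {M N : Type} [AddCommGroup M] [Module A M]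
    [AddCommGroup N] [Module A N] (h : extVanish A M N 1) :
    ∃ (P Q : ModuleCat.{0} A) (d : Q →ₗ[A] P) (p : P →ₗ[A] M), Module.Projective A P ∧
      Function.Surjective p ∧ Function.Exact d p ∧
      ∀ φ : Q →ₗ[A] N, (∀ x, d x = 0 → φ x = 0) → ∃ ψ : P →ₗ[A] N, ψ ∘ₗ d = φ := by
  let P := ProjectiveResolution.of (ModuleCat.of A M)
  have hproj : Module.Projective A (P.complex.X 0) :=
    (IsProjective.iff_projective (R := A) (P.complex.X 0)).2 (P.projective 0)
  refine ⟨P.complex.X 0, P.complex.X 1, (P.complex.d 1 0).hom, (P.π.f 0).hom, hproj,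
    (ModuleCat.epi_iff_surjective (P.π.f 0)).1 inferInstance,
    (ShortComplex.ShortExact.moduleCat_exact_iff_function_exact _).1 P.exact₀, fun φ hφ => ?_⟩
  have hzero : Limits.IsZero ((P.complex.linearYonedaObj ℤ (ModuleCat.of A N)).homology 1) :=
    have : Subsingleton _ := h
    (ModuleCat.isZero_of_subsingleton _).of_iso (P.isoExt (R := ℤ) 1 (ModuleCat.of A N)).symm
  rw [← HomologicalComplex.exactAt_iff_isZero_homology,
    HomologicalComplex.exactAt_iff' _ 0 1 2 (by simp) (by simp),
    ShortComplex.moduleCat_exact_iff] at hzero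
  obtain ⟨ψ, hψ⟩ := hzero (ModuleCat.ofHom φ) <| by
    change P.complex.d 2 1 ≫ ModuleCat.ofHom φ = 0
    ext x
    refine hφ _ ?_
    have := congrArg (fun f => f.hom x) (P.complex.d_comp_d 2 1 0)
    exact this
  exact ⟨ψ.hom, congrArg ModuleCat.Hom.hom hψ⟩

lemma orth_of_extVanish {M N : Type} [AddCommGroup M] [Module R M] [Module A M]
    [IsScalarTower R A M] [AddCommGroup N] [Module A N] (h : extVanish A M N 1) :
    Orth (Extends (R := R) (A := A) N) M := by
  obtain ⟨P, Q, d, p, _, hp, hd, hext⟩ := exists_projective_presentation_of_extVanish h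
  let : Module R P := Module.compHom P (algebraMap R A)
  have : IsScalarTower R A P := .of_algebraMap_smul fun _ _ => rfl
  have hs := IsShortExact.of_surjective hp
  refine (good_extends N).orth_of_presentation _ _ hs fun f => ?_
  obtain ⟨e, he⟩ := hs.exists_lift d hd.apply_apply_eq_zero
  obtain ⟨g, hg⟩ := hext (f ∘ₗ e) fun x hx => by
    have : e x = 0 := hs.inj (by rw [← LinearMap.comp_apply, he, hx, map_zero])
    simp [this]
  refine ⟨g, LinearMap.ext fun x => ?_⟩
  obtain ⟨y, hy⟩ := (hd x).1 x.2
  have hx : e y = x := hs.inj ((LinearMap.congr_fun he y).trans hy)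
  have := LinearMap.congr_fun hg y
  simp only [LinearMap.comp_apply, hx, hy] at this
  exact this

end Homological

/-- If `M ∈ F(Δ̃)` and `N ∈ F(∇̃)`, then `DN ⊗_A M` is a finitely
generated projective `R`-module and `Tor^A_i(DN, M) = 0` for all `i > 0` (expressed by:
applying `DN ⊗_A −` to any projective resolution of `M` yields a complex which is exact at
all positive spots). In particular `Hom_A(M, N)` is a finitely generated projective
`R`-module. -/
theorem tensor_of_dual_costandard_with_standard_filtered
    (R : Type) [CommRing R] [IsNoetherianRing R]
    (A : Type) [Ring A] [Algebra R A]
    (Λ : Type) [Fintype Λ] [PartialOrder Λ]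
    (Δ : Λ → Type) [∀ l, AddCommGroup (Δ l)] [∀ l, Module R (Δ l)]
    [∀ l, Module A (Δ l)] [∀ l, IsScalarTower R A (Δ l)]
    (Nb : Λ → Type) [∀ l, AddCommGroup (Nb l)] [∀ l, Module R (Nb l)]
    [∀ l, Module A (Nb l)] [∀ l, IsScalarTower R A (Nb l)]
    (h : SplitQH R A Λ Δ) (hc : IsCostandard R A Λ Δ Nb)
    (M : Type) [AddCommGroup M] [Module R M] [Module A M] [IsScalarTower R A M]
    (N : Type) [AddCommGroup N] [Module R N] [Module A N] [IsScalarTower R A N]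
    (hM : InFilt R A Λ Δ Set.univ M) (hN : InFilt R A Λ Nb Set.univ N) :
    -- `DN ⊗_A M` is a finitely generated projective `R`-module
    (Module.Finite R (BalTensor R A (N →ₗ[R] R) M) ∧
      Module.Projective R (BalTensor R A (N →ₗ[R] R) M)) ∧
    -- `Tor^A_i(DN, M) = 0` for all `i > 0`
    (∀ (P : ℕ → Type) [∀ i, AddCommGroup (P i)] [∀ i, Module R (P i)]
      [∀ i, Module A (P i)] [∀ i, IsScalarTower R A (P i)]
      (_ : ∀ i, Module.Projective A (P i))
      (d : ∀ i : ℕ, P (i + 1) →ₗ[A] P i) (ε : P 0 →ₗ[A] M),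
      Function.Surjective ε → Function.Exact (d 0) ε →
      (∀ i : ℕ, Function.Exact (d (i + 1)) (d i)) →
      ∀ i : ℕ, Function.Exact (balMap R A (N →ₗ[R] R) (d (i + 1)))
        (balMap R A (N →ₗ[R] R) (d i))) ∧
    -- in particular, `Hom_A(M, N)` is a finitely generated projective `R`-module
    (Module.Finite R (M →ₗ[A] N) ∧ Module.Projective R (M →ₗ[A] N)) := by
  have horth (l m) : Orth (Extends (R := R) (A := A) (Nb m)) (Δ l) :=
    orth_of_extVanish (hc.2.2.2 l m 1 one_pos)
  let (l : Λ) : Module R (h.P l) := Module.compHom _ (algebraMap R A)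
  have (l : Λ) : IsScalarTower R A (h.P l) := .of_algebraMap_smul fun _ _ => rfl
  have := h.P_proj
  have := h.P_fin
  have hP (l : Λ) := IsShortExact.of_surjective (h.epi_surj l)
  have hNb (m : Λ) : FinProj R (Nb m) := by
    have hcl := homFinProj_closed (R := R) (A := A) (Nb m)
    have hΔ (l : Λ) : HomFinProj (R := R) (A := A) (Nb m) (Δ l) := by
      refine ⟨horth l m, ?_⟩
      by_cases hlm : l = m
      · subst hlm
        exact .congr (hc.2.1 l).some ⟨inferInstance, inferInstance⟩
      · have : Subsingleton (Δ l →ₗ[A] Nb m) :=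
          ⟨fun f g => (hc.2.2.1 l m hlm f).trans (hc.2.2.1 l m hlm g).symm⟩
        exact .of_subsingleton
    obtain ⟨n, i, p, hip⟩ := h.add_gen (ModuleCat.of A A) inferInstance inferInstance
    have hA : HomFinProj (R := R) (A := A) (Nb m) A :=
      hcl.summand i p hip <| hcl.pi fun _ => hcl.pi fun l =>
        hcl.ext (hP l) (hcl.of_inFilt (h.ker_filt l) fun k _ => hΔ k) (hΔ l)
    exact hA.2.congr (LinearMap.ringLmapEquivSelf A R (Nb m)).symm
  obtain ⟨horthN, hNfin⟩ : (∀ l, Orth (Extends (R := R) (A := A) N) (Δ l)) ∧ FinProj R N :=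
    ((ModPred.Closed.forall fun l => orth_extends_closed (Δ l)).and finProj_closed).of_inFilt hN
      fun m _ => ⟨fun l => horth l m, hNb m⟩
  have hdual : FinProj R (N →ₗ[R] R) := by
    have := hNfin.1
    have := hNfin.2
    exact ⟨inferInstance, inferInstance⟩
  have hcl := tensorFinProj_closed (R := R) (A := A) (N →ₗ[R] R)
  have hΔ (l : Λ) : TensorFinProj (R := R) (A := A) (N →ₗ[R] R) (Δ l) := by
    induction l using WellFoundedGT.induction with
    | ind l ih =>
      exact tensorFinProj_of_presentation hNfin (hP l) (horthN l)
        (hcl.of_inFilt (h.ker_filt l) ih) (hcl.of_finite_projective (tensorFinProj_self _ hdual))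
  have hM' := hcl.of_inFilt hM fun l _ => hΔ l
  refine ⟨hM'.2, fun P _ _ _ _ hP d ε hε h₀ hd i => exact_of_torVanish hM'.1 i P hP d ε hε h₀ hd,
    FinProj.congr (.ofBijective (homToDual R A M N) (homToDual_bijective hNfin)) ?_⟩
  have := hM'.2.1
  have := hM'.2.2
  exact ⟨inferInstance, inferInstance⟩

end
end

section
/- Let (A, {Δ(λ)}) be a split quasi-hereditary algebra over a commutative Noetherian ring R and M a finitely generated A-module. Then M ∈ F(Δ̃) if and only if M is projective over R and M(𝔪) := M/𝔪M belongs to F(Δ(𝔪)) over A(𝔪) := A/𝔪A for every maximal ideal 𝔪 of R. -/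
open scoped TensorProduct
open CategoryTheory

noncomputable section

section Fiber

variable (R : Type) [CommRing R] (A : Type) [Ring A] [Algebra R A]

/-- The `A`-submodule `I·M` of `M`, for an ideal `I` of `R`. -/
def idealSub (I : Ideal R) (M : Type) [AddCommGroup M] [Module R M] [Module A M] :
    Submodule A M :=
  Submodule.span A {x : M | ∃ r ∈ I, ∃ m : M, x = r • m}

/-- The fibre `M(I) = M / I·M` of `M` at an ideal `I` of `R`, as an `A`-module;
for `I` maximal this is the corresponding module over `A(I) = A/IA`. -/
abbrev Fiber (I : Ideal R) (M : Type) [AddCommGroup M] [Module R M] [Module A M] : Type :=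
  M ⧸ idealSub R A I M

end Fiber

/-- Modules admitting a finite filtration with factors satisfying `X`. -/
inductive Filt {A : Type} [Ring A] (X : ∀ (M : Type) [AddCommGroup M] [Module A M], Prop) :
    ∀ (M : Type) [AddCommGroup M] [Module A M], Prop
  | zero (M : Type) [AddCommGroup M] [Module A M] [Subsingleton M] : Filt X M
  | ext {M' M M'' : Type} [AddCommGroup M'] [Module A M'] [AddCommGroup M] [Module A M]
      [AddCommGroup M''] [Module A M''] (f : M' →ₗ[A] M) (g : M →ₗ[A] M'')
      (hf : Function.Injective f) (hg : Function.Surjective g)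
      (hfg : LinearMap.range f = LinearMap.ker g) (h' : Filt X M') (h'' : X M'') : Filt X M

section Filtrations

variable {A : Type} [Ring A] {X : ∀ (M : Type) [AddCommGroup M] [Module A M], Prop}

lemma nonempty_equiv_of_ker_eq {M Q Q' : Type} [AddCommGroup M] [Module A M]
    [AddCommGroup Q] [Module A Q] [AddCommGroup Q'] [Module A Q']
    (f : M →ₗ[A] Q) (g : M →ₗ[A] Q') (hf : Function.Surjective f) (hg : Function.Surjective g)
    (h : LinearMap.ker f = LinearMap.ker g) : Nonempty (Q ≃ₗ[A] Q') :=
  ⟨(f.quotKerEquivOfSurjective hf).symm ≪≫ₗ Submodule.quotEquivOfEq _ _ h ≪≫ₗ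
    g.quotKerEquivOfSurjective hg⟩

lemma Filt.of_equiv {M : Type} [AddCommGroup M] [Module A M] (h : Filt X M)
    {N : Type} [AddCommGroup N] [Module A N] (e : M ≃ₗ[A] N) : Filt X N := by
  cases h with
  | zero =>
    have := e.symm.subsingleton
    exact .zero N
  | ext f g hf hg hfg h' h'' =>
    refine .ext (e.toLinearMap.comp f) (g.comp e.symm.toLinearMap) (e.injective.comp hf)
      (hg.comp e.symm.surjective) ?_ h' h''
    rw [LinearMap.range_comp, hfg, LinearMap.ker_comp, Submodule.map_equiv_eq_comap_symm]

lemma Filt.of_ker {Q : Type} [AddCommGroup Q] [Module A Q] (h : Filt X Q) :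
    ∀ {M : Type} [AddCommGroup M] [Module A M] (g : M →ₗ[A] Q), Function.Surjective g →
      Filt X ↥(LinearMap.ker g) → Filt X M := by
  induction h with
  | zero =>
    intro M _ _ g hg hk
    have : LinearMap.ker g = ⊤ := by
      ext x; simpa using Subsingleton.elim _ _
    rw [this] at hk
    exact hk.of_equiv Submodule.topEquiv
  | @ext Q' Q Q'' _ _ _ _ _ _ i p hi hp hip h' h'' ih =>
    intro M _ _ g hg hk
    let N : Submodule A M := LinearMap.ker (p.comp g)
    let e := LinearEquiv.ofInjective i hi
    have hN : ∀ x : N, g x ∈ LinearMap.range i := fun x => by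
      rw [hip]; exact x.2
    let g' : N →ₗ[A] Q' :=
      e.symm.toLinearMap.comp (LinearMap.codRestrict (LinearMap.range i) (g.comp N.subtype) hN)
    have hg' : ∀ x : N, i (g' x) = g x := fun x =>
      congrArg Subtype.val (e.apply_symm_apply ⟨g x, hN x⟩)
    refine .ext N.subtype (p.comp g) N.subtype_injective (hp.comp hg) (by simp [N])
      (ih g' ?_ ?_) h''
    · intro q
      obtain ⟨x, hx⟩ := hg (i q)
      have hxN : x ∈ N := by
        have : i q ∈ LinearMap.ker p := hip ▸ ⟨q, rfl⟩
        simpa [N, hx] using this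
      exact ⟨⟨x, hxN⟩, hi (by rw [hg', hx])⟩
    · have hle : LinearMap.ker g ≤ N := LinearMap.ker_le_ker_comp g p
      have : LinearMap.ker g' = (LinearMap.ker g).comap N.subtype := by
        ext x
        rw [LinearMap.mem_ker, ← map_eq_zero_iff i hi, hg']
        rfl
      rw [this]
      exact hk.of_equiv (Submodule.comapSubtypeEquivOfLe hle).symm

/-- `N` is the top of a finite chain of submodules of `M`, starting at `⊥`, with factors
satisfying `X`. -/
def HasChain (X : ∀ (M : Type) [AddCommGroup M] [Module A M], Prop)
    {M : Type} [AddCommGroup M] [Module A M] (N : Submodule A M) : Prop :=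
  ∃ (n : ℕ) (c : Fin (n + 1) → Submodule A M), c 0 = ⊥ ∧ c (Fin.last n) = N ∧ Monotone c ∧
    ∀ i : Fin n, X (↥(c i.succ) ⧸ (Submodule.comap (c i.succ).subtype (c i.castSucc)))

lemma HasChain.snoc {M : Type} [AddCommGroup M] [Module A M] {N N' : Submodule A M}
    (h : HasChain X N) (hle : N ≤ N') (hX : X (↥N' ⧸ Submodule.comap N'.subtype N)) :
    HasChain X N' := by
  obtain ⟨n, c, h0, hl, hm, hc⟩ := h
  let F : Submodule A M → Submodule A M → Prop := fun K L => X (↥L ⧸ Submodule.comap L.subtype K)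
  have hF : ∀ i : Fin n, F (c i.castSucc) (c i.succ) := hc
  refine ⟨n + 1, Fin.snoc (α := fun _ => Submodule A M) c N', ?_, ?_, ?_, ?_⟩
  · rw [← Fin.castSucc_zero, Fin.snoc_castSucc, h0]
  · rw [Fin.snoc_last]
  · rw [Fin.monotone_iff_le_succ]
    intro i
    refine Fin.lastCases ?_ (fun j => ?_) i
    · rw [Fin.snoc_castSucc, Fin.succ_last, Fin.snoc_last, hl]
      exact hle
    · rw [Fin.snoc_castSucc, Fin.succ_castSucc, Fin.snoc_castSucc]
      exact hm (Fin.castSucc_le_succ j)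
  · intro i
    change F _ _
    refine Fin.lastCases ?_ (fun j => ?_) i
    · rw [Fin.snoc_castSucc, Fin.succ_last, Fin.snoc_last, hl]
      exact hX
    · rw [Fin.snoc_castSucc, Fin.succ_castSucc, Fin.snoc_castSucc]
      exact hF j

lemma Filt.hasChain_range
    (hX : ∀ (M N : Type) [AddCommGroup M] [Module A M] [AddCommGroup N] [Module A N],
      (M ≃ₗ[A] N) → X M → X N)
    {M : Type} [AddCommGroup M] [Module A M] (h : Filt X M) :
    ∀ {V : Type} [AddCommGroup V] [Module A V] (j : M →ₗ[A] V), Function.Injective j →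
      HasChain X (LinearMap.range j) := by
  induction h with
  | zero =>
    intro V _ _ j _
    refine ⟨0, fun _ => ⊥, rfl, ?_, monotone_const, fun i => i.elim0⟩
    symm
    rw [LinearMap.range_eq_bot]
    exact Subsingleton.elim _ _
  | @ext M' M M'' _ _ _ _ _ _ f g hf hg hfg h' h'' ih =>
    intro V _ _ j hj
    refine (ih (j.comp f) (hj.comp hf)).snoc (LinearMap.range_comp_le_range f j) ?_
    obtain ⟨e⟩ := nonempty_equiv_of_ker_eq g
      ((Submodule.mkQ ((LinearMap.range (j.comp f)).comap (LinearMap.range j).subtype)).comp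
        j.rangeRestrict) hg
      ((Submodule.mkQ_surjective _).comp j.surjective_rangeRestrict) (by
        ext x
        rw [← hfg]
        simp [hj.eq_iff])
    exact hX _ _ e h''

lemma Filt.of_chain {M : Type} [AddCommGroup M] [Module A M] (n : ℕ)
    (c : Fin (n + 1) → Submodule A M) (h0 : c 0 = ⊥) (hm : Monotone c)
    (hc : ∀ i : Fin n, X (↥(c i.succ) ⧸ (Submodule.comap (c i.succ).subtype (c i.castSucc))))
    (i : Fin (n + 1)) : Filt X ↥(c i) := by
  induction i using Fin.induction with
  | zero => rw [h0]; exact .zero _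
  | succ i ih =>
    refine .ext (Submodule.inclusion (hm (Fin.castSucc_le_succ i))) (Submodule.mkQ _)
      (Submodule.inclusion_injective _) (Submodule.mkQ_surjective _) ?_ ih (hc i)
    rw [Submodule.ker_mkQ, Submodule.range_inclusion]

lemma hasChain_top_iff
    (hX : ∀ (M N : Type) [AddCommGroup M] [Module A M] [AddCommGroup N] [Module A N],
      (M ≃ₗ[A] N) → X M → X N)
    {M : Type} [AddCommGroup M] [Module A M] :
    HasChain X (⊤ : Submodule A M) ↔ Filt X M := by
  constructor
  · rintro ⟨n, c, h0, hl, hm, hc⟩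
    have := Filt.of_chain n c h0 hm hc (Fin.last n)
    rw [hl] at this
    exact this.of_equiv Submodule.topEquiv
  · intro h
    simpa using h.hasChain_range hX LinearMap.id Function.injective_id

lemma Filt.pi (ι : Type) [Finite ι] (F : Type) [AddCommGroup F] [Module A F] (hF : X F) :
    Filt X (ι → F) := by
  cases nonempty_fintype ι
  refine Filt.of_equiv ?_ (LinearEquiv.funCongrLeft A F (Fintype.equivFin ι))
  induction Fintype.card ι with
  | zero => exact .zero _
  | succ n ih =>
    refine .ext (LinearMap.pi (Fin.cons 0 fun i => LinearMap.proj i)) (LinearMap.proj 0)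
      ?_ (fun x => ⟨fun _ => x, rfl⟩) ?_ ih hF
    · intro x y hxy
      ext i
      simpa using congrFun hxy i.succ
    · ext x
      refine ⟨?_, fun hx => ⟨Fin.tail x, ?_⟩⟩
      · rintro ⟨y, rfl⟩
        simp
      · ext i
        refine Fin.cases ?_ (fun j => ?_) i
        · simpa using (LinearMap.mem_ker.1 hx).symm
        · simp [Fin.tail]

end Filtrations

section CommutativeAlgebra

variable {R : Type} [CommRing R]

lemma subsingleton_of_smul_top_eq_top {D : Type} [AddCommGroup D] [Module R D]
    [Module.Finite R D]
    (h : ∀ I : Ideal R, I.IsMaximal → ∀ x : D, x ∈ I • (⊤ : Submodule R D)) :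
    Subsingleton D := by
  by_contra hD
  have hne : Module.annihilator R D ≠ ⊤ := by
    rwa [Ne, Module.annihilator_eq_top_iff]
  obtain ⟨I, hI, hle⟩ := Ideal.exists_le_maximal _ hne
  obtain ⟨r, hr, hrD⟩ := Submodule.exists_sub_one_mem_and_smul_eq_zero_of_fg_of_le_smul I
    (⊤ : Submodule R D) Module.Finite.fg_top fun x _ => h I hI x
  have hrI : r ∈ I := hle (Module.mem_annihilator.2 fun x => hrD x trivial)
  refine hI.ne_top ((Ideal.eq_top_iff_one I).2 ?_)
  simpa using I.sub_mem hrI hr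

lemma map_mem_smul_top {M N : Type} [AddCommGroup M] [Module R M] [AddCommGroup N] [Module R N]
    {I : Ideal R} (f : M →ₗ[R] N) {x : M} (hx : x ∈ I • (⊤ : Submodule R M)) :
    f x ∈ I • (⊤ : Submodule R N) := by
  have := Submodule.mem_map_of_mem (f := f) hx
  rw [Submodule.map_smul''] at this
  exact Submodule.smul_mono le_rfl le_top this

/-- If a map out of a projective module takes values in `I • M`, then it lies in `I • Hom(P, M)`. -/
lemma hom_mem_smul_top [IsNoetherianRing R] {B : Type} [Ring B] [Algebra R B]
    {P M : Type} [AddCommGroup P] [Module B P] [Module.Projective B P]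
    [AddCommGroup M] [Module R M] [Module B M] [IsScalarTower R B M]
    (I : Ideal R) (f : P →ₗ[B] M) (hf : ∀ p, f p ∈ I • (⊤ : Submodule R M)) :
    f ∈ I • (⊤ : Submodule R (P →ₗ[B] M)) := by
  obtain ⟨n, a, ha⟩ := Submodule.fg_iff_exists_fin_generating_family.1
    (IsNoetherian.noetherian I)
  let φ : (Fin n → M) →ₗ[B] M := ∑ i, a i • LinearMap.proj i
  have hφ : ∀ x, φ x = ∑ i, a i • x i := fun x => by simp [φ]
  have hrange : ∀ m ∈ I • (⊤ : Submodule R M), m ∈ LinearMap.range φ := by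
    intro m hm
    refine Submodule.smul_induction_on hm (fun r hr m _ => ?_) fun x y => add_mem
    rw [← ha] at hr
    obtain ⟨c, rfl⟩ := (Submodule.mem_span_range_iff_exists_fun R).1 hr
    refine ⟨fun i => c i • m, ?_⟩
    rw [hφ, Finset.sum_smul]
    exact Finset.sum_congr rfl fun i _ => by rw [smul_eq_mul, mul_comm, mul_smul]
  obtain ⟨g, hg⟩ := Module.projective_lifting_property φ.rangeRestrict
    (f.codRestrict (LinearMap.range φ) fun p => hrange _ (hf p)) φ.surjective_rangeRestrict
  have hfg : f = ∑ i, a i • (LinearMap.proj i).comp g := by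
    ext p
    have := congrArg Subtype.val (LinearMap.congr_fun hg p)
    simpa [hφ] using this.symm
  rw [hfg]
  refine Submodule.sum_mem _ fun i _ => Submodule.smul_mem_smul ?_ trivial
  rw [← ha]
  exact Submodule.subset_span ⟨i, rfl⟩

/-- A map between finite projective modules which is injective on all closed fibres splits. -/
lemma exists_retraction_of_fibers [IsNoetherianRing R] {N M : Type}
    [AddCommGroup N] [Module R N] [Module.Finite R N] [Module.Projective R N]
    [AddCommGroup M] [Module R M] [Module.Projective R M]
    (t : N →ₗ[R] M)
    (h : ∀ I : Ideal R, I.IsMaximal → ∀ z, t z ∈ I • (⊤ : Submodule R M) →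
      z ∈ I • (⊤ : Submodule R N)) :
    ∃ s : M →ₗ[R] N, s.comp t = LinearMap.id := by
  let Φ : (M →ₗ[R] N) →ₗ[R] (N →ₗ[R] N) := LinearMap.lcomp R N t
  have hΦ : Subsingleton ((N →ₗ[R] N) ⧸ LinearMap.range Φ) := by
    refine subsingleton_of_smul_top_eq_top (R := R) fun I hI x => ?_
    obtain ⟨g, rfl⟩ := Submodule.mkQ_surjective _ x
    let _ := Ideal.Quotient.field I
    let IN := I • (⊤ : Submodule R N)
    let IM := I • (⊤ : Submodule R M)
    let tI : (N ⧸ IN) →ₗ[R] (M ⧸ IM) :=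
      Submodule.mapQ IN IM t fun x hx => map_mem_smul_top t hx
    let tk : (N ⧸ IN) →ₗ[R ⧸ I] (M ⧸ IM) :=
      { tI with
        map_smul' := fun c x => by
          obtain ⟨c, rfl⟩ := Ideal.Quotient.mk_surjective c
          exact tI.map_smul c x }
    obtain ⟨s, hs⟩ := LinearMap.exists_leftInverse_of_injective tk (by
      rw [LinearMap.ker_eq_bot']
      intro x hx
      obtain ⟨z, rfl⟩ := Submodule.mkQ_surjective _ x
      have hz : t z ∈ IM := (Submodule.Quotient.mk_eq_zero IM).1 hx
      exact (Submodule.Quotient.mk_eq_zero IN).2 (h I hI z hz))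
    let sI : (M ⧸ IM) →ₗ[R] (N ⧸ IN) :=
      { s with map_smul' := fun c x => s.map_smul (Ideal.Quotient.mk I c) x }
    obtain ⟨u, hu⟩ := Module.projective_lifting_property IN.mkQ (sI.comp IM.mkQ)
      (Submodule.mkQ_surjective _)
    have hut : ∀ z, u (t z) - z ∈ IN := by
      intro z
      rw [← Submodule.Quotient.mk_eq_zero, Submodule.Quotient.mk_sub, sub_eq_zero]
      have h1 : (Submodule.Quotient.mk (u (t z)) : N ⧸ IN) = s (tk (Submodule.Quotient.mk z)) :=
        LinearMap.congr_fun hu (t z)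
      rw [h1]
      exact LinearMap.congr_fun hs _
    have key : g - Φ (g.comp u) ∈ I • (⊤ : Submodule R (N →ₗ[R] N)) := by
      refine hom_mem_smul_top I _ fun z => ?_
      have : (g - Φ (g.comp u)) z = - g (u (t z) - z) := by
        simp [Φ]
      rw [this]
      exact neg_mem (map_mem_smul_top g (hut z))
    have h2 := map_mem_smul_top (LinearMap.range Φ).mkQ key
    have h3 : (LinearMap.range Φ).mkQ (Φ (g.comp u)) = 0 :=
      (Submodule.Quotient.mk_eq_zero _).2 ⟨_, rfl⟩
    rwa [map_sub, h3, sub_zero] at h2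
  have : LinearMap.range Φ = ⊤ := Submodule.Quotient.subsingleton_iff.1 hΦ
  exact LinearMap.range_eq_top.1 this LinearMap.id

/-- A finite projective module has a dual basis modulo a maximal ideal. -/
lemma exists_dual_basis_mod (U : Type) [AddCommGroup U] [Module R U] [Module.Finite R U]
    [Module.Projective R U] (I : Ideal R) (hI : I.IsMaximal) :
    ∃ (r : ℕ) (u : Fin r → U) (c : Fin r → U →ₗ[R] R),
      (∀ x, x - ∑ i, c i x • u i ∈ I • (⊤ : Submodule R U)) ∧
      ∀ i j, c i (u j) - (if i = j then 1 else 0) ∈ I := by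
  let _ := Ideal.Quotient.field I
  let IU := I • (⊤ : Submodule R U)
  have : Module.Finite (R ⧸ I) (U ⧸ IU) := Module.Finite.of_restrictScalars_finite R _ _
  let b := Module.finBasis (R ⧸ I) (U ⧸ IU)
  choose u hu using fun i => Submodule.mkQ_surjective IU (b i)
  have hc : ∀ i, ∃ c : U →ₗ[R] R, ∀ x, Ideal.Quotient.mk I (c x) = b.coord i (IU.mkQ x) := by
    intro i
    let d : (U ⧸ IU) →ₗ[R] (R ⧸ I) :=
      { b.coord i with map_smul' := fun c x => (b.coord i).map_smul (Ideal.Quotient.mk I c) x }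
    obtain ⟨c, hc⟩ := Module.projective_lifting_property (Submodule.mkQ I) (d.comp IU.mkQ)
      (Submodule.mkQ_surjective _)
    exact ⟨c, fun x => LinearMap.congr_fun hc x⟩
  choose c hc using hc
  refine ⟨_, u, c, fun x => ?_, fun i j => ?_⟩
  · rw [← Submodule.Quotient.mk_eq_zero, ← Submodule.mkQ_apply, map_sub, map_sum, sub_eq_zero]
    conv_lhs => rw [← b.sum_repr (IU.mkQ x)]
    refine Finset.sum_congr rfl fun i _ => ?_
    rw [map_smul]
    change _ = Ideal.Quotient.mk I (c i x) • IU.mkQ (u i)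
    rw [hc, hu]
    rfl
  · rw [← Ideal.Quotient.eq, hc, hu]
    simp only [Module.Basis.coord_apply, Module.Basis.repr_self, Finsupp.single_apply]
    split_ifs <;> simp_all

end CommutativeAlgebra

section Algebra

variable {R : Type} [CommRing R] {A : Type} [Ring A] [Algebra R A]

lemma hom_finite_projective (P : Type) [AddCommGroup P] [Module A P] [Module.Projective A P]
    [Module.Finite A P] (M : Type) [AddCommGroup M] [Module R M] [Module A M]
    [IsScalarTower R A M] [Module.Finite R M] [Module.Projective R M] :
    Module.Finite R (P →ₗ[A] M) ∧ Module.Projective R (P →ₗ[A] M) := by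
  obtain ⟨n, f, hf⟩ := Module.Finite.exists_fin' A P
  obtain ⟨g, hg⟩ := Module.projective_lifting_property f LinearMap.id hf
  have hev : ∃ e : (Fin n → M) →ₗ[R] (P →ₗ[A] M), ∃ d : (P →ₗ[A] M) →ₗ[R] (Fin n → M),
      e.comp d = LinearMap.id := by
    let d : (P →ₗ[A] M) →ₗ[R] (Fin n → M) :=
      { toFun := fun φ i => φ (f (Pi.single i 1))
        map_add' := fun _ _ => rfl
        map_smul' := fun _ _ => rfl }
    let e : (Fin n → M) →ₗ[R] (P →ₗ[A] M) :=
      { toFun := fun m =>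
          { toFun := fun p => ∑ i, g p i • m i
            map_add' := fun p q => by simp [add_smul, Finset.sum_add_distrib]
            map_smul' := fun a p => by simp [mul_smul, Finset.smul_sum] }
        map_add' := fun m m' => by ext p; simp [Finset.sum_add_distrib]
        map_smul' := fun r m => by
          ext p
          simp only [Pi.smul_apply, LinearMap.coe_mk, AddHom.coe_mk, RingHom.id_apply,
            LinearMap.smul_apply, Finset.smul_sum]
          exact Finset.sum_congr rfl fun i _ => smul_comm _ _ _ }
    refine ⟨e, d, ?_⟩
    ext φ p
    change ∑ i, g p i • φ (f (Pi.single i 1)) = φ p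
    simp_rw [← map_smul]
    rw [← map_sum, ← map_sum]
    congr 1
    have : ∑ i, g p i • (Pi.single i (1 : A) : Fin n → A) = g p := (pi_eq_sum_univ' (g p)).symm
    rw [this]
    exact LinearMap.congr_fun hg p
  obtain ⟨e, d, hed⟩ := hev
  have : Module.Projective R (Fin n → M) :=
    Module.Projective.of_equiv (DFinsupp.linearEquivFunOnFintype (R := R) (M := fun _ : Fin n => M))
  exact ⟨Module.Finite.of_surjective e fun x => ⟨d x, LinearMap.congr_fun hed x⟩,
    Module.Projective.of_split d e hed⟩

lemma mem_idealSub_iff {I : Ideal R} {M : Type} [AddCommGroup M] [Module R M] [Module A M]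
    [IsScalarTower R A M] {x : M} :
    x ∈ idealSub R A I M ↔ x ∈ I • (⊤ : Submodule R M) := by
  constructor
  · intro hx
    refine Submodule.span_induction ?_ (zero_mem _) (fun _ _ _ _ => add_mem) ?_ hx
    · rintro _ ⟨r, hr, m, rfl⟩
      exact Submodule.smul_mem_smul hr trivial
    · intro a x _ hx
      exact map_mem_smul_top (actL R A M a) hx
  · intro hx
    refine Submodule.smul_induction_on hx (fun r hr m _ => ?_) fun x y => add_mem
    exact Submodule.subset_span ⟨r, hr, m, rfl⟩

lemma map_mem_idealSub {I : Ideal R} {M N : Type} [AddCommGroup M] [Module R M] [Module A M]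
    [IsScalarTower R A M] [AddCommGroup N] [Module R N] [Module A N]
    [IsScalarTower R A N] (f : M →ₗ[R] N) {x : M} (hx : x ∈ idealSub R A I M) :
    f x ∈ idealSub R A I N :=
  mem_idealSub_iff.2 (map_mem_smul_top f (mem_idealSub_iff.1 hx))

lemma fiber_smul_eq_zero (I : Ideal R) (M : Type) [AddCommGroup M] [Module R M] [Module A M]
    [IsScalarTower R A M] (r : R) (hr : r ∈ I) (v : Fiber R A I M) : algebraMap R A r • v = 0 := by
  obtain ⟨m, rfl⟩ := Submodule.mkQ_surjective _ v
  rw [← map_smul, algebraMap_smul]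
  exact (Submodule.Quotient.mk_eq_zero _).2 (Submodule.subset_span ⟨r, hr, m, rfl⟩)

end Algebra

section Homs

variable {R : Type} [CommRing R] {A : Type} [Ring A] [Algebra R A]
  {Λ : Type}
  {Δ : Λ → Type} [∀ l, AddCommGroup (Δ l)] [∀ l, Module R (Δ l)]
  [∀ l, Module A (Δ l)] [∀ l, IsScalarTower R A (Δ l)]

lemma exists_factor_of_surjective {P D N : Type} [AddCommGroup P] [Module A P]
    [AddCommGroup D] [Module A D] [AddCommGroup N] [Module A N]
    (p : P →ₗ[A] D) (hp : Function.Surjective p) (hN : ∀ g : LinearMap.ker p →ₗ[A] N, g = 0)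
    (f : P →ₗ[A] N) : ∃ f' : D →ₗ[A] N, f'.comp p = f := by
  have hk : LinearMap.ker p ≤ LinearMap.ker f := fun x hx =>
    LinearMap.congr_fun (hN (f.comp (LinearMap.ker p).subtype)) ⟨x, hx⟩
  refine ⟨((LinearMap.ker p).liftQ f hk).comp (p.quotKerEquivOfSurjective hp).symm.toLinearMap, ?_⟩
  ext x
  have : (p.quotKerEquivOfSurjective hp).symm (p x) = (LinearMap.ker p).mkQ x := by
    rw [LinearEquiv.symm_apply_eq]
    rfl
  simp [this]

lemma Filt.hom_eq_zero_of_tensorFactor {S : Set Λ} {N : Type} [AddCommGroup N] [Module A N]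
    (hN : ∀ m ∈ S, ∀ f : Δ m →ₗ[A] N, f = 0) {K : Type} [AddCommGroup K] [Module A K]
    (hK : Filt (fun Y [AddCommGroup Y] [Module A Y] => Nonempty (TensorFactor R A Λ Δ S Y)) K) :
    ∀ f : K →ₗ[A] N, f = 0 := by
  induction hK with
  | zero => exact fun f => LinearMap.ext fun x => by rw [Subsingleton.elim x 0, map_zero, map_zero]
  | ext i p hi hp hip _ h'' ih =>
    intro f
    obtain ⟨l, hl, U, _, _, e⟩ := h''
    obtain ⟨f', rfl⟩ := exists_factor_of_surjective p hp (fun g => by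
      ext ⟨x, hx⟩
      obtain ⟨y, rfl⟩ := hip ▸ hx
      exact LinearMap.congr_fun (ih (g.comp (i.codRestrict _ fun y => hip ▸ ⟨y, rfl⟩))) y) f
    have hzero : f'.comp e.symm.toLinearMap = 0 := by
      ext z
      induction z with
      | zero => simp
      | add x y hx hy => rw [map_add, hx, hy, map_add]
      | tmul d u =>
        exact LinearMap.congr_fun (hN l hl
          ((f'.comp e.symm.toLinearMap).comp
            ((TensorProduct.AlgebraTensorModule.mk R A (Δ l) U).flip u))) d
    ext x
    obtain ⟨z, hz⟩ := e.symm.surjective (p x)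
    change f' (p x) = 0
    rw [← hz]
    exact LinearMap.congr_fun hzero z

lemma Filt.hom_eq_zero {X : ∀ (M : Type) [AddCommGroup M] [Module A M], Prop}
    {P : Type} [AddCommGroup P] [Module A P]
    (hP : ∀ (Y : Type) [AddCommGroup Y] [Module A Y], X Y → ∀ f : P →ₗ[A] Y, f = 0)
    {V : Type} [AddCommGroup V] [Module A V] (hV : Filt X V) : ∀ f : P →ₗ[A] V, f = 0 := by
  induction hV with
  | zero => exact fun f => LinearMap.ext fun x => Subsingleton.elim _ _
  | ext i p hi hp hip _ h'' ih =>
    intro f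
    have hr : ∀ x, f x ∈ LinearMap.range i := fun x =>
      hip ▸ LinearMap.congr_fun (hP _ h'' (p.comp f)) x
    let e := LinearEquiv.ofInjective i hi
    have h0 := ih (e.symm.toLinearMap.comp (f.codRestrict _ hr))
    ext x
    have hx : e.symm ⟨f x, hr x⟩ = 0 := LinearMap.congr_fun h0 x
    have := (LinearEquiv.symm_apply_eq _).1 hx
    rw [map_zero] at this
    exact congrArg Subtype.val this

lemma nonempty_tensorFactor_congr {S : Set Λ} (M N : Type) [AddCommGroup M] [Module A M]
    [AddCommGroup N] [Module A N] (e : M ≃ₗ[A] N) :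
    Nonempty (TensorFactor R A Λ Δ S M) → Nonempty (TensorFactor R A Λ Δ S N) :=
  fun ⟨⟨l, hl, U, h1, h2, i⟩⟩ => ⟨⟨l, hl, U, h1, h2, e.symm ≪≫ₗ i⟩⟩

lemma nonempty_plainFactor_congr {F : Λ → Type} [∀ l, AddCommGroup (F l)] [∀ l, Module A (F l)]
    {S : Set Λ} (M N : Type) [AddCommGroup M] [Module A M]
    [AddCommGroup N] [Module A N] (e : M ≃ₗ[A] N) :
    Nonempty (PlainFactor A Λ F S M) → Nonempty (PlainFactor A Λ F S N) :=
  fun ⟨⟨l, hl, i⟩⟩ => ⟨⟨l, hl, e.symm ≪≫ₗ i⟩⟩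

lemma inFilt_iff {S : Set Λ} {M : Type} [AddCommGroup M] [Module A M] [Module.Finite A M] :
    InFilt R A Λ Δ S M ↔
      Filt (fun Y [AddCommGroup Y] [Module A Y] => Nonempty (TensorFactor R A Λ Δ S Y)) M := by
  rw [← hasChain_top_iff nonempty_tensorFactor_congr]
  exact and_iff_right ‹_›

lemma inFiltPlain_iff {F : Λ → Type} [∀ l, AddCommGroup (F l)] [∀ l, Module A (F l)]
    {S : Set Λ} {M : Type} [AddCommGroup M] [Module A M] [Module.Finite A M] :
    InFiltPlain A Λ F S M ↔
      Filt (fun Y [AddCommGroup Y] [Module A Y] => Nonempty (PlainFactor A Λ F S Y)) M := by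
  rw [← hasChain_top_iff nonempty_plainFactor_congr]
  exact and_iff_right ‹_›

namespace SplitQH

variable [PartialOrder Λ] (h : SplitQH R A Λ Δ)
include h

lemma exists_factor_epi (l : Λ) {N : Type} [AddCommGroup N] [Module A N]
    (hN : ∀ m, l < m → ∀ f : Δ m →ₗ[A] N, f = 0) (f : h.P l →ₗ[A] N) :
    ∃ f' : Δ l →ₗ[A] N, f'.comp (h.epi l) = f := by
  have hfin := (h.ker_filt l).1
  exact exists_factor_of_surjective (h.epi l) (h.epi_surj l)
    (Filt.hom_eq_zero_of_tensorFactor (fun m hm => hN m hm) (inFilt_iff.1 (h.ker_filt l))) f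

lemma hom_delta_eq_zero {l m : Λ} (hlm : ¬ l ≤ m) (f : Δ l →ₗ[A] Δ m) : f = 0 :=
  by_contra fun hf => hlm (h.hom_le l m ⟨f, hf⟩)

lemma hom_P_delta_eq_zero {l m : Λ} (hlm : ¬ l ≤ m) (f : h.P l →ₗ[A] Δ m) : f = 0 := by
  obtain ⟨f', rfl⟩ := h.exists_factor_epi l
    (fun k hk => h.hom_delta_eq_zero fun hkm => hlm (hk.le.trans hkm)) f
  rw [h.hom_delta_eq_zero hlm f', LinearMap.zero_comp]

lemma end_delta_eq_smul {l : Λ} (f : Δ l →ₗ[A] Δ l) : ∃ r : R, ∀ x, f x = r • x := by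
  obtain ⟨φ⟩ := h.endIso l
  refine ⟨φ f, fun x => ?_⟩
  have : (f : Module.End A (Δ l)) = algebraMap R (Module.End A (Δ l)) (φ f) := by
    apply φ.injective
    rw [AlgEquiv.commutes]
    rfl
  exact LinearMap.congr_fun this x

lemma hom_P_delta_self {l : Λ} (f : h.P l →ₗ[A] Δ l) : ∃ r : R, ∀ x, f x = r • h.epi l x := by
  obtain ⟨f', rfl⟩ := h.exists_factor_epi l
    (fun k hk => h.hom_delta_eq_zero (not_le_of_gt hk)) f
  obtain ⟨r, hr⟩ := h.end_delta_eq_smul f'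
  exact ⟨r, fun x => hr _⟩

lemma hom_P_filt_fiber_eq_zero {I : Ideal R} {S : Set Λ} {l : Λ} (hl : ∀ m ∈ S, ¬ l ≤ m)
    {V : Type} [AddCommGroup V] [Module A V]
    (hV : Filt (fun Y [AddCommGroup Y] [Module A Y] =>
      Nonempty (PlainFactor A Λ (fun l => Fiber R A I (Δ l)) S Y)) V)
    (f : h.P l →ₗ[A] V) : f = 0 := by
  refine hV.hom_eq_zero (fun Y _ _ ⟨m, hm, e⟩ f => ?_) f
  have := h.P_proj l
  obtain ⟨g, hg⟩ := Module.projective_lifting_property (idealSub R A I (Δ m)).mkQ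
    (e.toLinearMap.comp f) (Submodule.mkQ_surjective _)
  rw [h.hom_P_delta_eq_zero (hl m hm) g, LinearMap.comp_zero] at hg
  ext x
  exact e.map_eq_zero_iff.1 (LinearMap.congr_fun hg x).symm

lemma exists_factor_epi_of_P (l : Λ) {N : Type} [AddCommGroup N] [Module A N]
    (hN : ∀ m, l < m → ∀ f : h.P m →ₗ[A] N, f = 0) (f : h.P l →ₗ[A] N) :
    ∃ f' : Δ l →ₗ[A] N, f'.comp (h.epi l) = f := by
  refine h.exists_factor_epi l (fun m hm g => ?_) f
  ext x
  obtain ⟨y, rfl⟩ := h.epi_surj m x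
  exact LinearMap.congr_fun (hN m hm (g.comp (h.epi m))) y

/-- If `l` is maximal in `S`, then a module over the fibre filtered by the `Δ(m)(I)`, `m ∈ S`, has
a submodule isomorphic to a finite power of `Δ(l)(I)`, with quotient filtered by
the remaining `Δ(m)(I)`. -/
lemma exists_standard_submodule {I : Ideal R} {S : Set Λ} {l : Λ} (hl : ∀ m ∈ S, ¬ l < m)
    {V : Type} [AddCommGroup V] [Module A V]
    (hV : Filt (fun Y [AddCommGroup Y] [Module A Y] =>
      Nonempty (PlainFactor A Λ (fun l => Fiber R A I (Δ l)) S Y)) V) :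
    (∀ r ∈ I, ∀ v : V, algebraMap R A r • v = 0) →
    ∃ (r : ℕ) (e : (Fin r → Δ l) →ₗ[A] V),
      (∀ d, e d = 0 → ∀ i, d i ∈ idealSub R A I (Δ l)) ∧
      Filt (fun Y [AddCommGroup Y] [Module A Y] =>
        Nonempty (PlainFactor A Λ (fun l => Fiber R A I (Δ l)) (S \ {l}) Y))
        (V ⧸ LinearMap.range e) := by
  induction hV with
  | zero => exact fun _ => ⟨0, 0, fun _ _ i => i.elim0, .zero _⟩
  | @ext V' V V'' _ _ _ _ _ _ f g hf hg hfg h' h'' ih =>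
    intro hI
    obtain ⟨r, e, he, hfilt⟩ := ih fun r hr v => hf (by rw [map_smul, hI r hr, map_zero])
    obtain ⟨m, hm, j⟩ := id h''
    have hgf : ∀ x, g (f x) = 0 := fun x => by
      have : f x ∈ LinearMap.ker g := hfg ▸ ⟨x, rfl⟩
      exact this
    by_cases hml : m = l
    · subst hml
      have := h.P_proj m
      obtain ⟨p, hp⟩ := Module.projective_lifting_property g
        ((j.symm.toLinearMap.comp (idealSub R A I (Δ m)).mkQ).comp (h.epi m)) hg
      obtain ⟨s, rfl⟩ := h.exists_factor_epi_of_P m (fun k hk => h.hom_P_filt_fiber_eq_zero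
        (fun n hn hkn => hl n hn (hk.trans_le hkn)) (.ext f g hf hg hfg h' h'')) p
      have hs : ∀ d, g (s d) = j.symm (Submodule.Quotient.mk d) := fun d => by
        obtain ⟨y, rfl⟩ := h.epi_surj m d
        exact LinearMap.congr_fun hp y
      have hs0 : ∀ d ∈ idealSub R A I (Δ m), s d = 0 := by
        intro d hd
        refine LinearMap.mem_ker.1 ((Submodule.span_le (p := LinearMap.ker s)).2 ?_ hd)
        rintro _ ⟨r, hr, x, rfl⟩
        change s (r • x) = 0
        rw [← algebraMap_smul A r x, map_smul, hI r hr]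
      have hmem : ∀ d, g (s d) = 0 → d ∈ idealSub R A I (Δ m) := fun d hd => by
        rw [hs, j.symm.map_eq_zero_iff] at hd
        exact (Submodule.Quotient.mk_eq_zero _).1 hd
      let e' : (Fin (r + 1) → Δ m) →ₗ[A] V :=
        (f.comp e).comp (LinearMap.funLeft A (Δ m) Fin.succ) + s.comp (LinearMap.proj 0)
      have he' : ∀ d, e' d = f (e (fun i => d i.succ)) + s (d 0) := fun d => rfl
      refine ⟨r + 1, e', fun d hd => ?_, ?_⟩
      · rw [he'] at hd
        have h0 : d 0 ∈ idealSub R A I (Δ m) := hmem _ (by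
          have := congrArg g hd
          rwa [map_add, hgf, zero_add, map_zero] at this)
        rw [hs0 _ h0, add_zero, map_eq_zero_iff f hf] at hd
        exact Fin.cases h0 (he _ hd)
      · obtain ⟨i⟩ := nonempty_equiv_of_ker_eq (LinearMap.range e).mkQ
          ((LinearMap.range e').mkQ.comp f) (Submodule.mkQ_surjective _) (by
            intro v
            obtain ⟨v, rfl⟩ := Submodule.mkQ_surjective _ v
            obtain ⟨d, hd⟩ := Submodule.mkQ_surjective _ (j (g v))
            have : v - s d ∈ LinearMap.range f := by
              rw [hfg, LinearMap.mem_ker, map_sub, hs, sub_eq_zero, LinearEquiv.eq_symm_apply]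
              exact hd.symm
            obtain ⟨x, hx⟩ := this
            refine ⟨x, ?_⟩
            change Submodule.Quotient.mk _ = Submodule.Quotient.mk _
            rw [hx, Submodule.Quotient.eq]
            refine ⟨Fin.cons (-d) 0, ?_⟩
            rw [he']
            have : (fun i : Fin r => (Fin.cons (-d) 0 : Fin (r + 1) → Δ m) i.succ) = 0 := rfl
            rw [this]
            simp) (by
            ext x
            rw [Submodule.ker_mkQ, LinearMap.ker_comp, Submodule.ker_mkQ, Submodule.mem_comap]
            constructor
            · rintro ⟨d, rfl⟩
              refine ⟨Fin.cons 0 d, ?_⟩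
              rw [he']
              simp
            · rintro ⟨d, hd⟩
              rw [he'] at hd
              have h0 : d 0 ∈ idealSub R A I (Δ m) := hmem _ (by
                have := congrArg g hd
                rwa [map_add, hgf, hgf, zero_add] at this)
              rw [hs0 _ h0, add_zero] at hd
              exact ⟨_, hf hd⟩)
        exact hfilt.of_equiv i
    · refine ⟨r, f.comp e, fun d hd => he d ((map_eq_zero_iff f hf).1 hd), ?_⟩
      have hle : LinearMap.range e ≤ (LinearMap.range (f.comp e)).comap f := by
        rintro _ ⟨d, rfl⟩
        exact ⟨d, rfl⟩
      have hle' : LinearMap.range (f.comp e) ≤ LinearMap.ker g := by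
        rintro _ ⟨d, rfl⟩
        exact hgf _
      refine .ext (Submodule.mapQ _ _ f hle) ((LinearMap.range (f.comp e)).liftQ g hle')
        ?_ ?_ ?_ hfilt ⟨m, ⟨hm, hml⟩, j⟩
      · rw [← LinearMap.ker_eq_bot, LinearMap.ker_eq_bot']
        intro x hx
        obtain ⟨x, rfl⟩ := Submodule.mkQ_surjective _ x
        obtain ⟨d, hd⟩ := (Submodule.Quotient.mk_eq_zero _).1 hx
        exact (Submodule.Quotient.mk_eq_zero _).2 ⟨d, hf hd⟩
      · intro y
        obtain ⟨x, rfl⟩ := hg y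
        exact ⟨Submodule.Quotient.mk x, rfl⟩
      · ext v
        obtain ⟨v, rfl⟩ := Submodule.mkQ_surjective _ v
        constructor
        · rintro ⟨x, hx⟩
          obtain ⟨x, rfl⟩ := Submodule.mkQ_surjective _ x
          rw [← hx]
          exact hgf x
        · intro hv
          have hv' : v ∈ LinearMap.ker g := hv
          rw [← hfg] at hv'
          obtain ⟨x, rfl⟩ := hv'
          exact ⟨Submodule.Quotient.mk x, rfl⟩

end SplitQH

end Homs

section Fibers

variable {R : Type} [CommRing R] {A : Type} [Ring A] [Algebra R A]
  {Λ : Type}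
  {Δ : Λ → Type} [∀ l, AddCommGroup (Δ l)] [∀ l, Module R (Δ l)]
  [∀ l, Module A (Δ l)] [∀ l, IsScalarTower R A (Δ l)]

/-- The fibre of `D ⊗ U` is a finite power of the fibre of `D`. -/
lemma exists_fiber_tensor_equiv (D : Type) [AddCommGroup D] [Module R D] [Module A D]
    [IsScalarTower R A D] (U : Type) [AddCommGroup U] [Module R U] [Module.Finite R U]
    [Module.Projective R U] (I : Ideal R) (hI : I.IsMaximal) :
    ∃ r : ℕ, Nonempty ((Fin r → Fiber R A I D) ≃ₗ[A] Fiber R A I (D ⊗[R] U)) := by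
  obtain ⟨r, u, c, hu, hc⟩ := exists_dual_basis_mod U I hI
  let ψ : Fin r → (D ⊗[R] U) →ₗ[A] D := fun i =>
    (TensorProduct.AlgebraTensorModule.rid R A D).toLinearMap.comp
      (TensorProduct.AlgebraTensorModule.lTensor A D (c i))
  have hψ : ∀ i d x, ψ i (d ⊗ₜ x) = c i x • d := fun i d x => by simp [ψ]
  let φ : (D ⊗[R] U) →ₗ[A] (Fin r → Fiber R A I D) :=
    LinearMap.pi fun i => (idealSub R A I D).mkQ.comp (ψ i)
  have hz : ∀ z, z - ∑ i, ψ i z ⊗ₜ u i ∈ I • (⊤ : Submodule R (D ⊗[R] U)) := by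
    intro z
    induction z with
    | zero => simp
    | add x y hx hy =>
      convert add_mem hx hy using 1
      simp only [map_add, TensorProduct.add_tmul, Finset.sum_add_distrib]
      abel
    | tmul d x =>
      convert map_mem_smul_top (TensorProduct.mk R D U d) (hu x) using 1
      simp [hψ, TensorProduct.tmul_sum, TensorProduct.tmul_sub, TensorProduct.smul_tmul]
  refine ⟨r, nonempty_equiv_of_ker_eq φ (idealSub R A I (D ⊗[R] U)).mkQ ?_
    (Submodule.mkQ_surjective _) ?_⟩
  · intro y
    choose d hd using fun i => Submodule.mkQ_surjective _ (y i)
    refine ⟨∑ j, d j ⊗ₜ u j, ?_⟩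
    ext i
    rw [← hd i]
    refine (Submodule.Quotient.eq _).2 ?_
    rw [mem_idealSub_iff, map_sum]
    have : ∑ j, ψ i (d j ⊗ₜ u j) - d i =
        ∑ j, (c i (u j) - (if i = j then 1 else 0)) • d j := by
      simp [hψ, sub_smul, Finset.sum_sub_distrib]
    rw [this]
    exact Submodule.sum_mem _ fun j _ => Submodule.smul_mem_smul (hc i j) trivial
  · rw [Submodule.ker_mkQ]
    ext z
    constructor
    · intro h0
      rw [mem_idealSub_iff, ← sub_add_cancel z (∑ i, ψ i z ⊗ₜ u i)]
      refine add_mem (hz z) (Submodule.sum_mem _ fun i _ => ?_)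
      have : ψ i z ∈ idealSub R A I D :=
        (Submodule.Quotient.mk_eq_zero _).1 (congrFun h0 i)
      exact map_mem_smul_top ((TensorProduct.mk R D U).flip (u i)) (mem_idealSub_iff.1 this)
    · intro hz
      ext i
      exact (Submodule.Quotient.mk_eq_zero _).2
        (map_mem_idealSub ((ψ i).restrictScalars R) hz)

lemma Filt.fiber_of_tensorFactor {I : Ideal R} (hI : I.IsMaximal) {S : Set Λ} {M : Type}
    [AddCommGroup M] [Module R M] [Module A M] [IsScalarTower R A M]
    (hM : Nonempty (TensorFactor R A Λ Δ S M)) :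
    Filt (fun Y [AddCommGroup Y] [Module A Y] =>
      Nonempty (PlainFactor A Λ (fun l => Fiber R A I (Δ l)) S Y)) (Fiber R A I M) := by
  obtain ⟨l, hl, U, _, _, e⟩ := hM
  obtain ⟨r, ⟨i⟩⟩ := exists_fiber_tensor_equiv (R := R) (A := A) (Δ l) U I hI
  obtain ⟨j⟩ := nonempty_equiv_of_ker_eq
    ((idealSub R A I (Δ l ⊗[R] U)).mkQ.comp e.toLinearMap) (idealSub R A I M).mkQ
    ((Submodule.mkQ_surjective _).comp e.surjective) (Submodule.mkQ_surjective _) (by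
      rw [LinearMap.ker_comp, Submodule.ker_mkQ, Submodule.ker_mkQ]
      ext x
      constructor
      · intro hx
        simpa using map_mem_idealSub (A := A) (e.symm.toLinearMap.restrictScalars R)
          (show e x ∈ idealSub R A I _ from hx)
      · exact fun hx => map_mem_idealSub (A := A) (e.toLinearMap.restrictScalars R) hx)
  exact ((Filt.pi (Fin r) _ ⟨⟨l, hl, LinearEquiv.refl A _⟩⟩).of_equiv i).of_equiv j

lemma TensorFactor.projective [∀ l, Module.Projective R (Δ l)] {S : Set Λ} {M : Type}
    [AddCommGroup M] [Module R M] [Module A M] [IsScalarTower R A M]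
    (t : TensorFactor R A Λ Δ S M) : Module.Projective R M := by
  have := t.proj
  exact Module.Projective.of_equiv (t.iso.restrictScalars R).symm

lemma Filt.projective_and_fiber [∀ l, Module.Projective R (Δ l)] {S : Set Λ} {M : Type}
    [AddCommGroup M] [Module A M]
    (hM : Filt (fun Y [AddCommGroup Y] [Module A Y] => Nonempty (TensorFactor R A Λ Δ S Y)) M) :
    ∀ [Module R M] [IsScalarTower R A M], Module.Projective R M ∧
      ∀ I : Ideal R, I.IsMaximal → Filt (fun Y [AddCommGroup Y] [Module A Y] =>
        Nonempty (PlainFactor A Λ (fun l => Fiber R A I (Δ l)) S Y)) (Fiber R A I M) := by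
  induction hM with
  | @zero M _ _ _ =>
    intro _ _
    refine ⟨inferInstance, fun I _ => ?_⟩
    have := (Submodule.mkQ_surjective (idealSub R A I M)).subsingleton
    exact .zero _
  | @ext M' M M'' _ _ _ _ _ _ f p hf hp hfp h' h'' ih =>
    intro _ _
    let _ : Module R M' := Module.compHom M' (algebraMap R A)
    let _ : Module R M'' := Module.compHom M'' (algebraMap R A)
    have : IsScalarTower R A M' := IsScalarTower.of_algebraMap_smul fun _ _ => rfl
    have : IsScalarTower R A M'' := IsScalarTower.of_algebraMap_smul fun _ _ => rfl
    obtain ⟨hproj', hfib'⟩ := ih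
    have hproj'' : Module.Projective R M'' := h''.some.projective
    obtain ⟨s, hs⟩ := Module.projective_lifting_property (p.restrictScalars R) LinearMap.id hp
    have hs : ∀ y, p (s y) = y := LinearMap.congr_fun hs
    have hpf : ∀ x, p (f x) = 0 := fun x => by
      have : f x ∈ LinearMap.ker p := hfp ▸ ⟨x, rfl⟩
      exact this
    have hmem : ∀ m, m - s (p m) ∈ LinearMap.range (f.restrictScalars R) := fun m => by
      have : m - s (p m) ∈ LinearMap.range f := by
        rw [hfp, LinearMap.mem_ker, map_sub, hs, sub_self]
      exact this
    let e := LinearEquiv.ofInjective (f.restrictScalars R) hf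
    let ρ : M →ₗ[R] M' := e.symm.toLinearMap.comp
      ((LinearMap.id - s.comp (p.restrictScalars R)).codRestrict _ hmem)
    have hρ : ∀ m, f (ρ m) = m - s (p m) := fun m =>
      congrArg Subtype.val (e.apply_symm_apply ⟨_, hmem m⟩)
    have hρf : ∀ x, ρ (f x) = x := fun x => hf (by rw [hρ, hpf, map_zero, sub_zero])
    refine ⟨Module.Projective.of_split (ρ.prod (p.restrictScalars R))
      ((f.restrictScalars R).coprod s) (by ext m; simp [hρ]), fun I hI => ?_⟩
    let pI : Fiber R A I M →ₗ[A] Fiber R A I M'' :=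
      Submodule.mapQ _ _ p fun x hx => map_mem_idealSub (p.restrictScalars R) hx
    let fI : Fiber R A I M' →ₗ[A] Fiber R A I M :=
      Submodule.mapQ _ _ f fun x hx => map_mem_idealSub (f.restrictScalars R) hx
    have hfI : Function.Injective fI := by
      rw [← LinearMap.ker_eq_bot, LinearMap.ker_eq_bot']
      intro x hx
      obtain ⟨x, rfl⟩ := Submodule.mkQ_surjective _ x
      have h1 : f x ∈ idealSub R A I M := (Submodule.Quotient.mk_eq_zero _).1 hx
      refine (Submodule.Quotient.mk_eq_zero _).2 ?_
      have := map_mem_idealSub ρ h1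
      rwa [hρf] at this
    have hrange : LinearMap.range fI = LinearMap.ker pI := by
      ext v
      obtain ⟨v, rfl⟩ := Submodule.mkQ_surjective _ v
      constructor
      · rintro ⟨x, hx⟩
        obtain ⟨x, rfl⟩ := Submodule.mkQ_surjective _ x
        rw [← hx]
        change Submodule.Quotient.mk (p (f x)) = 0
        rw [hpf, Submodule.Quotient.mk_zero]
      · intro hv
        have h1 : p v ∈ idealSub R A I M'' := (Submodule.Quotient.mk_eq_zero _).1 hv
        refine ⟨Submodule.Quotient.mk (ρ v), (Submodule.Quotient.eq _).2 ?_⟩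
        rw [hρ, sub_sub_cancel_left]
        exact neg_mem (map_mem_idealSub s h1)
    refine (Filt.fiber_of_tensorFactor hI h'').of_ker pI (fun y => ?_) ?_
    · obtain ⟨y, rfl⟩ := Submodule.mkQ_surjective _ y
      obtain ⟨x, rfl⟩ := hp y
      exact ⟨Submodule.Quotient.mk x, rfl⟩
    · rw [← hrange]
      exact (hfib' I hI).of_equiv (LinearEquiv.ofInjective fI hfI)

end Fibers

section Converse

variable {R : Type} [CommRing R] [IsNoetherianRing R] {A : Type} [Ring A] [Algebra R A]
  {Λ : Type} [PartialOrder Λ]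
  {Δ : Λ → Type} [∀ l, AddCommGroup (Δ l)] [∀ l, Module R (Δ l)]
  [∀ l, Module A (Δ l)] [∀ l, IsScalarTower R A (Δ l)]

lemma mkQ_comp_eq_zero_iff {P : Type} [AddCommGroup P] [Module A P] [Module.Projective A P]
    {M : Type} [AddCommGroup M] [Module R M] [Module A M] [IsScalarTower R A M] {I : Ideal R}
    (f : P →ₗ[A] M) (hf : (idealSub R A I M).mkQ.comp f = 0) :
    f ∈ I • (⊤ : Submodule R (P →ₗ[A] M)) :=
  hom_mem_smul_top I f fun p => mem_idealSub_iff.1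
    ((Submodule.Quotient.mk_eq_zero _).1 (LinearMap.congr_fun hf p))

/-- Hom from a finite projective module vanishes if it does so on all closed fibres. -/
lemma hom_eq_zero_of_fibers {P : Type} [AddCommGroup P] [Module A P] [Module.Projective A P]
    [Module.Finite A P] {M : Type} [AddCommGroup M] [Module R M] [Module A M]
    [IsScalarTower R A M] [Module.Finite R M] [Module.Projective R M]
    (h : ∀ I : Ideal R, I.IsMaximal → ∀ f : P →ₗ[A] Fiber R A I M, f = 0) (f : P →ₗ[A] M) :
    f = 0 := by
  have := (hom_finite_projective (R := R) (A := A) P M).1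
  have := subsingleton_of_smul_top_eq_top (R := R) (D := P →ₗ[A] M) fun I hI f =>
    mkQ_comp_eq_zero_iff f (h I hI _)
  exact Subsingleton.elim _ _

/-- A map between finite projective `R`-modules which is injective on all closed fibres is
injective, with projective cokernel. -/
lemma injective_and_projective_of_fibers {N M : Type} [AddCommGroup N] [Module R N] [Module A N]
    [IsScalarTower R A N] [Module.Finite R N] [Module.Projective R N] [AddCommGroup M]
    [Module R M] [Module A M] [IsScalarTower R A M] [Module.Projective R M] (t : N →ₗ[A] M)
    (h : ∀ I : Ideal R, I.IsMaximal → ∀ z, t z ∈ I • (⊤ : Submodule R M) →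
      z ∈ I • (⊤ : Submodule R N)) :
    Function.Injective t ∧ Module.Projective R (M ⧸ LinearMap.range t) := by
  obtain ⟨s, hs⟩ := exists_retraction_of_fibers (t.restrictScalars R) h
  have hs : ∀ z, s (t z) = z := LinearMap.congr_fun hs
  refine ⟨Function.LeftInverse.injective hs, ?_⟩
  let π : M →ₗ[R] M ⧸ LinearMap.range t := (LinearMap.range t).mkQ.restrictScalars R
  have hπ : ∀ m, π (m - t (s m)) = π m := fun m =>
    (Submodule.Quotient.eq _).2 ⟨-s m, by rw [map_neg]; abel⟩
  let ρ : M →ₗ[R] LinearMap.ker s :=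
    (LinearMap.id - (t.restrictScalars R).comp s).codRestrict _ fun m => by
      change s (m - t (s m)) = 0
      rw [map_sub, hs, sub_self]
  have : Module.Projective R (LinearMap.ker s) :=
    Module.Projective.of_split (LinearMap.ker s).subtype ρ (by
      ext x
      change x.1 - t (s x.1) = x.1
      rw [x.2, map_zero, sub_zero])
  refine Module.Projective.of_equiv
    (LinearEquiv.ofBijective (π.comp (LinearMap.ker s).subtype) ⟨?_, fun y => ?_⟩)
  · rw [← LinearMap.ker_eq_bot, LinearMap.ker_eq_bot']
    intro x hx
    obtain ⟨z, hz⟩ : x.1 ∈ LinearMap.range t := (Submodule.Quotient.mk_eq_zero _).1 hx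
    have hz0 : z = 0 := by rw [← hs z, hz, x.2]
    exact Subtype.ext (by rw [← hz, hz0, map_zero]; rfl)
  · obtain ⟨m, rfl⟩ := Submodule.mkQ_surjective _ y
    exact ⟨ρ m, hπ m⟩

omit [IsNoetherianRing R] in
lemma mkQ_mem_idealSub_quotient_iff {I : Ideal R} {M : Type} [AddCommGroup M] [Module R M]
    [Module A M] [IsScalarTower R A M] {K : Submodule A M} {m : M} :
    K.mkQ m ∈ idealSub R A I (M ⧸ K) ↔ ∃ k ∈ K, k - m ∈ idealSub R A I M := by
  constructor
  · intro hm
    have hmap : Submodule.map (K.mkQ.restrictScalars R) (I • (⊤ : Submodule R M)) = I • ⊤ := by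
      have : LinearMap.range (K.mkQ.restrictScalars R) = ⊤ :=
        LinearMap.range_eq_top.2 (Submodule.mkQ_surjective K)
      rw [Submodule.map_smul'', Submodule.map_top, this]
    rw [mem_idealSub_iff, ← hmap] at hm
    obtain ⟨y, hy, hym⟩ := hm
    have hk : y - m ∈ K := (Submodule.Quotient.eq K).1 hym
    refine ⟨-(y - m), neg_mem hk, ?_⟩
    rw [show -(y - m) - m = -y by abel]
    exact neg_mem (mem_idealSub_iff.2 hy)
  · rintro ⟨k, hk, hkm⟩
    have h2 := map_mem_idealSub (A := A) (K.mkQ.restrictScalars R) hkm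
    have h3 : K.mkQ k = 0 := (Submodule.Quotient.mk_eq_zero _).2 hk
    rw [LinearMap.restrictScalars_apply, map_sub, h3, zero_sub] at h2
    exact neg_mem_iff.1 h2

variable (R A) in
/-- The evaluation map `D ⊗ Hom(D, M) → M`. -/
def evalHom (D M : Type) [AddCommGroup D] [Module R D] [Module A D] [IsScalarTower R A D]
    [AddCommGroup M] [Module R M] [Module A M] [IsScalarTower R A M] :
    (D ⊗[R] (D →ₗ[A] M)) →ₗ[A] M :=
  TensorProduct.AlgebraTensorModule.lift
    { toFun := fun d =>
        { toFun := fun f => f d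
          map_add' := fun _ _ => rfl
          map_smul' := fun _ _ => rfl }
      map_add' := fun x y => by ext f; exact f.map_add x y
      map_smul' := fun a x => by ext f; exact f.map_smul a x }

omit [IsNoetherianRing R] in
lemma evalHom_tmul {D M : Type} [AddCommGroup D] [Module R D] [Module A D] [IsScalarTower R A D]
    [AddCommGroup M] [Module R M] [Module A M] [IsScalarTower R A M] (d : D) (f : D →ₗ[A] M) :
    evalHom R A D M (d ⊗ₜ f) = f d := rfl

omit [IsNoetherianRing R] in
lemma exists_sub_sum_tmul_mem {D H : Type} [AddCommGroup D] [Module R D] [AddCommGroup H]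
    [Module R H] {I : Ideal R} {r : ℕ} {f : Fin r → H}
    (hf : ∀ g : H, ∃ c : Fin r → R, g - ∑ i, c i • f i ∈ I • (⊤ : Submodule R H))
    (z : D ⊗[R] H) :
    ∃ d : Fin r → D, z - ∑ i, d i ⊗ₜ f i ∈ I • (⊤ : Submodule R (D ⊗[R] H)) := by
  induction z with
  | zero => exact ⟨0, by simp⟩
  | add x y hx hy =>
    obtain ⟨a, ha⟩ := hx
    obtain ⟨b, hb⟩ := hy
    refine ⟨a + b, ?_⟩
    convert add_mem ha hb using 1
    simp only [Pi.add_apply, TensorProduct.add_tmul, Finset.sum_add_distrib]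
    abel
  | tmul d g =>
    obtain ⟨c, hc⟩ := hf g
    refine ⟨fun i => c i • d, ?_⟩
    convert map_mem_smul_top (TensorProduct.mk R D H d) hc using 1
    simp [TensorProduct.tmul_sum, TensorProduct.tmul_sub, TensorProduct.smul_tmul]

namespace SplitQH

variable (h : SplitQH R A Λ Δ)
include h

omit [IsNoetherianRing R] in
lemma hom_delta_ext {l : Λ} {N : Type} [AddCommGroup N] [Module A N] {f g : Δ l →ₗ[A] N}
    (hfg : f.comp (h.epi l) = g.comp (h.epi l)) : f = g := by
  ext x
  obtain ⟨y, rfl⟩ := h.epi_surj l x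
  exact LinearMap.congr_fun hfg y

/-- If homomorphisms `P(l) → M` factor through `Δ(l)`, then `Hom(Δ(l), M) ≃ Hom(P(l), M)`. -/
def homDeltaEquiv (l : Λ) (M : Type) [AddCommGroup M] [Module R M] [Module A M]
    [IsScalarTower R A M]
    (hM : ∀ f : h.P l →ₗ[A] M, ∃ f' : Δ l →ₗ[A] M, f'.comp (h.epi l) = f) :
    (Δ l →ₗ[A] M) ≃ₗ[R] (h.P l →ₗ[A] M) :=
  let E : (Δ l →ₗ[A] M) →ₗ[R] (h.P l →ₗ[A] M) :=
    { toFun := fun f => f.comp (h.epi l)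
      map_add' := fun _ _ => rfl
      map_smul' := fun _ _ => rfl }
  LinearEquiv.ofBijective E ⟨fun _ _ hfg => h.hom_delta_ext hfg, hM⟩

lemma evalHom_fiber {S : Set Λ} {l : Λ} (hl : ∀ m ∈ S, ¬ l < m)
    {M : Type} [AddCommGroup M] [Module R M] [Module A M] [IsScalarTower R A M]
    (hfact : ∀ f : h.P l →ₗ[A] M, ∃ f' : Δ l →ₗ[A] M, f'.comp (h.epi l) = f) {I : Ideal R}
    (hM : Filt (fun Y [AddCommGroup Y] [Module A Y] =>
      Nonempty (PlainFactor A Λ (fun l => Fiber R A I (Δ l)) S Y)) (Fiber R A I M)) :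
    (∀ z, evalHom R A (Δ l) M z ∈ I • (⊤ : Submodule R M) →
      z ∈ I • (⊤ : Submodule R (Δ l ⊗[R] (Δ l →ₗ[A] M)))) ∧
    Filt (fun Y [AddCommGroup Y] [Module A Y] =>
      Nonempty (PlainFactor A Λ (fun l => Fiber R A I (Δ l)) (S \ {l}) Y))
      (Fiber R A I (M ⧸ LinearMap.range (evalHom R A (Δ l) M))) := by
  have hPproj := h.P_proj l
  let q := (idealSub R A I M).mkQ
  have hq0 : ∀ m, q m = 0 ↔ m ∈ idealSub R A I M := fun m => Submodule.Quotient.mk_eq_zero _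
  obtain ⟨r, e, he, hfilt⟩ := h.exists_standard_submodule hl hM (fiber_smul_eq_zero I M)
  -- the components of `e` lift to `M`
  have hlift : ∀ i, ∃ f : Δ l →ₗ[A] M,
      q.comp f = e.comp (LinearMap.single A (fun _ => Δ l) i) := by
    intro i
    obtain ⟨g, hg⟩ := Module.projective_lifting_property q
      ((e.comp (LinearMap.single A (fun _ => Δ l) i)).comp (h.epi l))
      (Submodule.mkQ_surjective _)
    obtain ⟨f, rfl⟩ := hfact g
    exact ⟨f, h.hom_delta_ext hg⟩
  choose f hf using hlift
  have he_sum : ∀ d, e d = q (∑ i, f i (d i)) := by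
    intro d
    conv_lhs => rw [← Finset.univ_sum_single d]
    rw [map_sum, map_sum]
    exact Finset.sum_congr rfl fun i _ => (LinearMap.congr_fun (hf i) (d i)).symm
  -- the lifts span `Hom(Δ(l), M)` modulo `I`
  have hspan : ∀ g : Δ l →ₗ[A] M, ∃ c : Fin r → R,
      g - ∑ i, c i • f i ∈ I • (⊤ : Submodule R (Δ l →ₗ[A] M)) := by
    intro g
    have hgr : ∀ x, q (g (h.epi l x)) ∈ LinearMap.range e := fun x => by
      have := h.hom_P_filt_fiber_eq_zero (l := l)
        (fun m hm hlm => hl m hm.1 (lt_of_le_of_ne hlm fun hh => hm.2 hh.symm)) hfilt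
        ((LinearMap.range e).mkQ.comp (q.comp (g.comp (h.epi l))))
      exact (Submodule.Quotient.mk_eq_zero _).1 (LinearMap.congr_fun this x)
    obtain ⟨p, hp⟩ := Module.projective_lifting_property e.rangeRestrict
      ((q.comp (g.comp (h.epi l))).codRestrict (LinearMap.range e) hgr)
      e.surjective_rangeRestrict
    have hp : ∀ x, e (p x) = q (g (h.epi l x)) := fun x =>
      congrArg Subtype.val (LinearMap.congr_fun hp x)
    choose c hc using fun i : Fin r =>
      h.hom_P_delta_self ((LinearMap.proj (φ := fun _ : Fin r => Δ l) i).comp p)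
    have hc : ∀ i x, p x i = c i • h.epi l x := hc
    let E := h.homDeltaEquiv l M hfact
    have hE : E (g - ∑ i, c i • f i) ∈ I • (⊤ : Submodule R (h.P l →ₗ[A] M)) := by
      refine mkQ_comp_eq_zero_iff _ ?_
      ext x
      change q ((g - ∑ i, c i • f i) (h.epi l x)) = 0
      rw [LinearMap.sub_apply, map_sub, ← hp, he_sum, sub_eq_zero]
      simp [hc, LinearMap.sum_apply]
    exact ⟨c, by simpa using map_mem_smul_top E.symm.toLinearMap hE⟩
  have hq : ∀ (z : Δ l ⊗[R] (Δ l →ₗ[A] M)) (d : Fin r → Δ l),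
      z - ∑ i, d i ⊗ₜ f i ∈ I • (⊤ : Submodule R (Δ l ⊗[R] (Δ l →ₗ[A] M))) →
      q (evalHom R A (Δ l) M z) = e d := by
    intro z d hd
    have h1 := map_mem_idealSub (A := A) ((evalHom R A (Δ l) M).restrictScalars R)
      (mem_idealSub_iff.2 hd)
    rw [he_sum, ← sub_eq_zero, ← map_sub, hq0]
    simpa [evalHom_tmul] using h1
  refine ⟨fun z hzI => ?_, ?_⟩
  · obtain ⟨d, hd⟩ := exists_sub_sum_tmul_mem hspan z
    have hed : e d = 0 := by
      rw [← hq z d hd, hq0]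
      exact mem_idealSub_iff.2 hzI
    rw [← sub_add_cancel z (∑ i, d i ⊗ₜ f i)]
    exact add_mem hd (Submodule.sum_mem _ fun i _ =>
      map_mem_smul_top ((TensorProduct.mk R (Δ l) (Δ l →ₗ[A] M)).flip (f i))
        (mem_idealSub_iff.1 (he d hed i)))
  · obtain ⟨j⟩ := nonempty_equiv_of_ker_eq ((LinearMap.range e).mkQ.comp q)
      ((idealSub R A I (M ⧸ LinearMap.range (evalHom R A (Δ l) M))).mkQ.comp
        (LinearMap.range (evalHom R A (Δ l) M)).mkQ)
      ((Submodule.mkQ_surjective _).comp (Submodule.mkQ_surjective _))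
      ((Submodule.mkQ_surjective _).comp (Submodule.mkQ_surjective _)) (by
        rw [LinearMap.ker_comp, LinearMap.ker_comp, Submodule.ker_mkQ, Submodule.ker_mkQ]
        ext m
        rw [Submodule.mem_comap, Submodule.mem_comap, mkQ_mem_idealSub_quotient_iff]
        constructor
        · rintro ⟨d, hd⟩
          refine ⟨_, ⟨∑ i, d i ⊗ₜ f i, rfl⟩, ?_⟩
          rw [← hq0, map_sub, hq _ d (by simp), hd, sub_self]
        · rintro ⟨_, ⟨z, rfl⟩, hzm⟩
          obtain ⟨d, hd⟩ := exists_sub_sum_tmul_mem hspan z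
          refine ⟨d, ?_⟩
          rw [← hq z d hd, ← sub_eq_zero, ← map_sub, hq0]
          exact hzm)
    exact hfilt.of_equiv j

lemma filt_of_filt_fibers (S : Finset Λ) :
    ∀ (M : Type) [AddCommGroup M] [Module R M] [Module A M] [IsScalarTower R A M]
      [Module.Finite R M] [Module.Projective R M],
      (∀ I : Ideal R, I.IsMaximal → Filt (fun Y [AddCommGroup Y] [Module A Y] =>
        Nonempty (PlainFactor A Λ (fun l => Fiber R A I (Δ l)) (S : Set Λ) Y))
          (Fiber R A I M)) →
      Filt (fun Y [AddCommGroup Y] [Module A Y] =>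
        Nonempty (TensorFactor R A Λ Δ Set.univ Y)) M := by
  classical
  induction S using Finset.strongInduction with
  | H S ih =>
    intro M _ _ _ _ _ _ hM
    rcases S.eq_empty_or_nonempty with rfl | hS
    · have : Subsingleton M := by
        refine subsingleton_of_smul_top_eq_top (R := R) fun I hI x => ?_
        have : Subsingleton (Fiber R A I M) := by
          cases hM I hI with
          | zero => assumption
          | ext f g hf hg hfg h' h'' =>
            obtain ⟨m, hm, -⟩ := h''
            simp at hm
        exact mem_idealSub_iff.1 ((Submodule.Quotient.mk_eq_zero _).1
          (Subsingleton.elim (Submodule.Quotient.mk x : Fiber R A I M) 0))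
      exact .zero M
    obtain ⟨l, hlS, hlmax⟩ := S.exists_maximal hS
    have hl : ∀ m ∈ (S : Set Λ), ¬ l < m := fun m hm hlm =>
      hlm.not_ge (hlmax hm hlm.le)
    have hPproj := h.P_proj
    have hPfin := h.P_fin
    have hDfin := h.deltaFinR l
    have hDproj := h.deltaProjR l
    have hfact : ∀ f : h.P l →ₗ[A] M, ∃ f' : Δ l →ₗ[A] M, f'.comp (h.epi l) = f := fun f =>
      h.exists_factor_epi_of_P l (fun m hm => hom_eq_zero_of_fibers fun I hI =>
        h.hom_P_filt_fiber_eq_zero (fun n hn hmn => hl n hn (hm.trans_le hmn)) (hM I hI)) f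
    obtain ⟨_, _⟩ := hom_finite_projective (R := R) (A := A) (h.P l) M
    have : Module.Finite R (Δ l →ₗ[A] M) := Module.Finite.equiv (h.homDeltaEquiv l M hfact).symm
    have : Module.Projective R (Δ l →ₗ[A] M) :=
      Module.Projective.of_equiv (h.homDeltaEquiv l M hfact).symm
    have hfib := fun I hI => h.evalHom_fiber hl hfact (hM I hI)
    obtain ⟨hinj, _⟩ := injective_and_projective_of_fibers (evalHom R A (Δ l) M)
      fun I hI => (hfib I hI).1
    have : Module.Finite R (M ⧸ LinearMap.range (evalHom R A (Δ l) M)) :=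
      Module.Finite.quotient R _
    have hC := ih (S.erase l) (Finset.erase_ssubset hlS) _ fun I hI => by
      rw [Finset.coe_erase]
      exact (hfib I hI).2
    refine hC.of_ker (LinearMap.range (evalHom R A (Δ l) M)).mkQ (Submodule.mkQ_surjective _) ?_
    rw [Submodule.ker_mkQ]
    refine Filt.of_equiv ?_ (LinearEquiv.ofInjective _ hinj)
    exact .ext (M' := PUnit) 0 LinearMap.id (fun _ _ _ => rfl) Function.surjective_id
      (by simp) (.zero _)
      ⟨⟨l, trivial, ModuleCat.of R (Δ l →ₗ[A] M), ‹_›, ‹_›, LinearEquiv.refl A _⟩⟩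

end SplitQH

end Converse

/-- A finitely generated `A`-module `M` belongs to `F(Δ̃)` if and only if
`M` is projective over `R` and, for every maximal ideal `𝔪` of `R`, the fibre `M(𝔪)` has a
filtration by the fibres `Δ(λ)(𝔪)` of the standard modules (i.e. `M(𝔪) ∈ F(Δ(𝔪))` over
`A(𝔪)`). -/
theorem filtration_iff_fibers_filtered
    (R : Type) [CommRing R] [IsNoetherianRing R]
    (A : Type) [Ring A] [Algebra R A]
    (Λ : Type) [Fintype Λ] [PartialOrder Λ]
    (Δ : Λ → Type) [∀ l, AddCommGroup (Δ l)] [∀ l, Module R (Δ l)]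
    [∀ l, Module A (Δ l)] [∀ l, IsScalarTower R A (Δ l)]
    (h : SplitQH R A Λ Δ)
    (M : Type) [AddCommGroup M] [Module R M] [Module A M] [IsScalarTower R A M]
    [Module.Finite A M] :
    InFilt R A Λ Δ Set.univ M ↔
      (Module.Projective R M ∧
        ∀ 𝔪 : Ideal R, 𝔪.IsMaximal →
          InFiltPlain A Λ (fun l => Fiber R A 𝔪 (Δ l)) Set.univ (Fiber R A 𝔪 M)) := by
  have hfib : ∀ I : Ideal R, Module.Finite A (Fiber R A I M) := fun I =>
    Module.Finite.of_surjective _ (Submodule.mkQ_surjective (idealSub R A I M))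
  have := h.deltaProjR
  have := h.algFin
  have : Module.Finite R M := Module.Finite.trans A M
  simp only [inFilt_iff, inFiltPlain_iff]
  constructor
  · exact fun hM => hM.projective_and_fiber
  · rintro ⟨_, hM⟩
    refine h.filt_of_filt_fibers Finset.univ M ?_
    rwa [Finset.coe_univ]

end
end

section
/- Let (A, {Δ(λ)}) be a split quasi-hereditary algebra over a commutative Noetherian ring R and M ∈ F(Δ̃). If M(𝔪) ≅ Δ(λ)(𝔪) for a fixed λ ∈ Λ and every maximal ideal 𝔪 of R, then M ≅ Δ(λ) ⊗_R F for some invertible R-module F. -/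
open scoped TensorProduct
open CategoryTheory

noncomputable section

section LocalAlgebra

variable {R : Type} [CommRing R]

/-- An element annihilated, locally at every maximal ideal, by a scalar outside of it is zero. -/
lemma eq_zero_of_forall_isMaximal_smul (R : Type) [CommRing R] {N : Type} [AddCommGroup N]
    [Module R N] (z : N)
    (hz : ∀ 𝔪 : Ideal R, 𝔪.IsMaximal → ∃ s, s ∉ 𝔪 ∧ s • z = 0) : z = 0 := by
  by_contra hne
  have hI : LinearMap.ker (LinearMap.toSpanSingleton R N z) ≠ ⊤ := by
    intro h
    have h1 : (1 : R) ∈ LinearMap.ker (LinearMap.toSpanSingleton R N z) := h ▸ Submodule.mem_top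
    exact hne (by simpa using h1)
  obtain ⟨𝔪, hm, hle⟩ := Ideal.exists_le_maximal _ hI
  obtain ⟨s, hs, hsz⟩ := hz 𝔪 hm
  exact hs (hle (by simpa using hsz))

/-- Nakayama's lemma at a maximal ideal, for submodules. -/
lemma exists_notMem_smul_mem {N : Type} [AddCommGroup N] [Module R N] {𝔪 : Ideal R}
    (hm : 𝔪.IsMaximal) {N₁ : Submodule R N} (hfg : N₁.FG) {N₀ : Submodule R N}
    (hle : N₁ ≤ N₀ ⊔ 𝔪 • N₁) : ∃ s, s ∉ 𝔪 ∧ ∀ x ∈ N₁, s • x ∈ N₀ := by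
  have hmap : N₁.map N₀.mkQ ≤ 𝔪 • N₁.map N₀.mkQ := by
    have := Submodule.map_mono (f := N₀.mkQ) hle
    rwa [Submodule.map_sup, Submodule.map_smul'', Submodule.mkQ_map_self, bot_sup_eq] at this
  obtain ⟨s, hs, h0⟩ := Submodule.exists_sub_one_mem_and_smul_eq_zero_of_fg_of_le_smul 𝔪 _
    (hfg.map N₀.mkQ) hmap
  refine ⟨s, fun hsm => hm.ne_top ((Ideal.eq_top_iff_one 𝔪).2 ?_), fun x hx => ?_⟩
  · simpa using 𝔪.sub_mem hsm hs
  · have := h0 (N₀.mkQ x) (Submodule.mem_map_of_mem hx)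
    rwa [← map_smul, Submodule.mkQ_apply, Submodule.Quotient.mk_eq_zero] at this

lemma exists_notMem_smul_eq_zero {N : Type} [AddCommGroup N] [Module R N] {𝔪 : Ideal R}
    (hm : 𝔪.IsMaximal) {N₁ : Submodule R N} (hfg : N₁.FG)
    (hle : N₁ ≤ 𝔪 • N₁) : ∃ s, s ∉ 𝔪 ∧ ∀ x ∈ N₁, s • x = 0 := by
  simpa using exists_notMem_smul_mem hm hfg (N₀ := ⊥) (by simpa using hle)

/-- A linear map onto a projective module with projective kernel has projective source. -/
lemma projective_of_surjective_of_ker {N Q K : Type} [AddCommGroup N] [Module R N]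
    [AddCommGroup Q] [Module R Q] [AddCommGroup K] [Module R K] [Module.Projective R Q]
    [Module.Projective R K] (π : N →ₗ[R] Q) (hπ : Function.Surjective π)
    (e : K ≃ₗ[R] LinearMap.ker π) : Module.Projective R N := by
  obtain ⟨σ, hσ⟩ := Module.projective_lifting_property π LinearMap.id hπ
  have hσ' : ∀ q, π (σ q) = q := fun q => LinearMap.congr_fun hσ q
  let j : N →ₗ[R] LinearMap.ker π :=
    (LinearMap.id - σ ∘ₗ π).codRestrict _ (fun x => by simp [hσ'])
  refine Module.Projective.of_split (M := K × Q) ((e.symm.toLinearMap ∘ₗ j).prod π)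
    (((LinearMap.ker π).subtype ∘ₗ e.toLinearMap).coprod σ) ?_
  ext x
  simp [j]

/-- A map between finite modules with projective target which is surjective modulo `𝔪` and
injective modulo `𝔪` is injective locally at `𝔪`. -/
lemma exists_notMem_smul_ker_eq_zero [IsNoetherianRing R] {D M : Type} [AddCommGroup D]
    [Module R D] [AddCommGroup M] [Module R M] [Module.Finite R D] [Module.Finite R M]
    [Module.Projective R M] {𝔪 : Ideal R} (hm : 𝔪.IsMaximal) (g : D →ₗ[R] M)
    (hsurj : ∀ y, ∃ x, y - g x ∈ 𝔪 • (⊤ : Submodule R M))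
    (hinj : ∀ x, g x ∈ 𝔪 • (⊤ : Submodule R M) → x ∈ 𝔪 • (⊤ : Submodule R D)) :
    ∃ t, t ∉ 𝔪 ∧ ∀ x, g x = 0 → t • x = 0 := by
  obtain ⟨s, hs, hsM⟩ := exists_notMem_smul_mem hm (N₁ := (⊤ : Submodule R M))
    Module.Finite.fg_top (N₀ := LinearMap.range g) (by
      intro y _
      obtain ⟨x, hx⟩ := hsurj y
      rw [← add_sub_cancel (g x) y]
      exact Submodule.add_mem_sup ⟨x, rfl⟩ hx)
  obtain ⟨θ, hθ⟩ := Module.projective_lifting_property g.rangeRestrict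
    ((s • LinearMap.id (R := R) (M := M)).codRestrict (LinearMap.range g)
      (fun y => by simpa using hsM y trivial)) g.surjective_rangeRestrict
  have hθ' : ∀ y, g (θ y) = s • y := fun y => congrArg Subtype.val (LinearMap.congr_fun hθ y)
  let q : D →ₗ[R] D := s • LinearMap.id - θ ∘ₗ g
  have hq : ∀ x, q x ∈ LinearMap.ker g := fun x => by simp [q, hθ']
  have hsx : ∀ x ∈ LinearMap.ker g, s • x ∈ 𝔪 • LinearMap.ker g := by
    intro x hx
    have hx0 : g x = 0 := hx
    have h1 : q x = s • x := by simp [q, hx0]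
    have h2 : x ∈ 𝔪 • (⊤ : Submodule R D) := hinj x (by rw [hx0]; exact zero_mem _)
    have h3 : q x ∈ (𝔪 • (⊤ : Submodule R D)).map q := Submodule.mem_map_of_mem h2
    rw [Submodule.map_smul''] at h3
    rw [← h1]
    refine Submodule.smul_mono le_rfl ?_ h3
    rintro _ ⟨y, -, rfl⟩
    exact hq y
  have hle : LinearMap.ker g ≤ 𝔪 • LinearMap.ker g := by
    intro x hx
    obtain ⟨y, i, hi, hyi⟩ := hm.exists_inv hs
    have : x = y • s • x + i • x := by
      rw [smul_smul, ← add_smul, hyi, one_smul]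
    rw [this]
    exact add_mem (Submodule.smul_mem _ _ (hsx x hx)) (Submodule.smul_mem_smul hi hx)
  obtain ⟨t, ht, h0⟩ := exists_notMem_smul_eq_zero hm (IsNoetherian.noetherian _) hle
  exact ⟨t, ht, fun x hx => h0 x hx⟩

/-- A module which is locally at every maximal ideal generated by an element with trivial
annihilator is invertible. -/
lemma exists_tensor_equiv_of_locally_generated {F : Type} [AddCommGroup F] [Module R F]
    (hF : ∀ 𝔪 : Ideal R, 𝔪.IsMaximal → ∃ g : F, ∃ s, s ∉ 𝔪 ∧ (∀ f : F, ∃ r : R, s • f = r • g) ∧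
      ∃ t, t ∉ 𝔪 ∧ ∀ r : R, r • g = 0 → t * r = 0) :
    Nonempty ((F ⊗[R] Module.Dual R F) ≃ₗ[R] R) := by
  have hsurj : Function.Surjective (contractLeft R F) := by
    rw [← LinearMap.range_eq_top]
    by_contra hne
    obtain ⟨𝔪, hm, hle⟩ := Ideal.exists_le_maximal _ hne
    obtain ⟨g, s, hs, hgen, t, ht, hann⟩ := hF 𝔪 hm
    choose c hc using hgen
    have key : ∀ a b : R, a • g = b • g → t * a = t * b := fun a b hab => by
      rw [← sub_eq_zero, ← mul_sub]
      exact hann _ (by rw [sub_smul, hab, sub_self])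
    let φ : Module.Dual R F :=
      { toFun := fun f => t * c f
        map_add' := fun f f' => by
          rw [← mul_add]
          exact key _ _ (by rw [add_smul, ← hc, ← hc, ← hc, smul_add])
        map_smul' := fun r f => by
          have : t * c (r • f) = t * (r * c f) :=
            key _ _ (by rw [mul_smul, ← hc, ← hc, smul_comm])
          simp only [this, RingHom.id_apply, smul_eq_mul]
          ring }
    have hφ : φ g = t * s := key _ _ (hc g).symm
    have hmem : t * s ∈ 𝔪 := hle ⟨φ ⊗ₜ g, by rw [contractLeft_apply, hφ]⟩
    exact (hm.isPrime.mem_or_mem hmem).elim ht hs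
  have hinj : Function.Injective (contractLeft R F) := by
    rw [injective_iff_map_eq_zero]
    intro z hz
    refine eq_zero_of_forall_isMaximal_smul R z fun 𝔪 hm => ?_
    obtain ⟨g, s, hs, hgen, -⟩ := hF 𝔪 hm
    have hrep : ∀ w : Module.Dual R F ⊗[R] F, ∃ φ : Module.Dual R F, s • w = φ ⊗ₜ g := by
      intro w
      induction w with
      | zero => exact ⟨0, by simp⟩
      | tmul φ f =>
        obtain ⟨r, hr⟩ := hgen f
        exact ⟨r • φ, by rw [← TensorProduct.tmul_smul, hr, TensorProduct.smul_tmul]⟩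
      | add x y hx hy =>
        obtain ⟨φ, hφ⟩ := hx
        obtain ⟨ψ, hψ⟩ := hy
        exact ⟨φ + ψ, by rw [smul_add, hφ, hψ, TensorProduct.add_tmul]⟩
    obtain ⟨φ, hφ⟩ := hrep z
    have hφg : φ g = 0 := by
      rw [← contractLeft_apply, ← hφ, map_smul, hz, smul_zero]
    have hsφ : s • φ = 0 := by
      ext f
      obtain ⟨r, hr⟩ := hgen f
      rw [LinearMap.smul_apply, ← map_smul, hr, map_smul, hφg, smul_zero, LinearMap.zero_apply]
    refine ⟨s * s, fun h => (hm.isPrime.mem_or_mem h).elim hs hs, ?_⟩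
    rw [mul_smul, hφ, TensorProduct.smul_tmul', hsφ, TensorProduct.zero_tmul]
  exact ⟨TensorProduct.comm R _ _ ≪≫ₗ LinearEquiv.ofBijective _ ⟨hinj, hsurj⟩⟩

/-- A finite module equal to `𝔪` times itself for all maximal ideals `𝔪` vanishes. -/
lemma eq_zero_of_forall_isMaximal_smul_top {N : Type} [AddCommGroup N] [Module R N]
    [Module.Finite R N] (hN : ∀ 𝔪 : Ideal R, 𝔪.IsMaximal → 𝔪 • (⊤ : Submodule R N) = ⊤)
    (z : N) : z = 0 := by
  refine eq_zero_of_forall_isMaximal_smul R z fun 𝔪 hm => ?_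
  obtain ⟨s, hs, h0⟩ := exists_notMem_smul_eq_zero hm (N₁ := (⊤ : Submodule R N))
    Module.Finite.fg_top (hN 𝔪 hm).ge
  exact ⟨s, hs, h0 z trivial⟩

end LocalAlgebra

section Evaluation

variable {R : Type} [CommRing R] {A : Type} [Ring A] [Algebra R A]

/-- The evaluation map `D ⊗_R Hom_A(D, M) → M`. -/
def evalTensor (R : Type) [CommRing R] (A : Type) [Ring A] [Algebra R A] (D M : Type)
    [AddCommGroup D] [Module R D] [Module A D] [IsScalarTower R A D] [AddCommGroup M]
    [Module R M] [Module A M] [IsScalarTower R A M] : D ⊗[R] (D →ₗ[A] M) →ₗ[A] M :=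
  TensorProduct.AlgebraTensorModule.lift
    { toFun := fun d =>
        { toFun := fun f => f d
          map_add' := fun _ _ => rfl
          map_smul' := fun _ _ => rfl }
      map_add' := fun x y => by ext f; simp
      map_smul' := fun a x => by ext f; simp }

@[simp] lemma evalTensor_tmul {D M : Type} [AddCommGroup D] [Module R D] [Module A D]
    [IsScalarTower R A D] [AddCommGroup M] [Module R M] [Module A M] [IsScalarTower R A M]
    (d : D) (f : D →ₗ[A] M) : evalTensor R A D M (d ⊗ₜ f) = f d := rfl

/-- If every map `P → M` factors through the surjection `p : P → D`, then a map `D → M` with image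
in `I M` lies in `I Hom_A(D, M)`. -/
lemma mem_smul_top_of_forall_mem {D M P : Type} [AddCommGroup D] [Module A D] [AddCommGroup M]
    [Module R M] [Module A M] [IsScalarTower R A M] [AddCommGroup P] [Module A P]
    [Module.Projective A P] {I : Ideal R} (hI : I.FG) (p : P →ₗ[A] D)
    (hp : Function.Surjective p) (hM : ∀ f : P →ₗ[A] M, ∃ f' : D →ₗ[A] M, f = f' ∘ₗ p)
    (u : D →ₗ[A] M) (hu : ∀ x, u x ∈ I • (⊤ : Submodule R M)) :
    u ∈ I • (⊤ : Submodule R (D →ₗ[A] M)) := by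
  obtain ⟨n, a, ha⟩ := Submodule.fg_iff_exists_fin_generating_family.1 hI
  have haI : ∀ j, a j ∈ I := fun j => ha ▸ Submodule.subset_span ⟨j, rfl⟩
  let T : (Fin n → M) →ₗ[A] M :=
    { toFun := fun y => ∑ j, a j • y j
      map_add' := fun y z => by simp [smul_add, Finset.sum_add_distrib]
      map_smul' := fun b y => by
        simp only [Pi.smul_apply, RingHom.id_apply, Finset.smul_sum]
        exact Finset.sum_congr rfl fun j _ => smul_comm _ _ _ }
  have hT : ∀ y, T y = ∑ j, a j • y j := fun _ => rfl
  have hrange : ∀ x ∈ I • (⊤ : Submodule R M), x ∈ LinearMap.range T := by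
    intro x hx
    induction hx using Submodule.smul_induction_on' with
    | smul r hr m _ =>
      rw [← ha] at hr
      obtain ⟨c, rfl⟩ := (Submodule.mem_span_range_iff_exists_fun R).1 hr
      refine ⟨fun j => c j • m, ?_⟩
      rw [hT, Finset.sum_smul]
      exact Finset.sum_congr rfl fun j _ => by rw [smul_smul, smul_eq_mul, mul_comm]
    | add x _ y _ hx hy => exact add_mem hx hy
  obtain ⟨v, hv⟩ := Module.projective_lifting_property T.rangeRestrict
    ((u ∘ₗ p).codRestrict (LinearMap.range T) fun x => hrange _ (hu _)) T.surjective_rangeRestrict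
  have hv' : ∀ x, T (v x) = u (p x) := fun x => congrArg Subtype.val (LinearMap.congr_fun hv x)
  choose w hw using fun j => hM ((LinearMap.proj j : (Fin n → M) →ₗ[A] M) ∘ₗ v)
  have hsum : u = ∑ j, a j • w j := by
    ext d
    obtain ⟨x, rfl⟩ := hp d
    rw [← hv', hT, LinearMap.sum_apply]
    exact Finset.sum_congr rfl fun j _ => by
      rw [LinearMap.smul_apply]
      exact congrArg (a j • ·) (LinearMap.congr_fun (hw j) x)
  rw [hsum]
  exact sum_mem fun j _ => Submodule.smul_mem_smul (haI j) trivial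

/-- If `P → D` is a projective cover-like surjection through which all maps from `P` to `D` and `M`
factor, and `End_A(D) = R`, then a module `M` with the same fibres as `D` is `D ⊗_R F` with `F`
invertible. -/
lemma exists_invertible_of_fibers {D M P : Type} [AddCommGroup D] [Module R D] [Module A D]
    [IsScalarTower R A D] [AddCommGroup M] [Module R M] [Module A M] [IsScalarTower R A M]
    [AddCommGroup P] [Module A P] [Module.Projective A P]
    [IsNoetherianRing R] [Module.Finite R D] [Module.Finite R M]
    [Module.Projective R M] (p : P →ₗ[A] D) (hp : Function.Surjective p)
    (hD : ∀ f : P →ₗ[A] D, ∃ r : R, f = r • p)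
    (hann : ∀ r : R, (∀ x : D, r • x = 0) → r = 0)
    (hM : ∀ f : P →ₗ[A] M, ∃ f' : D →ₗ[A] M, f = f' ∘ₗ p)
    (hfib : ∀ 𝔪 : Ideal R, 𝔪.IsMaximal →
      Nonempty ((Fiber R A 𝔪 M) ≃ₗ[A] (Fiber R A 𝔪 D))) :
    Nonempty (((D →ₗ[A] M) ⊗[R] Module.Dual R (D →ₗ[A] M)) ≃ₗ[R] R) ∧
      Nonempty (M ≃ₗ[A] D ⊗[R] (D →ₗ[A] M)) := by
  have hfinF : Module.Finite R (D →ₗ[A] M) := by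
    let ι : (D →ₗ[A] M) →ₗ[R] (D →ₗ[R] M) :=
      { toFun := fun f => f.restrictScalars R
        map_add' := fun _ _ => rfl
        map_smul' := fun _ _ => rfl }
    have : IsNoetherian R (D →ₗ[A] M) :=
      isNoetherian_of_injective ι (LinearMap.restrictScalars_injective R)
    infer_instance
  have hlocal : ∀ 𝔪 : Ideal R, 𝔪.IsMaximal → ∃ g : D →ₗ[A] M,
      (∀ y, ∃ x, y - g x ∈ 𝔪 • (⊤ : Submodule R M)) ∧
      (∃ s, s ∉ 𝔪 ∧ ∀ f : D →ₗ[A] M, ∃ r : R, s • f = r • g) ∧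
      ∃ t, t ∉ 𝔪 ∧ ∀ x, g x = 0 → t • x = 0 := by
    intro 𝔪 hm
    obtain ⟨φ⟩ := hfib 𝔪 hm
    obtain ⟨g₀, hg₀⟩ := Module.projective_lifting_property (idealSub R A 𝔪 M).mkQ
      (φ.symm.toLinearMap ∘ₗ (idealSub R A 𝔪 D).mkQ ∘ₗ p) (Submodule.mkQ_surjective _)
    obtain ⟨g, rfl⟩ := hM g₀
    have hg : ∀ d, (idealSub R A 𝔪 M).mkQ (g d) = φ.symm ((idealSub R A 𝔪 D).mkQ d) := by
      intro d
      obtain ⟨x, rfl⟩ := hp d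
      exact LinearMap.congr_fun hg₀ x
    have hsurj : ∀ y, ∃ x, y - g x ∈ 𝔪 • (⊤ : Submodule R M) := by
      intro y
      obtain ⟨x, hx⟩ := (idealSub R A 𝔪 D).mkQ_surjective (φ ((idealSub R A 𝔪 M).mkQ y))
      refine ⟨x, mem_idealSub_iff (A := A).1 ?_⟩
      rw [← Submodule.Quotient.eq, ← Submodule.mkQ_apply, ← Submodule.mkQ_apply, hg, hx,
        LinearEquiv.symm_apply_apply]
    have hinj : ∀ x, g x ∈ 𝔪 • (⊤ : Submodule R M) → x ∈ 𝔪 • (⊤ : Submodule R D) := by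
      intro x hx
      have h1 : (idealSub R A 𝔪 M).mkQ (g x) = 0 :=
        (Submodule.Quotient.mk_eq_zero _).2 (mem_idealSub_iff.2 hx)
      rw [hg, LinearEquiv.map_eq_zero_iff] at h1
      exact mem_idealSub_iff.1 ((Submodule.Quotient.mk_eq_zero _).1 h1)
    refine ⟨g, hsurj, ?_, exists_notMem_smul_ker_eq_zero hm (g.restrictScalars R) hsurj hinj⟩
    obtain ⟨s, hs, hgen⟩ := exists_notMem_smul_mem hm (N₁ := (⊤ : Submodule R (D →ₗ[A] M)))
      Module.Finite.fg_top (N₀ := Submodule.span R {g}) (by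
        intro f _
        obtain ⟨k, hk⟩ := Module.projective_lifting_property (idealSub R A 𝔪 D).mkQ
          (φ.toLinearMap ∘ₗ (idealSub R A 𝔪 M).mkQ ∘ₗ f ∘ₗ p) (Submodule.mkQ_surjective _)
        obtain ⟨r, rfl⟩ := hD k
        rw [← add_sub_cancel (r • g) f]
        refine Submodule.add_mem_sup (Submodule.smul_mem _ _ (Submodule.mem_span_singleton_self g))
          (mem_smul_top_of_forall_mem (IsNoetherian.noetherian 𝔪) p hp hM _ fun d => ?_)
        obtain ⟨x, rfl⟩ := hp d
        have h1 : (idealSub R A 𝔪 D).mkQ (r • p x) = φ ((idealSub R A 𝔪 M).mkQ (f (p x))) :=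
          LinearMap.congr_fun hk x
        have h2 : r • g (p x) = g (r • p x) := ((g.restrictScalars R).map_smul r (p x)).symm
        refine mem_idealSub_iff (A := A).1 ?_
        rw [LinearMap.sub_apply, LinearMap.smul_apply, h2, ← Submodule.Quotient.eq,
          ← Submodule.mkQ_apply, ← Submodule.mkQ_apply, hg, h1, LinearEquiv.symm_apply_apply])
    refine ⟨s, hs, fun f => ?_⟩
    obtain ⟨r, hr⟩ := Submodule.mem_span_singleton.1 (hgen f trivial)
    exact ⟨r, hr.symm⟩
  constructor
  · refine exists_tensor_equiv_of_locally_generated fun 𝔪 hm => ?_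
    obtain ⟨g, -, ⟨s, hs, hgen⟩, t, ht, hker⟩ := hlocal 𝔪 hm
    refine ⟨g, s, hs, hgen, t, ht, fun r hr => hann _ fun x => ?_⟩
    rw [mul_smul]
    refine hker _ ?_
    exact ((g.restrictScalars R).map_smul r x).trans (LinearMap.congr_fun hr x)
  · have hinj : Function.Injective (evalTensor R A D M) := by
      rw [injective_iff_map_eq_zero]
      intro z hz
      refine eq_zero_of_forall_isMaximal_smul R z fun 𝔪 hm => ?_
      obtain ⟨g, -, ⟨s, hs, hgen⟩, t, ht, hker⟩ := hlocal 𝔪 hm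
      have hrep : ∀ w : D ⊗[R] (D →ₗ[A] M), ∃ d : D, s • w = d ⊗ₜ g := by
        intro w
        induction w with
        | zero => exact ⟨0, by simp⟩
        | tmul d f =>
          obtain ⟨r, hr⟩ := hgen f
          exact ⟨r • d, by rw [← TensorProduct.tmul_smul, hr, TensorProduct.smul_tmul]⟩
        | add x y hx hy =>
          obtain ⟨d, hd⟩ := hx
          obtain ⟨d', hd'⟩ := hy
          exact ⟨d + d', by rw [smul_add, hd, hd', TensorProduct.add_tmul]⟩
      obtain ⟨d, hd⟩ := hrep z
      have hgd : g d = 0 := by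
        rw [← evalTensor_tmul (R := R), ← hd]
        exact (((evalTensor R A D M).restrictScalars R).map_smul s z).trans
          (by rw [LinearMap.restrictScalars_apply, hz, smul_zero])
      refine ⟨t * s, fun h => (hm.isPrime.mem_or_mem h).elim ht hs, ?_⟩
      rw [mul_smul, hd, TensorProduct.smul_tmul', hker d hgd, TensorProduct.zero_tmul]
    have hsurj : Function.Surjective (evalTensor R A D M) := by
      let e : D ⊗[R] (D →ₗ[A] M) →ₗ[R] M := (evalTensor R A D M).restrictScalars R
      have hq : ∀ z : M ⧸ LinearMap.range e, z = 0 := by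
        refine eq_zero_of_forall_isMaximal_smul_top (R := R) fun 𝔪 hm => ?_
        obtain ⟨g, hgs, -⟩ := hlocal 𝔪 hm
        rw [eq_top_iff]
        rintro z -
        obtain ⟨y, rfl⟩ := (LinearMap.range e).mkQ_surjective z
        obtain ⟨x, hx⟩ := hgs y
        have h1 : (LinearMap.range e).mkQ (g x) = 0 :=
          (Submodule.Quotient.mk_eq_zero _).2 ⟨x ⊗ₜ g, rfl⟩
        have h2 := Submodule.mem_map_of_mem (f := (LinearMap.range e).mkQ) hx
        rw [map_sub, h1, sub_zero, Submodule.map_smul''] at h2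
        exact Submodule.smul_mono le_rfl le_top h2
      intro y
      exact (Submodule.Quotient.mk_eq_zero _).1 (hq ((LinearMap.range e).mkQ y))
    exact ⟨(LinearEquiv.ofBijective _ ⟨hinj, hsurj⟩).symm⟩

end Evaluation

section Filtration

variable {R : Type} [CommRing R] {A : Type} [Ring A] [Algebra R A]
  {Λ : Type} {Δ : Λ → Type} [∀ l, AddCommGroup (Δ l)] [∀ l, Module R (Δ l)]
  [∀ l, Module A (Δ l)] [∀ l, IsScalarTower R A (Δ l)]

/-- A filtration step with factor of the form `Δ(μ) ⊗_R U`, seen as a surjection onto the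
factor. -/
lemma TensorFactor.exists_surjective {M : Type} [AddCommGroup M] [Module A M] {S : Set Λ}
    {N N' : Submodule A M}
    (t : TensorFactor R A Λ Δ S (↥N ⧸ N'.comap N.subtype)) :
    ∃ π : N →ₗ[A] Δ t.lam ⊗[R] t.U, Function.Surjective π ∧ ∀ x, π x = 0 ↔ (x : M) ∈ N' := by
  refine ⟨t.iso.toLinearMap ∘ₗ (N'.comap N.subtype).mkQ,
    t.iso.surjective.comp (Submodule.mkQ_surjective _), fun x => ?_⟩
  rw [LinearMap.comp_apply, LinearEquiv.coe_coe, LinearEquiv.map_eq_zero_iff,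
    Submodule.mkQ_apply, Submodule.Quotient.mk_eq_zero]
  rfl

/-- Maps into `D` from a module filtered by standard modules without maps to `D` vanish. -/
lemma InFilt.hom_eq_zero {K N : Type} [AddCommGroup K] [Module A K] [AddCommGroup N] [Module A N]
    {S : Set Λ} (hK : InFilt R A Λ Δ S K) (hN : ∀ ν ∈ S, ∀ f : Δ ν →ₗ[A] N, f = 0)
    (f : K →ₗ[A] N) : f = 0 := by
  obtain ⟨-, n, c, h0, hn, hmono, hc⟩ := hK
  have key : ∀ i, ∀ x ∈ c i, f x = 0 := by
    intro i
    induction i using Fin.induction with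
    | zero =>
      intro x hx
      rw [h0, Submodule.mem_bot] at hx
      rw [hx, map_zero]
    | succ i ih =>
      obtain ⟨t⟩ := hc i
      let g : (↥(c i.succ) ⧸ (c i.castSucc).comap (c i.succ).subtype) →ₗ[A] N :=
        Submodule.liftQ _ (f ∘ₗ (c i.succ).subtype) fun x hx => ih x hx
      have hg : ∀ z : Δ t.lam ⊗[R] t.U, g (t.iso.symm z) = 0 := by
        intro z
        induction z with
        | zero => simp
        | add x y hx hy => rw [map_add, map_add, hx, hy, add_zero]
        | tmul d u =>
          exact LinearMap.congr_fun (hN _ t.mem (g ∘ₗ t.iso.symm.toLinearMap ∘ₗ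
            { toFun := fun d => d ⊗ₜ[R] u
              map_add' := fun _ _ => TensorProduct.add_tmul _ _ _
              map_smul' := fun _ _ => rfl })) d
      intro x hx
      have := hg (t.iso (Submodule.Quotient.mk ⟨x, hx⟩))
      rwa [LinearEquiv.symm_apply_apply] at this
  ext x
  exact key (Fin.last n) x (hn ▸ Submodule.mem_top)

/-- A module without nonzero maps to `D` has no nonzero maps to `D ⊗_R U`, for `U` finitely
generated projective. -/
lemma hom_tensorProduct_eq_zero {N D U : Type} [AddCommGroup N] [Module A N] [AddCommGroup D]
    [Module R D] [Module A D] [IsScalarTower R A D] [AddCommGroup U] [Module R U]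
    [Module.Finite R U] [Module.Projective R U] (h : ∀ f : N →ₗ[A] D, f = 0)
    (f : N →ₗ[A] D ⊗[R] U) : f = 0 := by
  obtain ⟨n, b, g, -, -, hbg⟩ := Module.Finite.exists_comp_eq_id_of_projective R U
  let φ : Fin n → (D ⊗[R] U →ₗ[A] D) := fun j =>
    (TensorProduct.AlgebraTensorModule.rid R A D).toLinearMap ∘ₗ
      TensorProduct.AlgebraTensorModule.map LinearMap.id (LinearMap.proj j ∘ₗ g)
  have hφ : ∀ z, ∑ j, φ j z ⊗ₜ[R] b (Pi.single j 1) = z := by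
    intro z
    induction z with
    | zero => simp
    | add x y hx hy =>
      simp only [map_add, TensorProduct.add_tmul, Finset.sum_add_distrib, hx, hy]
    | tmul d u =>
      have hu : ∑ j, g u j • b (Pi.single j 1) = u := by
        have hsum : ∑ j, g u j • (Pi.single j 1 : Fin n → R) = g u := by
          simpa [← Pi.single_smul] using Finset.univ_sum_single (g u)
        simp_rw [← map_smul]
        rw [← map_sum, hsum]
        exact LinearMap.congr_fun hbg u
      conv_rhs => rw [← hu]
      rw [TensorProduct.tmul_sum]
      exact Finset.sum_congr rfl fun j _ => by
        simp [φ, TensorProduct.smul_tmul]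
  ext x
  rw [← hφ (f x)]
  refine Finset.sum_eq_zero fun j _ => ?_
  rw [← LinearMap.comp_apply, h (φ j ∘ₗ f), LinearMap.zero_apply, TensorProduct.zero_tmul]

variable {M : Type} [AddCommGroup M] [Module A M] {S : Set Λ} {n : ℕ}
  {c : Fin (n + 1) → Submodule A M}

/-- A map to a filtered module vanishes if the source has no maps to the nonzero factors. -/
lemma hom_eq_zero_of_filtration {N : Type} [AddCommGroup N] [Module A N]
    (h0 : c 0 = ⊥) (hn : c (Fin.last n) = ⊤)
    (t : ∀ i : Fin n, TensorFactor R A Λ Δ S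
      (↥(c i.succ) ⧸ (c i.castSucc).comap (c i.succ).subtype))
    (hN : ∀ i : Fin n, c i.succ ≤ c i.castSucc ∨ ∀ f : N →ₗ[A] Δ (t i).lam, f = 0)
    (f : N →ₗ[A] M) : f = 0 := by
  have key : ∀ i, ∀ x, f x ∈ c i := by
    intro i
    induction i using Fin.reverseInduction with
    | last => simp [hn]
    | cast i ih =>
      intro x
      obtain hle | hzero := hN i
      · exact hle (ih x)
      · have := (t i).fin
        have := (t i).proj
        obtain ⟨π, -, hπ⟩ := (t i).exists_surjective
        exact (hπ ⟨f x, ih x⟩).1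
          (LinearMap.congr_fun (hom_tensorProduct_eq_zero hzero (π ∘ₗ f.codRestrict _ ih)) x)
  ext x
  simpa [h0] using key 0 x

variable [Module R M] [IsScalarTower R A M]

/-- The members of a filtration with `R`-projective factors are `R`-direct summands. -/
lemma exists_retraction_of_filtration (hΔ : ∀ l, Module.Projective R (Δ l))
    (hn : c (Fin.last n) = ⊤) (hmono : Monotone c)
    (t : ∀ i : Fin n, TensorFactor R A Λ Δ S
      (↥(c i.succ) ⧸ (c i.castSucc).comap (c i.succ).subtype)) (i : Fin (n + 1)) :
    ∃ ρ : M →ₗ[R] c i, ∀ x : c i, ρ x = x := by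
  induction i using Fin.reverseInduction with
  | last =>
    exact ⟨LinearMap.id.codRestrict ((c (Fin.last n)).restrictScalars R)
      (fun x => by simp [hn]), fun x => rfl⟩
  | cast i ih =>
    obtain ⟨ρ, hρ⟩ := ih
    have := (t i).proj
    obtain ⟨π, hπs, hπ⟩ := (t i).exists_surjective
    obtain ⟨σ, hσ⟩ := Module.projective_lifting_property (π.restrictScalars R) LinearMap.id hπs
    have hσ' : ∀ q, π (σ q) = q := fun q => LinearMap.congr_fun hσ q
    let r : M →ₗ[R] c i.succ := ρ - σ ∘ₗ π.restrictScalars R ∘ₗ ρ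
    have hr : ∀ x, ((c i.succ).subtype.restrictScalars R ∘ₗ r) x ∈
        (c i.castSucc).restrictScalars R := fun x => (hπ (r x)).1 (by simp [r, hσ'])
    refine ⟨((c i.succ).subtype.restrictScalars R ∘ₗ r).codRestrict
      ((c i.castSucc).restrictScalars R) hr, fun x => ?_⟩
    have hx : (x : M) ∈ c i.succ := hmono (Fin.castSucc_le_succ i) x.2
    have h1 : ρ (x : M) = ⟨x, hx⟩ := hρ ⟨x, hx⟩
    have h2 : π ⟨x, hx⟩ = 0 := (hπ _).2 x.2
    ext
    change ((ρ (x : M) - σ (π (ρ (x : M))) : c i.succ) : M) = x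
    rw [h1, h2, map_zero, sub_zero]

lemma projective_of_filtration (hΔ : ∀ l, Module.Projective R (Δ l))
    (h0 : c 0 = ⊥) (hmono : Monotone c)
    (t : ∀ i : Fin n, TensorFactor R A Λ Δ S
      (↥(c i.succ) ⧸ (c i.castSucc).comap (c i.succ).subtype)) (i : Fin (n + 1)) :
    Module.Projective R (c i) := by
  induction i using Fin.induction with
  | zero =>
    have : Subsingleton (c 0) := by rw [h0]; infer_instance
    infer_instance
  | succ i ih =>
    have := (t i).proj
    obtain ⟨π, hπs, hπ⟩ := (t i).exists_surjective
    refine projective_of_surjective_of_ker (K := c i.castSucc) (π.restrictScalars R) hπs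
      { toFun := fun x => ⟨⟨x, hmono (Fin.castSucc_le_succ i) x.2⟩, (hπ _).2 x.2⟩
        invFun := fun x => ⟨x.1, (hπ _).1 x.2⟩
        map_add' := fun _ _ => rfl
        map_smul' := fun _ _ => rfl
        left_inv := fun _ => rfl
        right_inv := fun _ => rfl }

/-- If a projective module `P` surjecting onto `Δ(μ)` has no nonzero maps to the fibres of `M`,
then a factor `Δ(μ) ⊗_R U` of `M` is zero. -/
lemma le_of_filtration (hΔ : ∀ l, Module.Projective R (Δ l)) (hfin : ∀ l, Module.Finite R (Δ l))
    (hn : c (Fin.last n) = ⊤) (hmono : Monotone c)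
    (t : ∀ i : Fin n, TensorFactor R A Λ Δ S
      (↥(c i.succ) ⧸ (c i.castSucc).comap (c i.succ).subtype)) (i : Fin n)
    {P : Type} [AddCommGroup P] [Module A P] [Module.Projective A P]
    (p : P →ₗ[A] Δ (t i).lam) (hp : Function.Surjective p)
    (hM : ∀ 𝔪 : Ideal R, 𝔪.IsMaximal → ∀ f : P →ₗ[A] Fiber R A 𝔪 M, f = 0) :
    c i.succ ≤ c i.castSucc := by
  have := (t i).fin
  have := (t i).proj
  obtain ⟨π, hπs, hπ⟩ := (t i).exists_surjective
  obtain ⟨ρ, hρ⟩ := exists_retraction_of_filtration hΔ hn hmono t i.succ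
  have hzero : ∀ z : Δ (t i).lam ⊗[R] (t i).U, z = 0 := by
    refine eq_zero_of_forall_isMaximal_smul_top (R := R) fun 𝔪 hm => ?_
    refine top_le_iff.1 ((TensorProduct.span_tmul_eq_top R _ _).ge.trans (Submodule.span_le.2 ?_))
    rintro _ ⟨d, u, rfl⟩
    let q : P →ₗ[A] Δ (t i).lam ⊗[R] (t i).U :=
      { toFun := fun d => d ⊗ₜ[R] u
        map_add' := fun _ _ => TensorProduct.add_tmul _ _ _
        map_smul' := fun _ _ => rfl } ∘ₗ p
    obtain ⟨f, hf⟩ := Module.projective_lifting_property π q hπs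
    obtain ⟨x, rfl⟩ := hp d
    have h1 : ((f x : c i.succ) : M) ∈ 𝔪 • (⊤ : Submodule R M) :=
      mem_idealSub_iff.1 ((Submodule.Quotient.mk_eq_zero _).1 (LinearMap.congr_fun
        (hM 𝔪 hm ((idealSub R A 𝔪 M).mkQ ∘ₗ (c i.succ).subtype ∘ₗ f)) x))
    let πρ : M →ₗ[R] Δ (t i).lam ⊗[R] (t i).U := π.restrictScalars R ∘ₗ ρ
    have h2 : πρ (f x) ∈ 𝔪 • (⊤ : Submodule R M).map πρ :=
      Submodule.map_smul'' 𝔪 ⊤ πρ ▸ Submodule.mem_map_of_mem h1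
    have h3 : πρ (f x) = p x ⊗ₜ[R] u :=
      (congrArg π (hρ (f x))).trans (LinearMap.congr_fun hf x)
    rw [h3] at h2
    exact Submodule.smul_mono le_rfl le_top h2
  intro x hx
  exact (hπ ⟨x, hx⟩).1 (hzero _)

end Filtration

/-- Maps from `P(μ)` to a module without maps from `Δ(ν)`, `ν > μ`, factor through `Δ(μ)`. -/
lemma SplitQH.exists_factor {R : Type} [CommRing R] {A : Type} [Ring A] [Algebra R A]
    {Λ : Type} [Fintype Λ] [PartialOrder Λ] {Δ : Λ → Type} [∀ l, AddCommGroup (Δ l)]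
    [∀ l, Module R (Δ l)] [∀ l, Module A (Δ l)] [∀ l, IsScalarTower R A (Δ l)]
    (h : SplitQH R A Λ Δ) (μ : Λ) {N : Type} [AddCommGroup N] [Module A N]
    (hN : ∀ ν, μ < ν → ∀ f : Δ ν →ₗ[A] N, f = 0) (f : h.P μ →ₗ[A] N) :
    ∃ f' : Δ μ →ₗ[A] N, f = f' ∘ₗ h.epi μ := by
  have h0 := (h.ker_filt μ).hom_eq_zero hN (f ∘ₗ (LinearMap.ker (h.epi μ)).subtype)
  have hker : LinearMap.ker (h.epi μ) ≤ LinearMap.ker f :=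
    fun x hx => LinearMap.congr_fun h0 ⟨x, hx⟩
  refine ⟨(LinearMap.ker (h.epi μ)).liftQ f hker ∘ₗ
    ((h.epi μ).quotKerEquivOfSurjective (h.epi_surj μ)).symm.toLinearMap, ?_⟩
  ext x
  have hx : ((h.epi μ).quotKerEquivOfSurjective (h.epi_surj μ)).symm (h.epi μ x) =
      Submodule.Quotient.mk x := by
    rw [LinearEquiv.symm_apply_eq]
    rfl
  rw [LinearMap.comp_apply, LinearMap.comp_apply, LinearEquiv.coe_coe, hx, Submodule.liftQ_apply]

/-- Let `M ∈ F(Δ̃)`. If `M(𝔪) ≅ Δ(λ)(𝔪)` for a fixed `λ` and every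
maximal ideal `𝔪` of `R`, then `M ≅ Δ(λ) ⊗_R F` for some invertible `R`-module `F`. -/
theorem standard_up_to_invertible_of_fibers
    (R : Type) [CommRing R] [IsNoetherianRing R]
    (A : Type) [Ring A] [Algebra R A]
    (Λ : Type) [Fintype Λ] [PartialOrder Λ]
    (Δ : Λ → Type) [∀ l, AddCommGroup (Δ l)] [∀ l, Module R (Δ l)]
    [∀ l, Module A (Δ l)] [∀ l, IsScalarTower R A (Δ l)]
    (h : SplitQH R A Λ Δ)
    (M : Type) [AddCommGroup M] [Module R M] [Module A M] [IsScalarTower R A M]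
    (hM : InFilt R A Λ Δ Set.univ M) (l : Λ)
    (hfib : ∀ 𝔪 : Ideal R, 𝔪.IsMaximal →
      Nonempty ((Fiber R A 𝔪 M) ≃ₗ[A] (Fiber R A 𝔪 (Δ l)))) :
    ∃ F : ModuleCat.{0} R,
      (∃ G : ModuleCat.{0} R, Nonempty ((F ⊗[R] G) ≃ₗ[R] R)) ∧
      Nonempty (M ≃ₗ[A] (TensorProduct R (Δ l) F)) := by
  have hzero : ∀ {ν μ : Λ}, ¬ ν ≤ μ → ∀ f : Δ ν →ₗ[A] Δ μ, f = 0 := fun hνμ f => by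
    by_contra hf
    exact hνμ (h.hom_le _ _ ⟨f, hf⟩)
  have hproj := h.P_proj
  have hDfin := h.deltaFinR
  obtain ⟨hMfin, n, c, h0, hn, hmono, hc⟩ := hM
  have t := fun i => (hc i).some
  have := h.algFin
  have hMR : Module.Finite R M := Module.Finite.trans A M
  have hMP : Module.Projective R M := by
    have := projective_of_filtration h.deltaProjR h0 hmono t (Fin.last n)
    rw [hn] at this
    exact Module.Projective.of_equiv
      ((Submodule.topEquiv (R := A) (M := M)).restrictScalars R)
  have hle : ∀ i, c i.succ ≤ c i.castSucc ∨ (t i).lam ≤ l := by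
    refine fun i => or_iff_not_imp_right.2 fun hμ => ?_
    refine le_of_filtration h.deltaProjR h.deltaFinR hn hmono t i (h.epi _) (h.epi_surj _) ?_
    intro 𝔪 hm f
    obtain ⟨φ⟩ := hfib 𝔪 hm
    obtain ⟨k, hk⟩ := Module.projective_lifting_property (idealSub R A 𝔪 (Δ l)).mkQ
      (φ.toLinearMap ∘ₗ f) (Submodule.mkQ_surjective _)
    obtain ⟨k', rfl⟩ := h.exists_factor (t i).lam
      (fun ν hν => hzero fun hνl => hμ (hν.le.trans hνl)) k
    rw [hzero hμ k'] at hk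
    ext x
    have hx := LinearMap.congr_fun hk x
    simpa using hx.symm
  have hD : ∀ f : h.P l →ₗ[A] Δ l, ∃ r : R, f = r • h.epi l := by
    intro f
    obtain ⟨f', rfl⟩ := h.exists_factor l (fun ν hν => hzero hν.not_ge) f
    obtain ⟨e⟩ := h.endIso l
    have hf' : f' = algebraMap R (Module.End A (Δ l)) (e f') := by
      apply e.injective
      rw [AlgEquiv.commutes]
      rfl
    refine ⟨e f', ?_⟩
    ext x
    exact LinearMap.congr_fun hf' (h.epi l x)
  have hann : ∀ r : R, (∀ x : Δ l, r • x = 0) → r = 0 := by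
    intro r hr
    obtain ⟨e⟩ := h.endIso l
    have h1 : algebraMap R (Module.End A (Δ l)) r = 0 := LinearMap.ext hr
    have h2 := e.commutes r
    rw [h1, map_zero] at h2
    exact h2.symm
  obtain ⟨⟨e₁⟩, e₂⟩ := exists_invertible_of_fibers (h.epi l) (h.epi_surj l) hD hann
    (h.exists_factor l fun ν hν => hom_eq_zero_of_filtration h0 hn t fun i =>
      (hle i).imp_right fun hi => hzero fun hνi => hν.not_ge (hνi.trans hi)) hfib
  exact ⟨ModuleCat.of R (Δ l →ₗ[A] M),
    ⟨ModuleCat.of R (Module.Dual R (Δ l →ₗ[A] M)), ⟨e₁⟩⟩, e₂⟩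

end
end
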